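/- Let V be a 24-dimensional real inner product space and Υ a lattice in V such that √2·Υ is even unimodular with minimum norm 4 (a Leech lattice). Then there exists a polarization M, N of Υ (integral sublattices with M + N = Υ and M ∩ N = 2Υ) such that both M and N are even unimodular lattices with minimum norm 4 (copies of the Leech lattice). -/

import Mathlib

noncomputable section

open scoped RealInnerProductSpace Pointwise
open Module

variable {V : Type*} [NormedAddCommGroup V] [InnerProductSpace ℝ V]

/-- `L` is a (full) lattice in `V`: a finitely generated `ℤ`-submodule spanning `V` over `ℝ`. -/
def IsLat (L : Submodule ℤ V) : Prop :=
  L.FG ∧ Submodule.span ℝ (L : Set V) = ⊤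

/-- The lattice `L` is integral: all inner products of lattice vectors are integers. -/
def IsIntegralLat (L : Submodule ℤ V) : Prop :=
  ∀ x ∈ L, ∀ y ∈ L, ∃ n : ℤ, ⟪x, y⟫ = (n : ℝ)

/-- The lattice `L` is even: it is integral and all norms are even integers. -/
def IsEvenLat (L : Submodule ℤ V) : Prop :=
  IsIntegralLat L ∧ ∀ x ∈ L, ∃ n : ℤ, ⟪x, x⟫ = 2 * (n : ℝ)

/-- The lattice `L` is unimodular: the Gram matrix of some `ℤ`-basis has determinant 1. -/
def IsUnimodularLat (L : Submodule ℤ V) : Prop :=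
  ∃ (n : ℕ) (b : Basis (Fin n) ℤ L),
    (Matrix.of fun i j : Fin n => ⟪(b i : V), (b j : V)⟫).det = 1

/-- The minimum norm `μ(L)` of a lattice. -/
def minNorm (L : Submodule ℤ V) : ℝ :=
  sInf {r : ℝ | ∃ x ∈ L, x ≠ 0 ∧ ⟪x, x⟫ = r}

/-- `√2·Υ` is an even unimodular lattice: all norms of `Υ` are integers, all doubled inner
products are integers, and the Gram matrix of the form `2⟪·,·⟫` on a `ℤ`-basis of `Υ` has
determinant 1. -/
def SqrtTwoEvenUnimod (Υ : Submodule ℤ V) : Prop :=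
  (∀ x ∈ Υ, ∃ n : ℤ, ⟪x, x⟫ = (n : ℝ)) ∧
  (∀ x ∈ Υ, ∀ y ∈ Υ, ∃ n : ℤ, 2 * ⟪x, y⟫ = (n : ℝ)) ∧
  ∃ (n : ℕ) (b : Basis (Fin n) ℤ Υ),
    (Matrix.of fun i j : Fin n => 2 * ⟪(b i : V), (b j : V)⟫).det = 1

/-- `M, N` is a polarization of `Υ`: a pair of integral sublattices with
`M + N = Υ` and `M ∩ N = 2Υ`. -/
def IsPolarization (Υ M N : Submodule ℤ V) : Prop :=
  M ≤ Υ ∧ N ≤ Υ ∧ IsIntegralLat M ∧ IsIntegralLat N ∧ M ⊔ N = Υ ∧ M ⊓ N = (2 : ℤ) • Υ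

/-- The sublattice `L_M = {(x_1,…,x_k) ∈ M^k : x_1+⋯+x_k ∈ M ∩ N}` of `V^k`. -/
def LsubM (M N : Submodule ℤ V) (k : ℕ) : Submodule ℤ (PiLp 2 fun _ : Fin k => V) where
  carrier := {v | (∀ i, v i ∈ M) ∧ (∑ i, v i) ∈ M ⊓ N}
  add_mem' := fun {a b} ha hb =>
    ⟨fun i => M.add_mem (ha.1 i) (hb.1 i), by
      have h : (∑ i, (a + b) i) = (∑ i, a i) + ∑ i, b i :=
        (Finset.sum_congr rfl fun i _ => rfl).trans Finset.sum_add_distrib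
      rw [h]; exact (M ⊓ N).add_mem ha.2 hb.2⟩
  zero_mem' := ⟨fun _ => M.zero_mem, by
      have h : (∑ i : Fin k, (0 : PiLp 2 fun _ : Fin k => V) i) = 0 :=
        Finset.sum_eq_zero fun _ _ => rfl
      rw [h]; exact (M ⊓ N).zero_mem⟩
  smul_mem' := fun c a ha =>
    ⟨fun i => M.smul_mem c (ha.1 i), by
      have h : (∑ i, (c • a) i) = c • ∑ i, a i := by
        show (∑ i, c • a i) = c • ∑ i, a i
        exact Finset.smul_sum.symm
      rw [h]; exact (M ⊓ N).smul_mem c ha.2⟩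

/-- The diagonal sublattice `L^N = {(y,…,y) : y ∈ N}` of `V^k`. -/
def LsupN (N : Submodule ℤ V) (k : ℕ) : Submodule ℤ (PiLp 2 fun _ : Fin k => V) where
  carrier := {v | ∃ y ∈ N, ∀ i, v i = y}
  add_mem' := fun {a b} ha hb => by
    obtain ⟨ya, hya, ha⟩ := ha
    obtain ⟨yb, hyb, hb⟩ := hb
    exact ⟨ya + yb, N.add_mem hya hyb, fun i => by
      show a i + b i = ya + yb
      rw [ha i, hb i]⟩
  zero_mem' := ⟨0, N.zero_mem, fun _ => rfl⟩
  smul_mem' := fun c a ha => by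
    obtain ⟨y, hy, h⟩ := ha
    exact ⟨c • y, N.smul_mem c hy, fun i => by
      show c • a i = c • y
      rw [h i]⟩

/-- The lattice `L(M,N,k) = L_M + L^N ⊆ V^k`. -/
def LMN (M N : Submodule ℤ V) (k : ℕ) : Submodule ℤ (PiLp 2 fun _ : Fin k => V) :=
  LsubM M N k ⊔ LsupN N k

/-- The Leech polarization setup: `V` is 24-dimensional, `√2·Υ` is even unimodular with
minimum norm 4, and `M, N` is a polarization of `Υ` by two copies of the Leech lattice. -/
def LeechSetup (Υ M N : Submodule ℤ V) : Prop :=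
  Module.finrank ℝ V = 24 ∧ IsLat Υ ∧ SqrtTwoEvenUnimod Υ ∧
  (∀ v ∈ Υ, v ≠ 0 → 4 ≤ 2 * ⟪v, v⟫) ∧
  IsPolarization Υ M N ∧
  IsLat M ∧ IsEvenLat M ∧ IsUnimodularLat M ∧ minNorm M = 4 ∧
  IsLat N ∧ IsEvenLat N ∧ IsUnimodularLat N ∧ minNorm N = 4

/-- `(w,x,y,z) ∈ N × M × M × M` is admissible if `x + y + z ∈ M ∩ N`. -/
def Admissible (M N : Submodule ℤ V) (w x y z : V) : Prop :=
  w ∈ N ∧ x ∈ M ∧ y ∈ M ∧ z ∈ M ∧ x + y + z ∈ M ⊓ N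

/-- An offender is an admissible quadruple all three of whose associated vectors
`w+x, w+y, w+z` have norm 2. -/
def Offender (M N : Submodule ℤ V) (w x y z : V) : Prop :=
  Admissible M N w x y z ∧
  ⟪w + x, w + x⟫ = 2 ∧ ⟪w + y, w + y⟫ = 2 ∧ ⟪w + z, w + z⟫ = 2

/-- A super offender is an offender with `⟪w,w⟫ = 4` whose multiset of norms
`{⟪x,x⟫, ⟪y,y⟫, ⟪z,z⟫}` equals `{6,6,4}`. -/
def SuperOffender (M N : Submodule ℤ V) (w x y z : V) : Prop :=
  Offender M N w x y z ∧ ⟪w, w⟫ = 4 ∧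
  ({⟪x, x⟫, ⟪y, y⟫, ⟪z, z⟫} : Multiset ℝ) = ({6, 6, 4} : Multiset ℝ)

namespace LeechPol
open MeasureTheory Set Complex
open scoped Real

/-- The half-open unit cube with lower corner `m`. -/
def cube {d : Type*} (m : d → ℤ) : Set (d → ℝ) := {x | ∀ i, x i ∈ Ioc (m i : ℝ) (m i + 1)}

lemma cube_eq {d : Type*} (m : d → ℤ) :
    cube m = Set.univ.pi (fun i => Ioc (m i : ℝ) (m i + 1)) := by
  ext x; simp [cube]

lemma measurableSet_cube {d : Type*} [Fintype d] (m : d → ℤ) : MeasurableSet (cube m) := by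
  rw [cube_eq]; exact MeasurableSet.univ_pi fun i => measurableSet_Ioc

lemma cube_disjoint {d : Type*} : Pairwise (Function.onFun Disjoint (cube (d := d))) := by
  intro m m' h
  rw [Function.onFun, Set.disjoint_left]
  intro x hx hx'
  apply h
  funext i
  have h1 := hx i
  have h2 := hx' i
  have a : (m i : ℝ) < m' i + 1 := lt_of_lt_of_le h1.1 h2.2
  have b : (m' i : ℝ) < m i + 1 := lt_of_lt_of_le h2.1 h1.2
  have a' : m i < m' i + 1 := by exact_mod_cast a
  have b' : m' i < m i + 1 := by exact_mod_cast b
  omega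

lemma cube_iUnion {d : Type*} : (⋃ m : d → ℤ, cube m) = Set.univ := by
  rw [Set.eq_univ_iff_forall]
  intro x
  rw [Set.mem_iUnion]
  refine ⟨fun i => ⌈x i⌉ - 1, fun i => ?_⟩
  constructor
  · push_cast; have := Int.ceil_lt_add_one (x i); linarith
  · push_cast; have := Int.le_ceil (x i); linarith

/-- The integral shift of a point. -/
def sh {d : Type*} (x : d → ℝ) (m : d → ℤ) : d → ℝ := fun i => x i + m i

lemma integral_cube {d : Type*} [Fintype d] (f : (d → ℝ) → ℂ) (m : d → ℤ) :
    ∫ x in cube m, f x = ∫ x in cube (0 : d → ℤ), f (sh x m) := by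
  have h := (measurePreserving_add_right (volume : Measure (d → ℝ)) (fun i => (m i : ℝ)))
  have h2 := h.setIntegral_preimage_emb (MeasurableEquiv.addRight _).measurableEmbedding f (cube m)
  rw [← h2]
  have : (fun x : d → ℝ => x + fun i => (m i : ℝ)) ⁻¹' cube m = cube 0 := by
    ext x
    simp only [cube, Set.mem_preimage, Set.mem_ofPred_eq, Pi.add_apply, Set.mem_Ioc, Pi.zero_apply]
    refine forall_congr' fun i => ?_
    push_cast
    constructor <;> rintro ⟨a, b⟩ <;> constructor <;> linarith
  rw [this]
  rfl

lemma norm_le_of_mem_cube {d : Type*} [Fintype d] {x : d → ℝ} (hx : x ∈ cube (0 : d → ℤ)) :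
    ‖x‖ ≤ 1 := by
  rw [pi_norm_le_iff_of_nonneg zero_le_one]
  intro i
  have := hx i
  simp at this
  rw [Real.norm_eq_abs, abs_le]
  constructor <;> linarith

lemma volume_cube_lt {d : Type*} [Fintype d] : volume (cube (0 : d → ℤ)) < ⊤ := by
  refine lt_of_le_of_lt (measure_mono (t := Metric.closedBall 0 1) ?_)
    (isCompact_closedBall (0 : d → ℝ) 1).measure_lt_top
  intro x hx
  simpa using norm_le_of_mem_cube hx

/-- additive character -/
def ech {d : Type*} [Fintype d] (n : d → ℤ) (x : d → ℝ) : ℂ :=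
  cexp (-(2 * π * I * ∑ i, (n i : ℂ) * (x i : ℂ)))

lemma ech_sh {d : Type*} [Fintype d] (n : d → ℤ) (x : d → ℝ) (m : d → ℤ) :
    ech n (sh x m) = ech n x := by
  unfold ech sh
  rw [Complex.exp_eq_exp_iff_exists_int]
  refine ⟨-∑ i, n i * m i, ?_⟩
  push_cast
  simp only [mul_add, Finset.sum_add_distrib]
  ring

lemma norm_ech {d : Type*} [Fintype d] (n : d → ℤ) (x : d → ℝ) : ‖ech n x‖ = 1 := by
  unfold ech
  have : -(2 * π * I * ∑ i, (n i : ℂ) * (x i : ℂ)) =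
     ((-(2 * π * ∑ i, (n i : ℝ) * (x i : ℝ)) : ℝ) : ℂ) * I := by push_cast; ring
  rw [this, Complex.norm_exp_ofReal_mul_I]

lemma continuous_ech {d : Type*} [Fintype d] (n : d → ℤ) : Continuous (ech n) := by
  unfold ech
  fun_prop

lemma integral_unfold {d : Type*} [Fintype d] (f : (d → ℝ) → ℂ) (hfc : Continuous f)
    (hfi : Integrable f)
    (u : (d → ℤ) → ℝ) (hu : Summable u) (hfu : ∀ x : d → ℝ, ‖x‖ ≤ 1 → ∀ m, ‖f (sh x m)‖ ≤ u m) :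
    ∫ x in cube (0 : d → ℤ), ∑' m, f (sh x m) = ∫ x, f x := by
  have h1 := hasSum_integral_iUnion (μ := volume) (f := f) (measurableSet_cube (d := d)) cube_disjoint
    (by rw [cube_iUnion]; exact hfi.integrableOn)
  rw [cube_iUnion, setIntegral_univ] at h1
  simp_rw [integral_cube f] at h1
  rw [← h1.tsum_eq]
  have hc : ∀ m : d → ℤ, Continuous fun x => f (sh x m) := by
    intro m; apply hfc.comp; unfold sh; fun_prop
  have hb : ∀ m : d → ℤ, IntegrableOn (fun x => f (sh x m)) (cube 0) := by
    intro m
    refine IntegrableOn.of_bound volume_cube_lt (hc m).aestronglyMeasurable (u m) ?_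
    filter_upwards [ae_restrict_mem (measurableSet_cube (0 : d → ℤ))] with x hx
    exact hfu x (norm_le_of_mem_cube hx) m
  symm
  apply integral_tsum_of_summable_integral_norm hb
  refine Summable.of_nonneg_of_le (fun m => integral_nonneg fun x => norm_nonneg _) (fun m => ?_)
    (hu.mul_left ((volume (cube (0 : d → ℤ))).toReal))
  calc ∫ x in cube (0 : d → ℤ), ‖f (sh x m)‖ ≤ ∫ x in cube (0 : d → ℤ), u m := by
        refine setIntegral_mono_on (hb m).norm ?_ (measurableSet_cube _) ?_
        · exact integrableOn_const volume_cube_lt.ne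
        · intro x hx
          exact hfu x (norm_le_of_mem_cube hx) m
    _ = _ := by simp [Measure.real]

lemma exists_periodization {d : Type*} [Fintype d] (f : (d → ℝ) → ℂ) (hfc : Continuous f)
    (hfu : ∀ R : ℝ, ∃ u : (d → ℤ) → ℝ, Summable u ∧
      ∀ x : d → ℝ, ‖x‖ ≤ R → ∀ m, ‖f (sh x m)‖ ≤ u m) :
    ∃ F : C(UnitAddTorus d, ℂ), ∀ x : d → ℝ, F (fun i => (x i : UnitAddCircle)) = ∑' m, f (sh x m) := by
  have hper : ∀ (x y : d → ℝ), (fun i => (x i : UnitAddCircle)) = (fun i => (y i : UnitAddCircle)) →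
      ∑' m, f (sh x m) = ∑' m, f (sh y m) := by
    intro x y hxy
    have : ∀ i, ∃ k : ℤ, y i = x i + k := by
      intro i
      have h : ((y i : ℝ) : UnitAddCircle) - ((x i : ℝ) : UnitAddCircle) = 0 := by
        rw [sub_eq_zero]; exact (congrFun hxy i).symm
      rw [← AddCircle.coe_sub, AddCircle.coe_eq_zero_iff] at h
      obtain ⟨k, hk⟩ := h
      refine ⟨k, ?_⟩
      simp at hk
      linarith
    choose k hk using this
    rw [← (Equiv.addRight k).tsum_eq]
    refine tsum_congr fun m => ?_
    congr 1
    funext i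
    simp [sh, hk]; ring
  have hq : IsOpenQuotientMap (fun (x : d → ℝ) => (fun i => (x i : UnitAddCircle))) :=
    IsOpenQuotientMap.piMap (fun i => QuotientAddGroup.isOpenQuotientMap_mk)
  have hcont : Continuous fun x : d → ℝ => ∑' m, f (sh x m) := by
    rw [continuous_iff_continuousAt]
    intro x0
    obtain ⟨u, hu, hb⟩ := hfu (‖x0‖ + 1)
    have : ContinuousOn (fun x : d → ℝ => ∑' m, f (sh x m)) (Metric.ball x0 1) := by
      apply continuousOn_tsum (u := u) _ hu
      · intro m x hx
        apply hb
        rw [Metric.mem_ball, dist_eq_norm] at hx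
        have := norm_add_le (x - x0) x0
        simp at this
        linarith
      · intro m
        apply Continuous.continuousOn
        apply hfc.comp; unfold sh; fun_prop
    exact this.continuousAt (Metric.ball_mem_nhds _ one_pos)
  let rep : UnitAddTorus d → (d → ℝ) := Function.surjInv hq.surjective
  have hrep : ∀ z, (fun i => (rep z i : UnitAddCircle)) = z := Function.surjInv_eq hq.surjective
  refine ⟨⟨fun z => ∑' m, f (sh (rep z) m), ?_⟩, fun x => hper _ _ (hrep _)⟩
  rw [hq.isQuotientMap.continuous_iff]
  convert hcont using 1
  funext x
  exact hper _ _ (hrep _)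

local instance : MeasureSpace UnitAddCircle := ⟨AddCircle.haarAddCircle⟩

theorem poisson {d : Type*} [Fintype d] (f : (d → ℝ) → ℂ) (hfc : Continuous f)
    (hfi : Integrable f)
    (hfu : ∀ R : ℝ, ∃ u : (d → ℤ) → ℝ, Summable u ∧
      ∀ x : d → ℝ, ‖x‖ ≤ R → ∀ m, ‖f (sh x m)‖ ≤ u m)
    (hs : Summable fun n : d → ℤ => ∫ x, ech n x * f x) :
    ∑' m : d → ℤ, f (fun i => m i) = ∑' n : d → ℤ, ∫ x, ech n x * f x := by
  obtain ⟨F, hF⟩ := exists_periodization f hfc hfu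
  have hco : ∀ n, UnitAddTorus.mFourierCoeff F n = ∫ x, ech n x * f x := by
    intro n
    obtain ⟨u, hu, hb⟩ := hfu 1
    rw [UnitAddTorus.mFourierCoeff_eq_integral F n (fun _ => (0:ℝ)), ← integral_unfold (fun x => ech n x * f x)
      ((continuous_ech n).mul hfc) (hfi.bdd_mul (continuous_ech n).aestronglyMeasurable
        (Filter.Eventually.of_forall fun x => (norm_ech n x).le)) u hu (fun x hx m => by
        rw [norm_mul, norm_ech, one_mul]; exact hb x hx m)]
    have : {x : d → ℝ | ∀ i, x i ∈ Ioc (0:ℝ) (0 + 1)} = cube 0 := by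
      ext x; simp [cube]
    rw [this]
    congr 1
    funext x
    simp_rw [ech_sh, tsum_mul_left]
    rw [hF, smul_eq_mul]
    congr 1
    simp only [UnitAddTorus.mFourier, ContinuousMap.coe_mk, fourier_coe_apply, ech]
    rw [← Complex.exp_sum]
    congr 1
    rw [Finset.mul_sum, ← Finset.sum_neg_distrib]
    refine Finset.sum_congr rfl fun i _ => ?_
    simp; ring
  have h := UnitAddTorus.hasSum_mFourier_series_apply_of_summable (f := F)
    (by simpa only [funext hco] using hs) (fun i => ((0:ℝ) : UnitAddCircle))
  rw [hF (fun _ => 0)] at h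
  simp only [hco] at h
  have e1 : ∀ n : d → ℤ, UnitAddTorus.mFourier n (fun i => ((0:ℝ) : UnitAddCircle)) = 1 := by
    intro n; simp [UnitAddTorus.mFourier]
  simp only [e1, smul_eq_mul, mul_one] at h
  rw [h.tsum_eq]
  refine tsum_congr fun m => ?_
  congr 1
  funext i; simp [sh]

end LeechPol

namespace LeechPol
open MeasureTheory Set Complex Module
set_option linter.unusedSectionVars false
set_option linter.unusedSimpArgs false
open scoped Real RealInnerProductSpace

variable [FiniteDimensional ℝ V]

/-- The linear parametrisation by coordinates. -/
def Lb {n : ℕ} (b : Basis (Fin n) ℝ V) (x : Fin n → ℝ) : V := ∑ i, x i • b i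

/-- The lattice vector with integral coordinates. -/
def lv {n : ℕ} (b : Basis (Fin n) ℝ V) (m : Fin n → ℤ) : V := ∑ i, (m i : ℝ) • b i

lemma Lb_sh {n : ℕ} (b : Basis (Fin n) ℝ V) (x : Fin n → ℝ) (m : Fin n → ℤ) :
    Lb b (sh x m) = Lb b x + lv b m := by
  simp [Lb, lv, sh, add_smul, Finset.sum_add_distrib]

lemma Lb_eq {n : ℕ} (b : Basis (Fin n) ℝ V) (x : Fin n → ℝ) :
    Lb b x = b.equivFunL.symm x := by
  change _ = b.equivFun.symm x
  simp [Lb, Basis.equivFun_symm_apply]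

lemma lv_injective {n : ℕ} (b : Basis (Fin n) ℝ V) : Function.Injective (lv b) := by
  intro m m' h
  have h1 : b.equivFun.symm (fun i => (m i : ℝ)) = b.equivFun.symm (fun i => (m' i : ℝ)) := by
    simpa [Basis.equivFun_symm_apply, lv] using h
  have h2 := b.equivFun.symm.injective h1
  funext i
  have := congrFun h2 i
  exact_mod_cast this

lemma summable_gauss {n : ℕ} (b : Basis (Fin n) ℝ V) {a : ℝ} (ha : 0 < a) :
    Summable fun m : Fin n → ℤ => Real.exp (-(a * ‖lv b m‖ ^ 2)) := by
  let Λ := Submodule.span ℤ (Set.range b)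
  have hfr : finrank ℤ Λ = n := by
    rw [ZLattice.rank ℝ Λ, finrank_eq_card_basis b, Fintype.card_fin]
  have hs := ZLattice.summable_norm_pow_inv Λ (2 * (n + 1)) (by rw [hfr]; omega)
  have hmem : ∀ m, lv b m ∈ Λ := by
    intro m
    apply Submodule.sum_mem
    intro i _
    have : ((m i : ℝ) • b i) = (m i : ℤ) • b i := Int.cast_smul_eq_zsmul _ _ _
    rw [this]
    exact Submodule.smul_mem _ _ (Submodule.subset_span ⟨i, rfl⟩)
  have hinj : Function.Injective (fun m : Fin n → ℤ => (⟨lv b m, hmem m⟩ : Λ)) := by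
    intro m m' h
    exact lv_injective b (congrArg Subtype.val h)
  have hs2 := (hs.comp_injective hinj).mul_left (((n + 1).factorial : ℝ) / a ^ (n + 1))
  refine Summable.of_norm_bounded_eventually hs2 ?_
  refine (Set.finite_singleton (0 : Fin n → ℤ)).subset ?_
  intro m hm
  by_contra hm0
  apply hm
  have hne : lv b m ≠ 0 := by
    intro h
    apply hm0
    apply lv_injective b
    rw [h]; simp [lv]
  have hpos : 0 < ‖lv b m‖ := norm_pos_iff.mpr hne
  have hy : 0 < a * ‖lv b m‖ ^ 2 := by positivity
  have h1 := Real.pow_div_factorial_le_exp _ hy.le (n + 1)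
  simp only [Function.comp, Submodule.coe_norm, Set.mem_setOf_eq]
  rw [Real.norm_eq_abs, abs_of_pos (Real.exp_pos _), Real.exp_neg]
  have h2 : (Real.exp (a * ‖lv b m‖ ^ 2))⁻¹ ≤ ((a * ‖lv b m‖ ^ 2) ^ (n + 1) / (n + 1).factorial)⁻¹ := by
    apply inv_anti₀ _ h1
    positivity
  refine h2.trans (le_of_eq ?_)
  rw [inv_div, mul_pow, ← pow_mul, inv_pow]
  field_simp

lemma Lb_measurePreserving [MeasurableSpace V] [BorelSpace V] {n : ℕ} (b : Basis (Fin n) ℝ V)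
    (hdet : (Matrix.of fun i j : Fin n => ⟪b i, b j⟫).det = 1) :
    MeasurePreserving (Lb b) volume volume := by
  have hn : finrank ℝ V = n := by rw [finrank_eq_card_basis b, Fintype.card_fin]
  let o : OrthonormalBasis (Fin n) ℝ V := (stdOrthonormalBasis ℝ V).reindex (finCongr hn)
  let A : Matrix (Fin n) (Fin n) ℝ := Matrix.of fun j i => ⟪o j, b i⟫
  have hA : A.transpose * A = Matrix.of fun i j : Fin n => ⟪b i, b j⟫ := by
    ext i j
    simp only [Matrix.mul_apply, Matrix.transpose_apply, A, Matrix.of_apply]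
    rw [← o.sum_inner_mul_inner (b i) (b j)]
    refine Finset.sum_congr rfl fun k _ => ?_
    rw [real_inner_comm]
  have hd : A.det * A.det = 1 := by
    rw [← hdet, ← hA, Matrix.det_mul, Matrix.det_transpose]
  have hd1 : |A.det| = 1 := by
    have : |A.det| * |A.det| = 1 := by rw [← abs_mul, hd, abs_one]
    nlinarith [abs_nonneg A.det]
  have hd0 : LinearMap.det (Matrix.toLin' A) ≠ 0 := by
    rw [LinearMap.det_toLin']; intro h; rw [h] at hd; simp at hd
  have m1 : MeasurePreserving (Matrix.toLin' A) (volume : Measure (Fin n → ℝ)) volume := by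
    refine ⟨?_, ?_⟩
    · exact (LinearMap.continuous_of_finiteDimensional _).measurable
    · rw [Real.map_linearMap_volume_pi_eq_smul_volume_pi hd0, LinearMap.det_toLin', abs_inv, hd1]
      simp
  have m2 := (o.measurePreserving_repr_symm).comp ((PiLp.volume_preserving_toLp (Fin n)).comp m1)
  have : Lb b = o.repr.symm ∘ (WithLp.toLp 2) ∘ (Matrix.toLin' A) := by
    funext x
    simp only [Function.comp]
    apply o.repr.injective
    ext j
    simp [Lb, A, Matrix.toLin'_apply, Matrix.mulVec, dotProduct, o.repr_apply_apply, inner_sum, inner_smul_right, mul_comm]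
  rw [this]
  exact m2

lemma theta_transform_aux {n : ℕ} (b : Basis (Fin n) ℝ V) (G : Matrix (Fin n) (Fin n) ℤ)
    (hG : ∀ i j, ⟪b i, b j⟫ = (G i j : ℝ)) (hdet : G.det = 1) (c : ℂ) (hc : 0 < c.re) :
    ∑' m : Fin n → ℤ, cexp (-(π * c) * ‖lv b m‖ ^ 2) =
      (1 / c) ^ (n / 2 : ℂ) * ∑' m : Fin n → ℤ, cexp (-(π * (1 / c)) * ‖lv b m‖ ^ 2) := by
  borelize V
  have hn : finrank ℝ V = n := by rw [finrank_eq_card_basis b, Fintype.card_fin]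
  have hπ := Real.pi_pos
  have hc0 : c ≠ 0 := by rintro rfl; simp at hc
  have hb : 0 < ((π : ℂ) * c).re := by simp; positivity
  have hdetR : (Matrix.of fun i j : Fin n => ⟪b i, b j⟫).det = 1 := by
    have : (Matrix.of fun i j : Fin n => ⟪b i, b j⟫) = (Int.castRingHom ℝ).mapMatrix G := by
      ext i j; simp [hG]
    rw [this, ← RingHom.map_det, hdet]; simp
  have mp := Lb_measurePreserving b hdetR
  have emb : MeasurableEmbedding (Lb b) := by
    have : Lb b = b.equivFunL.symm.toHomeomorph := by funext x; simp [Lb_eq]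
    rw [this]
    exact (Homeomorph.measurableEmbedding _)
  have hLc : Continuous (Lb b) := by unfold Lb; fun_prop
  set f : (Fin n → ℝ) → ℂ := fun x => cexp (-(π * c) * ‖Lb b x‖ ^ 2) with hf
  have hfc : Continuous f := by
    have := hLc.norm
    fun_prop
  have hfi : Integrable f := by
    have h := GaussianFourier.integrable_cexp_neg_mul_sq_norm_add hb 0 (0 : V)
    rw [← mp.integrable_comp_emb emb] at h
    simpa [Function.comp_def, hf] using h
  have hnorm : ∀ x, ‖f x‖ = Real.exp (-(π * c.re) * ‖Lb b x‖ ^ 2) := by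
    intro x
    rw [hf, Complex.norm_exp]
    congr 1
    simp [← Complex.ofReal_pow]
  have hfu : ∀ R : ℝ, ∃ u : (Fin n → ℤ) → ℝ, Summable u ∧
      ∀ x : Fin n → ℝ, ‖x‖ ≤ R → ∀ m, ‖f (sh x m)‖ ≤ u m := by
    intro R
    let K := ‖(b.equivFunL.symm : (Fin n → ℝ) →L[ℝ] V)‖
    have hK : ∀ x, ‖Lb b x‖ ≤ K * ‖x‖ := fun x => by
      rw [Lb_eq]; exact (b.equivFunL.symm : (Fin n → ℝ) →L[ℝ] V).le_opNorm x
    refine ⟨fun m => Real.exp (π * c.re * (K * R) ^ 2) * Real.exp (-(π * c.re / 2 * ‖lv b m‖ ^ 2)),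
      (summable_gauss b (by positivity)).mul_left _, fun x hx m => ?_⟩
    beta_reduce
    rw [hnorm, ← Real.exp_add, Lb_sh]
    apply Real.exp_le_exp.mpr
    have h1 : ‖lv b m‖ ≤ ‖Lb b x + lv b m‖ + ‖Lb b x‖ := by
      have := norm_sub_le (Lb b x + lv b m) (Lb b x)
      simpa using this
    have h2 : ‖Lb b x‖ ≤ K * R := (hK x).trans (by gcongr)
    have h3 : 0 ≤ ‖Lb b x‖ := norm_nonneg _
    have h4 : 0 ≤ ‖lv b m‖ := norm_nonneg _
    have h5 : 0 ≤ ‖Lb b x + lv b m‖ := norm_nonneg _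
    have h6 : ‖lv b m‖ ^ 2 / 2 ≤ ‖Lb b x + lv b m‖ ^ 2 + (K * R) ^ 2 := by
      have : ‖lv b m‖ ≤ ‖Lb b x + lv b m‖ + K * R := by linarith
      nlinarith [sq_nonneg (‖Lb b x + lv b m‖ - K * R)]
    have h7 : 0 < π * c.re := by positivity
    nlinarith
  -- the inverse Gram matrix
  have hGu : G * G⁻¹ = 1 := Matrix.mul_nonsing_inv _ (by rw [hdet]; exact isUnit_one)
  have hGu' : G⁻¹ * G = 1 := Matrix.nonsing_inv_mul _ (by rw [hdet]; exact isUnit_one)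
  let e : (Fin n → ℤ) ≃ (Fin n → ℤ) :=
    ⟨fun m => G.mulVec m, fun m => G⁻¹.mulVec m,
      fun m => by simp [Matrix.mulVec_mulVec, hGu'], fun m => by simp [Matrix.mulVec_mulVec, hGu]⟩
  have hIntEq : ∀ m, ∫ x, ech (e m) x * f x =
      (1 / c) ^ (n / 2 : ℂ) * cexp (-(π * (1 / c)) * ‖lv b m‖ ^ 2) := by
    intro m
    have h1 := GaussianFourier.integral_cexp_neg_mul_sq_norm_add hb (-(2 * π * I)) (lv b m)
    rw [← mp.integral_comp emb, hn] at h1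
    have h2 : ∀ x, ech (e m) x * f x =
        cexp (-(π * c) * ‖Lb b x‖ ^ 2 + -(2 * π * I) * ⟪lv b m, Lb b x⟫) := by
      intro x
      rw [ech, hf, ← Complex.exp_add, add_comm]
      congr 2
      rw [neg_mul]
      congr 2
      have : ⟪lv b m, Lb b x⟫ = ∑ i, ((e m) i : ℝ) * x i := by
        simp only [lv, Lb, sum_inner, inner_sum, inner_smul_left, inner_smul_right, hG, e,
          Equiv.coe_fn_mk, Matrix.mulVec, dotProduct]
        refine Finset.sum_congr rfl fun i _ => ?_
        push_cast
        rw [Finset.sum_mul, Finset.mul_sum]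
        refine Finset.sum_congr rfl fun j _ => ?_
        have hs : (G i j : ℝ) = G j i := by rw [← hG, ← hG, real_inner_comm]
        rw [hs]
        simp
        ring
      rw [this]
      push_cast
      rfl
    simp_rw [h2]
    rw [h1]
    congr 1
    · congr 1
      field_simp
    · congr 1
      have : (π : ℂ) ≠ 0 := by exact_mod_cast hπ.ne'
      field_simp
      rw [Complex.I_sq]
      ring
  have hsum : Summable fun n : Fin n → ℤ => ∫ x, ech n x * f x := by
    rw [← e.summable_iff]
    simp only [Function.comp_def, hIntEq]
    apply Summable.mul_left
    have hc' : 0 < (1 / c).re := by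
      rw [one_div, Complex.inv_re]
      have := Complex.normSq_pos.mpr hc0
      positivity
    apply Summable.of_norm
    convert summable_gauss b (a := π * (1 / c).re) (by positivity) using 2 with m
    rw [Complex.norm_exp]
    congr 1
    simp [← Complex.ofReal_pow]
  have hP := poisson f hfc hfi hfu hsum
  rw [← e.tsum_eq (fun n => ∫ x, ech n x * f x)] at hP
  simp only [hIntEq] at hP
  rw [tsum_mul_left] at hP
  rw [← hP]
  rfl

end LeechPol

namespace LeechPol
open Set Complex Module ModularForm SlashInvariantForm MatrixGroups OnePoint Function
open UpperHalfPlane hiding I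
open scoped Real RealInnerProductSpace
set_option linter.unusedSectionVars false
set_option linter.unusedSimpArgs false

variable [FiniteDimensional ℝ V]

/-- Theta series. -/
def theta {n : ℕ} (q : (Fin n → ℤ) → ℕ) (z : ℂ) : ℂ := ∑' m, Periodic.qParam 1 z ^ (q m)

lemma qParam_pow (z : ℂ) (k : ℕ) : Periodic.qParam 1 z ^ k = cexp (2 * π * I * z * k) := by
  rw [Periodic.qParam, ← Complex.exp_nat_mul]
  congr 1
  push_cast
  ring

lemma norm_qParam_pow (z : ℂ) (k : ℕ) :
    ‖Periodic.qParam 1 z ^ k‖ = Real.exp (-(π * z.im * (2 * k))) := by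
  rw [qParam_pow, Complex.norm_exp]
  congr 1
  simp
  ring

section
variable {n : ℕ} (b : Basis (Fin n) ℝ V) (q : (Fin n → ℤ) → ℕ)
  (hq : ∀ m, ‖lv b m‖ ^ 2 = 2 * (q m : ℝ))

lemma summable_theta_real (hq : ∀ m, ‖lv b m‖ ^ 2 = 2 * (q m : ℝ)) {a : ℝ} (ha : 0 < a) :
    Summable fun m => Real.exp (-(a * (2 * q m))) := by
  have := summable_gauss b ha
  simpa only [hq] using this

lemma summable_theta (hq : ∀ m, ‖lv b m‖ ^ 2 = 2 * (q m : ℝ)) {z : ℂ} (hz : 0 < z.im) :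
    Summable fun m => Periodic.qParam 1 z ^ (q m) := by
  apply Summable.of_norm
  simp only [norm_qParam_pow]
  exact summable_theta_real b q hq (by have := Real.pi_pos; positivity)

lemma finite_fiber (hq : ∀ m, ‖lv b m‖ ^ 2 = 2 * (q m : ℝ)) (k : ℕ) :
    (q ⁻¹' {k}).Finite := by
  have h := (summable_theta_real b q hq one_pos).tendsto_cofinite_zero
  have := h.eventually_lt_const (Real.exp_pos (-(1 * (2 * k))))
  refine Set.Finite.subset this ?_
  intro m hm hm'
  simp only [mem_preimage, mem_singleton_iff] at hm
  simp [hm] at hm'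

lemma theta_hasSum (hq : ∀ m, ‖lv b m‖ ^ 2 = 2 * (q m : ℝ)) {z : ℂ} (hz : 0 < z.im) :
    HasSum (fun k : ℕ => (Nat.card (q ⁻¹' {k}) : ℂ) • Periodic.qParam 1 z ^ k) (theta q z) := by
  have h := (summable_theta b q hq hz).hasSum.tsum_fiberwise q
  refine h.congr_fun ?_ |> id
  intro k
  have : ∀ m : q ⁻¹' {k}, Periodic.qParam 1 z ^ (q m) = Periodic.qParam 1 z ^ k := fun m => by
    rw [show q m = k from m.2]
  simp only [this]
  rw [tsum_const]
  simp

lemma theta_diff (hq : ∀ m, ‖lv b m‖ ^ 2 = 2 * (q m : ℝ)) :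
    DifferentiableOn ℂ (theta q) {z | 0 < z.im} := by
  intro z hz
  have hz' : 0 < z.im := hz
  have ho : IsOpen {w : ℂ | z.im / 2 < w.im} := isOpen_lt continuous_const Complex.continuous_im
  have h := Complex.differentiableOn_tsum_of_summable_norm
    (F := fun m (w : ℂ) => Periodic.qParam 1 w ^ (q m))
    (u := fun m => Real.exp (-(π * (z.im / 2) * (2 * q m))))
    (summable_theta_real b q hq (by have := Real.pi_pos; positivity))
    (U := {w : ℂ | z.im / 2 < w.im}) ?_ ho ?_
  · exact (h.differentiableAt (ho.mem_nhds (by simp; linarith))).differentiableWithinAt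
  · intro m
    simp only [qParam_pow]
    fun_prop
  · intro m w hw
    rw [norm_qParam_pow]
    apply Real.exp_le_exp.mpr
    have : z.im / 2 ≤ w.im := le_of_lt hw
    have := Real.pi_pos
    gcongr

end

section
variable (b : Basis (Fin 24) ℝ V) (q : (Fin 24 → ℤ) → ℕ)

lemma theta_S (hq : ∀ m, ‖lv b m‖ ^ 2 = 2 * (q m : ℝ)) (G : Matrix (Fin 24) (Fin 24) ℤ)
    (hG : ∀ i j, ⟪b i, b j⟫ = (G i j : ℝ)) (hdet : G.det = 1) {z : ℂ} (hz : 0 < z.im) :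
    theta q (-z⁻¹) * (z ^ 12)⁻¹ = theta q z := by
  have hz0 : z ≠ 0 := by rintro rfl; simp at hz
  have h := theta_transform_aux b G hG hdet (-I * z) (by simpa using hz)
  have e1 : ∀ m, cexp (-(π * (-I * z)) * ‖lv b m‖ ^ 2) = Periodic.qParam 1 z ^ (q m) := by
    intro m
    rw [qParam_pow, ← Complex.ofReal_pow, hq]
    congr 1
    push_cast
    ring
  have e2 : ∀ m, cexp (-(π * (1 / (-I * z))) * ‖lv b m‖ ^ 2)
      = Periodic.qParam 1 (-z⁻¹) ^ (q m) := by
    intro m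
    rw [qParam_pow, ← Complex.ofReal_pow, hq]
    congr 1
    push_cast
    field_simp
    simp
  simp only [e1, e2] at h
  rw [theta, theta, h, mul_comm]
  congr 1
  rw [show (((24 : ℕ) : ℂ) / 2) = ((12 : ℕ) : ℂ) by norm_num, Complex.cpow_natCast]
  rw [div_pow, mul_pow]
  have : (-I) ^ 12 = 1 := by
    rw [show (12 : ℕ) = 2 * 6 by norm_num, pow_mul, neg_sq, I_sq]; norm_num
  rw [this]
  simp

/-- The theta series as a function on the upper half plane -/
def thetaH : ℍ → ℂ := fun z => theta q z

lemma thetaH_T : (thetaH q ∣[(12 : ℤ)] ModularGroup.T) = thetaH q := by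
  ext z
  rw [SL_slash_apply, ModularGroup.denom_apply, modular_T_smul]
  simp only [thetaH, theta, qParam_pow]
  have : ∀ k : ℕ, cexp (2 * π * I * ((1 : ℝ) +ᵥ z : ℍ) * k) = cexp (2 * π * I * z * k) := by
    intro k
    have : (2 * π * I * ((1 : ℝ) +ᵥ z : ℍ) * k : ℂ) = 2 * π * I * z * k + k * (2 * π * I) := by
      simp
      ring
    rw [this, Complex.exp_periodic.nat_mul k]
  simp only [this]
  simp [ModularGroup.T]

lemma thetaH_S (hq : ∀ m, ‖lv b m‖ ^ 2 = 2 * (q m : ℝ)) (G : Matrix (Fin 24) (Fin 24) ℤ)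
    (hG : ∀ i j, ⟪b i, b j⟫ = (G i j : ℝ)) (hdet : G.det = 1) :
    (thetaH q ∣[(12 : ℤ)] ModularGroup.S) = thetaH q := by
  ext z
  have := theta_S b q hq G hG hdet z.im_pos
  rw [SL_slash_apply, UpperHalfPlane.modular_S_smul, ModularGroup.denom_S]
  simp only [thetaH]
  rw [← this, ← inv_neg, zpow_neg]
  norm_cast

lemma thetaH_hasSum (hq : ∀ m, ‖lv b m‖ ^ 2 = 2 * (q m : ℝ)) (τ : ℍ) :
    HasSum (fun k : ℕ => (Nat.card (q ⁻¹' {k}) : ℂ) • Periodic.qParam 1 τ ^ k) (thetaH q τ) :=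
  theta_hasSum b q hq τ.im_pos

/-- The theta series as a modular form. -/
def thetaForm (hq : ∀ m, ‖lv b m‖ ^ 2 = 2 * (q m : ℝ)) (G : Matrix (Fin 24) (Fin 24) ℤ)
    (hG : ∀ i j, ⟪b i, b j⟫ = (G i j : ℝ)) (hdet : G.det = 1) : ModularForm 𝒮ℒ 12 where
  toFun := thetaH q
  slash_action_eq' A hA := by
    obtain ⟨A, rfl⟩ := hA
    exact slash_action_generators_SL2Z (thetaH_S b q hq G hG hdet) (thetaH_T q) A
  holo' := by
    rw [UpperHalfPlane.mdifferentiable_iff]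
    refine (theta_diff b q hq).congr fun z hz ↦ ?_
    simp [thetaH, ofComplex_apply_of_im_pos hz]
  bdd_at_cusps' hc := by
    rw [Subgroup.IsArithmetic.isCusp_iff_isCusp_SL2Z] at hc
    rw [OnePoint.isBoundedAt_iff_forall_SL2Z hc]
    intro γ _
    rw [slash_action_generators_SL2Z (thetaH_S b q hq G hG hdet) (thetaH_T q)]
    exact isBoundedAtImInfty_of_hasSum_qExpansion one_pos (thetaH_hasSum b q hq)

lemma thetaForm_coeff (hq : ∀ m, ‖lv b m‖ ^ 2 = 2 * (q m : ℝ)) (G : Matrix (Fin 24) (Fin 24) ℤ)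
    (hG : ∀ i j, ⟪b i, b j⟫ = (G i j : ℝ)) (hdet : G.det = 1) (k : ℕ) :
    (qExpansion 1 (thetaForm b q hq G hG hdet)).coeff k = Nat.card (q ⁻¹' {k}) := by
  symm
  exact ModularFormClass.qExpansion_coeff_unique (f := thetaForm b q hq G hG hdet) one_pos
    one_mem_strictPeriods_SL (c := fun k => (Nat.card (q ⁻¹' {k}) : ℂ)) (thetaH_hasSum b q hq) k

/-- The explicit combination of Eisenstein series. -/
def leechForm : ModularForm 𝒮ℒ 12 :=
  (7 / 12 : ℂ) • ModularForm.mcast (by decide) (E₄.pow 3) +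
    (5 / 12 : ℂ) • ModularForm.mcast (by decide) (E₆.pow 2)

lemma leechForm_q : qExpansion 1 leechForm = (7 / 12 : ℂ) • (qExpansion 1 E₄) ^ 3 +
    (5 / 12 : ℂ) • (qExpansion 1 E₆) ^ 2 := by
  have h1 : ⇑leechForm =
      ⇑((7 / 12 : ℂ) • (ModularForm.mcast (by decide) (E₄.pow 3) : ModularForm 𝒮ℒ 12)) +
      ⇑((5 / 12 : ℂ) • (ModularForm.mcast (by decide) (E₆.pow 2) : ModularForm 𝒮ℒ 12)) := rfl
  rw [h1, ModularForm.qExpansion_add one_pos one_mem_strictPeriods_SL]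
  simp only [FunLike.coe_smul, ModularForm.qExpansion_smul one_pos one_mem_strictPeriods_SL, coe_mcast,
    ModularForm.qExpansion_pow one_pos one_mem_strictPeriods_SL]

lemma E4c (m : ℕ) (hm : m ≠ 0) : (qExpansion 1 E₄).coeff m =
    240 * ((ArithmeticFunction.sigma 3 m : ℕ) : ℂ) := by
  norm_num [EisensteinSeries.E_qExpansion_coeff _ ⟨2, rfl⟩, hm,
    show bernoulli 4 = -1 / 30 by decide +kernel]

lemma E6c (m : ℕ) (hm : m ≠ 0) : (qExpansion 1 E₆).coeff m =
    -504 * ((ArithmeticFunction.sigma 5 m : ℕ) : ℂ) := by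
  norm_num [EisensteinSeries.E_qExpansion_coeff _ ⟨3, rfl⟩, hm,
    show bernoulli 6 = 1 / 42 by decide +kernel]

lemma E40 : (qExpansion 1 E₄).coeff 0 = 1 := EisensteinSeries.E_qExpansion_coeff_zero _ ⟨2, rfl⟩
lemma E60 : (qExpansion 1 E₆).coeff 0 = 1 := EisensteinSeries.E_qExpansion_coeff_zero _ ⟨3, rfl⟩

lemma leech_coeffs : (qExpansion 1 leechForm).coeff 0 = 1 ∧ (qExpansion 1 leechForm).coeff 1 = 0 ∧
    (qExpansion 1 leechForm).coeff 2 = 196560 ∧ (qExpansion 1 leechForm).coeff 3 = 16773120 ∧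
    (qExpansion 1 leechForm).coeff 4 = 398034000 := by
  have a1 : (qExpansion 1 E₄).coeff 1 = 240 := by
    rw [E4c 1 (by norm_num), show ArithmeticFunction.sigma 3 1 = 1 by decide]; norm_num
  have a2 : (qExpansion 1 E₄).coeff 2 = 2160 := by
    rw [E4c 2 (by norm_num), show ArithmeticFunction.sigma 3 2 = 9 by decide]; norm_num
  have a3 : (qExpansion 1 E₄).coeff 3 = 6720 := by
    rw [E4c 3 (by norm_num), show ArithmeticFunction.sigma 3 3 = 28 by decide]; norm_num
  have a4 : (qExpansion 1 E₄).coeff 4 = 17520 := by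
    rw [E4c 4 (by norm_num), show ArithmeticFunction.sigma 3 4 = 73 by decide]; norm_num
  have b1 : (qExpansion 1 E₆).coeff 1 = -504 := by
    rw [E6c 1 (by norm_num), show ArithmeticFunction.sigma 5 1 = 1 by decide]; norm_num
  have b2 : (qExpansion 1 E₆).coeff 2 = -16632 := by
    rw [E6c 2 (by norm_num), show ArithmeticFunction.sigma 5 2 = 33 by decide]; norm_num
  have b3 : (qExpansion 1 E₆).coeff 3 = -122976 := by
    rw [E6c 3 (by norm_num), show ArithmeticFunction.sigma 5 3 = 244 by decide]; norm_num
  have b4 : (qExpansion 1 E₆).coeff 4 = -532728 := by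
    rw [E6c 4 (by norm_num), show ArithmeticFunction.sigma 5 4 = 1057 by decide]; norm_num
  have hA0 := E40
  have hB0 := E60
  rw [leechForm_q, pow_succ, pow_two, pow_two]
  generalize qExpansion 1 E₄ = A at *
  generalize qExpansion 1 E₆ = B at *
  have a0 : A.coeff 0 = 1 := hA0
  have b0 : B.coeff 0 = 1 := hB0
  refine ⟨?_, ?_, ?_, ?_, ?_⟩ <;>
  norm_num [map_add, PowerSeries.coeff_smul, PowerSeries.coeff_mul, Finset.Nat.antidiagonal_succ,
    a0, a1, a2, a3, a4, b0, b1, b2, b3, b4, -PowerSeries.coeff_zero_eq_constantCoeff]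

theorem theta_counts (hq : ∀ m, ‖lv b m‖ ^ 2 = 2 * (q m : ℝ)) (G : Matrix (Fin 24) (Fin 24) ℤ)
    (hG : ∀ i j, ⟪b i, b j⟫ = (G i j : ℝ)) (hdet : G.det = 1)
    (h0 : Nat.card (q ⁻¹' {0}) = 1) (h1 : Nat.card (q ⁻¹' {1}) = 0) :
    Nat.card (q ⁻¹' {2}) = 196560 ∧ Nat.card (q ⁻¹' {3}) = 16773120 ∧
      Nat.card (q ⁻¹' {4}) = 398034000 := by
  set f := thetaForm b q hq G hG hdet with hf
  have hc := thetaForm_coeff b q hq G hG hdet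
  obtain ⟨l0, l1, l2, l3, l4⟩ := leech_coeffs
  have hz : f - leechForm = 0 := by
    apply ModularForm.sturm_bound_levelOne
    have : ((((12 : ℤ).toNat / 12 : ℕ)) : ℕ∞) = ((1 : ℕ) : ℕ∞) := rfl
    rw [this]
    have e : qExpansion 1 (f - leechForm) = qExpansion 1 f - qExpansion 1 leechForm :=
      ModularForm.qExpansion_sub one_pos one_mem_strictPeriods_SL _ _
    have h2 : ((2 : ℕ) : ℕ∞) ≤ (qExpansion 1 ⇑(f - leechForm)).order := by
      apply PowerSeries.nat_le_order
      intro i hi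
      have e' : qExpansion 1 ⇑(f - leechForm) = qExpansion 1 f - qExpansion 1 leechForm := e
      rw [e', map_sub, hf, hc]
      interval_cases i
      · rw [h0, l0]; simp
      · rw [h1, l1]; simp
    exact lt_of_lt_of_le (by norm_num) h2
  have hfl : f = leechForm := sub_eq_zero.mp hz
  rw [← hfl, hf, hc] at l2 l3 l4
  exact ⟨by exact_mod_cast l2, by exact_mod_cast l3, by exact_mod_cast l4⟩
end

end LeechPol

namespace LeechPol
open Module
open scoped RealInnerProductSpace
set_option linter.unusedSectionVars false
set_option linter.unusedSimpArgs false

variable [FiniteDimensional ℝ V]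

/-- Reduction of the coordinates modulo two. -/
def red {n : ℕ} (m : Fin n → ℤ) : Fin n → ZMod 2 := fun i => (m i : ZMod 2)

lemma lv_add {n : ℕ} (b : Basis (Fin n) ℝ V) (m m' : Fin n → ℤ) :
    lv b (m + m') = lv b m + lv b m' := by
  simp [lv, add_smul, Finset.sum_add_distrib]

lemma lv_smul {n : ℕ} (b : Basis (Fin n) ℝ V) (k : ℤ) (m : Fin n → ℤ) :
    lv b (k • m) = (k : ℝ) • lv b m := by
  simp [lv, mul_smul, Finset.smul_sum]

lemma lv_neg {n : ℕ} (b : Basis (Fin n) ℝ V) (m : Fin n → ℤ) : lv b (-m) = - lv b m := by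
  simp [lv]

lemma red_eq {n : ℕ} {m m' : Fin n → ℤ} (h : red m = red m') : ∃ k, m = m' + (2 : ℤ) • k := by
  have : ∀ i, ∃ k : ℤ, m i = m' i + 2 * k := by
    intro i
    have h1 := congrFun h i
    simp only [red] at h1
    rw [ZMod.intCast_eq_intCast_iff_dvd_sub] at h1
    obtain ⟨k, hk⟩ := h1
    exact ⟨-k, by push_cast at hk; linarith⟩
  choose k hk using this
  exact ⟨k, funext fun i => by simp [hk i]⟩

section
variable {n : ℕ} (b : Basis (Fin n) ℝ V) (q : (Fin n → ℤ) → ℕ)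

lemma class_key (hq : ∀ m, ‖lv b m‖ ^ 2 = 2 * (q m : ℝ)) (hmin : ∀ m, m ≠ 0 → 2 ≤ q m)
    {m m' : Fin n → ℤ} (h : red m = red m') (hm : q m ≤ 4) (hm' : q m' ≤ 4) :
    m = m' ∨ m = -m' ∨ (q m = 4 ∧ q m' = 4 ∧ ⟪lv b m, lv b m'⟫ = 0) := by
  obtain ⟨k, hk⟩ := red_eq h
  by_cases h1 : k = 0
  · left; simp [hk, h1]
  by_cases h2 : m' + k = 0
  · right; left
    have : k = -m' := by rw [eq_neg_iff_add_eq_zero, add_comm]; exact h2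
    rw [hk, this]; funext i; simp; ring
  right; right
  have e1 : lv b m - lv b m' = (2 : ℝ) • lv b k := by
    rw [hk, lv_add, lv_smul]; simp
  have e2 : lv b m + lv b m' = (2 : ℝ) • lv b (m' + k) := by
    rw [hk, lv_add, lv_smul, lv_add]; simp; module
  have n1 : ‖lv b m - lv b m'‖ ^ 2 = 4 * (2 * q k) := by
    rw [e1, norm_smul, mul_pow, hq]; norm_num
  have n2 : ‖lv b m + lv b m'‖ ^ 2 = 4 * (2 * q (m' + k)) := by
    rw [e2, norm_smul, mul_pow, hq]; norm_num
  rw [norm_sub_sq_real, hq, hq] at n1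
  rw [norm_add_sq_real, hq, hq] at n2
  have g1 : (2 : ℝ) ≤ q k := by exact_mod_cast hmin k h1
  have g2 : (2 : ℝ) ≤ q (m' + k) := by exact_mod_cast hmin _ h2
  have g3 : (q m : ℝ) ≤ 4 := by exact_mod_cast hm
  have g4 : (q m' : ℝ) ≤ 4 := by exact_mod_cast hm'
  refine ⟨?_, ?_, ?_⟩
  · have : (4 : ℝ) ≤ q m := by linarith
    have : 4 ≤ q m := by exact_mod_cast this
    omega
  · have : (4 : ℝ) ≤ q m' := by linarith
    have : 4 ≤ q m' := by exact_mod_cast this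
    omega
  · linarith

end

section
variable (b : Basis (Fin 24) ℝ V) (q : (Fin 24 → ℤ) → ℕ)

open Classical in
lemma big_class (hq : ∀ m, ‖lv b m‖ ^ 2 = 2 * (q m : ℝ)) (hmin : ∀ m, m ≠ 0 → 2 ≤ q m)
    (G : Matrix (Fin 24) (Fin 24) ℤ)
    (hG : ∀ i j, ⟪b i, b j⟫ = (G i j : ℝ)) (hdet : G.det = 1) :
    ∃ T : Finset (Fin 24 → ℤ), 48 ≤ T.card ∧ (∀ m ∈ T, q m = 4) ∧
      ∀ m ∈ T, ∀ m' ∈ T, red m = red m' := by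
  have q0 : ∀ m, q m = 0 ↔ m = 0 := by
    intro m
    constructor
    · intro h; by_contra h'; have := hmin m h'; omega
    · rintro rfl
      have := hq 0
      have h0 : lv b 0 = 0 := by simp [lv]
      rw [h0] at this
      simp at this
      exact this
  have h0 : Nat.card (q ⁻¹' {0}) = 1 := by
    have : q ⁻¹' {0} = {0} := by ext m; simp [q0]
    rw [this]; simp
  have h1 : Nat.card (q ⁻¹' {1}) = 0 := by
    have : q ⁻¹' {1} = ∅ := by
      ext m
      simp only [Set.mem_preimage, Set.mem_singleton_iff, Set.mem_empty_iff_false, iff_false]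
      intro h
      by_cases h' : m = 0
      · have := (q0 m).2 h'; omega
      · have := hmin m h'; omega
    rw [this]; simp
  obtain ⟨c2, c3, c4⟩ := theta_counts b q hq G hG hdet h0 h1
  let S : ℕ → Finset (Fin 24 → ℤ) := fun k => (finite_fiber b q hq k).toFinset
  have hS : ∀ k m, m ∈ S k ↔ q m = k := by intro k m; simp [S]
  have hScard : ∀ k, (S k).card = Nat.card (q ⁻¹' {k}) := by
    intro k
    simp only [S]
    rw [Nat.card_coe_set_eq, Set.ncard_eq_toFinset_card _ (finite_fiber b q hq k)]
  have hfib : ∀ k, k < 4 → (S k).card ≤ 2 * ((S k).image red).card := by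
    intro k hk
    apply Finset.card_le_mul_card_image
    intro a ha
    obtain ⟨m0, hm0, rfl⟩ := Finset.mem_image.mp ha
    have : (S k).filter (fun x => red x = red m0) ⊆ {m0, -m0} := by
      intro x hx
      rw [Finset.mem_filter] at hx
      have hx1 := (hS k x).1 hx.1
      have hx2 := (hS k m0).1 hm0
      rcases class_key b q hq hmin hx.2 (by omega) (by omega) with h | h | h
      · simp [h]
      · simp [h]
      · omega
    exact (Finset.card_le_card this).trans Finset.card_le_two
  have hdisj : ∀ k l, k ≤ 4 → l ≤ 4 → k ≠ l → Disjoint ((S k).image red) ((S l).image red) := by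
    intro k l hk hl hkl
    rw [Finset.disjoint_left]
    rintro _ h1 h2
    obtain ⟨m, hm, rfl⟩ := Finset.mem_image.mp h1
    obtain ⟨m', hm', h⟩ := Finset.mem_image.mp h2
    have e1 := (hS k m).1 hm
    have e2 := (hS l m').1 hm'
    have qneg : ∀ m, q (-m) = q m := by
      intro m
      have h1 := hq (-m)
      rw [lv_neg, norm_neg, hq] at h1
      have : (q m : ℝ) = q (-m) := by linarith
      exact_mod_cast this.symm
    rcases class_key b q hq hmin h.symm (by omega) (by omega) with h | h | h
    · rw [h] at e1; omega
    · rw [h, qneg] at e1; omega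
    · omega
  by_contra hcon
  push Not at hcon
  have hbig : (S 4).card ≤ 47 * ((S 4).image red).card := by
    apply Finset.card_le_mul_card_image
    intro a ha
    by_contra hlt
    obtain ⟨m, hm, m', hm', hne⟩ := hcon ((S 4).filter (fun x => red x = a)) (by omega)
      (fun m hm => (hS 4 m).1 (Finset.mem_filter.mp hm).1)
    exact hne (by rw [(Finset.mem_filter.mp hm).2, (Finset.mem_filter.mp hm').2])
  have hu : (((S 0).image red) ∪ ((S 2).image red) ∪ ((S 3).image red) ∪ ((S 4).image red)).card
      ≤ 2 ^ 24 := by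
    refine (Finset.card_le_univ _).trans (le_of_eq ?_)
    simp [ZMod.card]
  rw [Finset.card_union_of_disjoint, Finset.card_union_of_disjoint,
    Finset.card_union_of_disjoint] at hu
  · have f0 : 1 ≤ ((S 0).image red).card := by
      rw [Nat.one_le_iff_ne_zero, Finset.card_ne_zero, Finset.image_nonempty]
      exact ⟨0, (hS 0 0).2 ((q0 0).2 rfl)⟩
    have f2 := hfib 2 (by norm_num)
    have f3 := hfib 3 (by norm_num)
    rw [hScard, c2] at f2
    rw [hScard, c3] at f3
    rw [hScard, c4] at hbig
    omega
  · exact hdisj _ _ (by norm_num) (by norm_num) (by norm_num)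
  · rw [Finset.disjoint_union_left]
    exact ⟨hdisj _ _ (by norm_num) (by norm_num) (by norm_num),
      hdisj _ _ (by norm_num) (by norm_num) (by norm_num)⟩
  · rw [Finset.disjoint_union_left, Finset.disjoint_union_left]
    exact ⟨⟨hdisj _ _ (by norm_num) (by norm_num) (by norm_num),
      hdisj _ _ (by norm_num) (by norm_num) (by norm_num)⟩,
      hdisj _ _ (by norm_num) (by norm_num) (by norm_num)⟩

open Classical in
theorem exists_frame (hq : ∀ m, ‖lv b m‖ ^ 2 = 2 * (q m : ℝ)) (hmin : ∀ m, m ≠ 0 → 2 ≤ q m)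
    (G : Matrix (Fin 24) (Fin 24) ℤ)
    (hG : ∀ i j, ⟪b i, b j⟫ = (G i j : ℝ)) (hdet : G.det = 1) :
    ∃ f : Fin 24 → (Fin 24 → ℤ), (∀ i j, ⟪lv b (f i), lv b (f j)⟫ = if i = j then 8 else 0) ∧
      ∀ i j, ∃ k, f i = f j + (2 : ℤ) • k := by
  obtain ⟨T, hT, hT4, hTr⟩ := big_class b q hq hmin G hG hdet
  obtain ⟨P, hP⟩ : ∃ P : Finset (Fin 24 → ℤ) → Prop, ∀ U, P U ↔
      ∀ x ∈ U, ∀ y ∈ U, x ≠ y → ⟪lv b x, lv b y⟫ = 0 := ⟨_, fun U => Iff.rfl⟩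
  obtain ⟨U, hU, hUmax⟩ := Finset.exists_max_image (T.powerset.filter P) Finset.card
    ⟨∅, by simp [hP]⟩
  rw [Finset.mem_filter, Finset.mem_powerset, hP] at hU
  obtain ⟨hUT, hUo⟩ := hU
  have hcov : T ⊆ U ∪ U.image (fun x => -x) := by
    intro t ht
    by_contra hnot
    rw [Finset.mem_union, not_or] at hnot
    have hins : insert t U ∈ T.powerset.filter P := by
      rw [Finset.mem_filter, Finset.mem_powerset, hP]
      refine ⟨Finset.insert_subset ht hUT, ?_⟩
      have key : ∀ y ∈ U, ⟪lv b t, lv b y⟫ = 0 := by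
        intro y hy
        rcases class_key b q hq hmin (hTr t ht y (hUT hy)) (hT4 t ht).le (hT4 y (hUT hy)).le
          with h | h | h
        · exact absurd (h ▸ hy) hnot.1
        · exact absurd (Finset.mem_image.mpr ⟨y, hy, h.symm⟩) hnot.2
        · exact h.2.2
      intro x hx y hy hxy
      rcases Finset.mem_insert.mp hx with rfl | hx1 <;>
        rcases Finset.mem_insert.mp hy with rfl | hy1
      · exact absurd rfl hxy
      · exact key y hy1
      · rw [real_inner_comm]; exact key x hx1
      · exact hUo x hx1 y hy1 hxy
    have := hUmax _ hins
    rw [Finset.card_insert_of_notMem hnot.1] at this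
    omega
  have hUc : 24 ≤ U.card := by
    have h1 := Finset.card_le_card hcov
    have h2 := Finset.card_union_le U (U.image (fun x => -x))
    have h3 : (U.image (fun x => -x)).card ≤ U.card := Finset.card_image_le
    omega
  obtain ⟨W, hWU, hWc⟩ := Finset.exists_subset_card_eq hUc
  let e := (Finset.equivFinOfCardEq hWc).symm
  refine ⟨fun i => e i, fun i j => ?_, fun i j => ?_⟩
  · split_ifs with h
    · subst h
      rw [real_inner_self_eq_norm_sq, hq, hT4 _ (hUT (hWU (e i).2))]
      norm_num
    · exact hUo _ (hWU (e i).2) _ (hWU (e j).2) (fun h' => h (e.injective (Subtype.ext h')))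
  · exact red_eq (hTr _ (hUT (hWU (e i).2)) _ (hUT (hWU (e j).2)))
end

end LeechPol

namespace LeechPol
open Module
open scoped RealInnerProductSpace
set_option linter.unusedSectionVars false
set_option linter.unusedSimpArgs false

variable [FiniteDimensional ℝ V]

/-- Leech lattices, with unimodularity expressed as self-duality. -/
structure LeechL (Λ : AddSubgroup V) : Prop where
  int : ∀ x ∈ Λ, ∀ y ∈ Λ, ∃ n : ℤ, ⟪x, y⟫ = (n : ℝ)
  even : ∀ x ∈ Λ, ∃ n : ℤ, ⟪x, x⟫ = 2 * (n : ℝ)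
  min : ∀ x ∈ Λ, x ≠ 0 → 4 ≤ ⟪x, x⟫
  sd : ∀ x, (∀ y ∈ Λ, ∃ n : ℤ, ⟪x, y⟫ = (n : ℝ)) → x ∈ Λ

/-- Frames of vectors of norm eight. -/
structure FrameL (Λ : AddSubgroup V) (f : Fin 24 → V) : Prop where
  mem : ∀ i, f i ∈ Λ
  orth : ∀ i j, ⟪f i, f j⟫ = if i = j then 8 else 0
  dif : ∀ i j, (1 / 2 : ℝ) • (f i - f j) ∈ Λ

/-- The vector with given coordinates with respect to a frame. -/
def fvec (f : Fin 24 → V) (x : Fin 24 → ℝ) : V := ∑ i, (x i / 8) • f i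

lemma fvec_add (f : Fin 24 → V) (x y : Fin 24 → ℝ) : fvec f (x + y) = fvec f x + fvec f y := by
  simp [fvec, add_div, add_smul, Finset.sum_add_distrib]

lemma fvec_smul (f : Fin 24 → V) (c : ℝ) (x : Fin 24 → ℝ) : fvec f (c • x) = c • fvec f x := by
  simp [fvec, Finset.smul_sum, smul_smul, mul_div_assoc]

lemma fvec_single (f : Fin 24 → V) (i : Fin 24) (c : ℝ) :
    fvec f (Pi.single i c) = (c / 8) • f i := by
  rw [fvec, Finset.sum_eq_single i]
  · simp
  · intro j _ hj; simp [hj]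
  · simp

/-- The coordinate lattice. -/
def latt (Λ : AddSubgroup V) (f : Fin 24 → V) : AddSubgroup (Fin 24 → ℤ) where
  carrier := {x | fvec f (fun i => (x i : ℝ)) ∈ Λ}
  zero_mem' := by simp [fvec]
  add_mem' := by
    intro x y hx hy
    have h := fvec_add f (fun i => (x i : ℝ)) (fun i => (y i : ℝ))
    simp only [Set.mem_setOf_eq] at *
    have e : (fun i => (((x + y) i : ℤ) : ℝ)) = (fun i => (x i : ℝ)) + (fun i => (y i : ℝ)) := by
      funext i; simp
    rw [e, h]
    exact Λ.add_mem hx hy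
  neg_mem' := by
    intro x hx
    have h := fvec_smul f (-1) (fun i => (x i : ℝ))
    simp only [Set.mem_setOf_eq] at *
    have e : (fun i => (((-x) i : ℤ) : ℝ)) = (-1 : ℝ) • (fun i => (x i : ℝ)) := by
      funext i; simp
    rw [e, h]
    simpa using hx

lemma mem_latt {Λ : AddSubgroup V} {f : Fin 24 → V} {x : Fin 24 → ℤ} :
    x ∈ latt Λ f ↔ fvec f (fun i => (x i : ℝ)) ∈ Λ := Iff.rfl

/-- Properties of the coordinate lattice. -/
structure FrmL (L : AddSubgroup (Fin 24 → ℤ)) : Prop where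
  ip : ∀ x ∈ L, ∀ y ∈ L, (8 : ℤ) ∣ ∑ i, x i * y i
  ev : ∀ x ∈ L, (16 : ℤ) ∣ ∑ i, x i * x i
  mn : ∀ x ∈ L, x ≠ 0 → 32 ≤ ∑ i, x i * x i
  sd : ∀ x : Fin 24 → ℤ, (∀ y ∈ L, (8 : ℤ) ∣ ∑ i, x i * y i) → x ∈ L
  dif : ∀ i j, (Pi.single i 4 - Pi.single j 4 : Fin 24 → ℤ) ∈ L

section
variable {Λ : AddSubgroup V} {f : Fin 24 → V}

lemma FrameL.inner_fvec (hf : FrameL Λ f) (x y : Fin 24 → ℝ) :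
    ⟪fvec f x, fvec f y⟫ = (∑ i, x i * y i) / 8 := by
  simp only [fvec, sum_inner, inner_sum, inner_smul_left, inner_smul_right, hf.orth]
  simp
  rw [Finset.sum_div]
  refine Finset.sum_congr rfl fun i _ => ?_
  ring

lemma FrameL.inner_fvec_f (hf : FrameL Λ f) (x : Fin 24 → ℝ) (i : Fin 24) :
    ⟪fvec f x, f i⟫ = x i := by
  simp only [fvec, sum_inner, inner_smul_left, hf.orth]
  simp

lemma FrameL.expand (hf : FrameL Λ f) (hdim : finrank ℝ V = 24) (v : V) :
    v = fvec f (fun i => ⟪v, f i⟫) := by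
  have hne : ∀ i, f i ≠ 0 := by
    intro i h
    have := hf.orth i i
    rw [h] at this
    simp at this
  have hli : LinearIndependent ℝ f := linearIndependent_of_ne_zero_of_inner_eq_zero hne
    (fun i j hij => by change ⟪f i, f j⟫ = 0; rw [hf.orth, if_neg hij])
  let b := basisOfLinearIndependentOfCardEqFinrank hli (by simp [hdim])
  apply InnerProductSpace.ext_inner_right_basis b
  intro i
  have : b i = f i := by simp [b]
  rw [this, hf.inner_fvec_f]

lemma FrameL.frm (hf : FrameL Λ f) (hΛ : LeechL Λ) (hdim : finrank ℝ V = 24) :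
    FrmL (latt Λ f) := by
  have hin : ∀ x y : Fin 24 → ℤ, ⟪fvec f (fun i => (x i : ℝ)), fvec f (fun i => (y i : ℝ))⟫ =
      ((∑ i, x i * y i : ℤ) : ℝ) / 8 := by
    intro x y; rw [hf.inner_fvec]; push_cast; rfl
  refine ⟨?_, ?_, ?_, ?_, ?_⟩
  · intro x hx y hy
    obtain ⟨n, hn⟩ := hΛ.int _ (mem_latt.mp hx) _ (mem_latt.mp hy)
    rw [hin] at hn
    refine ⟨n, ?_⟩
    have : ((∑ i, x i * y i : ℤ) : ℝ) = ((8 * n : ℤ) : ℝ) := by push_cast at *; linarith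
    exact_mod_cast this
  · intro x hx
    obtain ⟨n, hn⟩ := hΛ.even _ (mem_latt.mp hx)
    rw [hin] at hn
    refine ⟨n, ?_⟩
    have : ((∑ i, x i * x i : ℤ) : ℝ) = ((16 * n : ℤ) : ℝ) := by push_cast at *; linarith
    exact_mod_cast this
  · intro x hx hx0
    have h := hΛ.min _ (mem_latt.mp hx) (by
      intro h0
      apply hx0
      funext i
      have := hf.inner_fvec_f (fun i => (x i : ℝ)) i
      rw [h0] at this
      simp at this
      exact_mod_cast this.symm)
    rw [hin] at h
    have : ((32 : ℤ) : ℝ) ≤ ((∑ i, x i * x i : ℤ) : ℝ) := by push_cast at *; linarith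
    exact_mod_cast this
  · intro x hx
    rw [mem_latt]
    apply hΛ.sd
    intro w hw
    have : ∀ i, ∃ n : ℤ, ⟪w, f i⟫ = (n : ℝ) := fun i => hΛ.int _ hw _ (hf.mem i)
    choose y hy using this
    have hwe : w = fvec f (fun i => (y i : ℝ)) := by
      rw [hf.expand hdim w]; simp only [hy, hf.inner_fvec_f]
    have hyL : y ∈ latt Λ f := by rw [mem_latt, ← hwe]; exact hw
    obtain ⟨n, hn⟩ := hx y hyL
    refine ⟨n, ?_⟩
    rw [hwe, hin, hn]
    push_cast
    ring
  · intro i j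
    rw [mem_latt]
    have e : (fun k => (((Pi.single i 4 - Pi.single j 4 : Fin 24 → ℤ) k : ℤ) : ℝ)) =
        Pi.single i 4 + (-1 : ℝ) • Pi.single j 4 := by
      funext k
      simp only [Pi.sub_apply, Pi.single_apply, Pi.add_apply, Pi.smul_apply]
      split_ifs <;> simp
    rw [e, fvec_add, fvec_smul, fvec_single, fvec_single]
    convert hf.dif i j using 1
    module

/-- changing signs in a frame -/
lemma FrameL.resign (hf : FrameL Λ f) (ε : Fin 24 → ℤ) (hε : ∀ i, ε i = 1 ∨ ε i = -1) :
    FrameL Λ (fun i => (ε i : ℝ) • f i) ∧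
      ∀ x, x ∈ latt Λ (fun i => (ε i : ℝ) • f i) ↔ (fun i => ε i * x i) ∈ latt Λ f := by
  refine ⟨⟨?_, ?_, ?_⟩, ?_⟩
  · intro i
    rcases hε i with h | h
    · simpa [h] using hf.mem i
    · simpa [h] using hf.mem i
  · intro i j
    rw [inner_smul_left, inner_smul_right, hf.orth]
    split_ifs with h
    · subst h
      rcases hε i with h | h <;> simp [h]
    · simp
  · intro i j
    rcases hε i with h | h <;> rcases hε j with h' | h'
    · simpa [h, h'] using hf.dif i j
    · have := Λ.add_mem (hf.dif i j) (hf.mem j)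
      convert this using 1
      simp [h, h']
      module
    · have := Λ.add_mem (hf.dif j i) (Λ.neg_mem (hf.mem j))
      convert this using 1
      simp [h, h']
      module
    · have := hf.dif j i
      convert this using 1
      simp [h, h']
      module
  · intro x
    rw [mem_latt, mem_latt]
    have : fvec (fun i => (ε i : ℝ) • f i) (fun i => (x i : ℝ)) =
        fvec f (fun i => ((ε i * x i : ℤ) : ℝ)) := by
      simp only [fvec]
      refine Finset.sum_congr rfl fun i _ => ?_
      rw [smul_smul]
      push_cast
      congr 1
      ring
    rw [this]

/-- relabelling a frame -/
lemma FrameL.relabel (hf : FrameL Λ f) (e : Fin 24 ≃ Fin 24) :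
    FrameL Λ (fun i => f (e i)) ∧
      ∀ x : Fin 24 → ℤ, (fun i => x (e i)) ∈ latt Λ (fun i => f (e i)) ↔ x ∈ latt Λ f := by
  refine ⟨⟨fun i => hf.mem _, fun i j => ?_, fun i j => hf.dif _ _⟩, fun x => ?_⟩
  · rw [hf.orth]; simp
  · rw [mem_latt, mem_latt]
    have : fvec (fun i => f (e i)) (fun i => (x (e i) : ℝ)) = fvec f (fun i => (x i : ℝ)) := by
      simp only [fvec]
      exact Equiv.sum_comp e (fun i => ((x i : ℝ) / 8) • f i)
    rw [this]
end

end LeechPol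

namespace LeechPol
open Module
open scoped RealInnerProductSpace
set_option linter.unusedSectionVars false
set_option linter.unusedSimpArgs false

section
variable {L : AddSubgroup (Fin 24 → ℤ)}

lemma FrmL.single8 (h : FrmL L) (i : Fin 24) : (Pi.single i 8 : Fin 24 → ℤ) ∈ L := by
  apply h.sd
  intro y _
  rw [Finset.sum_eq_single i]
  · simp
  · intro j _ hj; simp [hj]
  · simp

lemma FrmL.four_sub (h : FrmL L) {y : Fin 24 → ℤ} (hy : y ∈ L) (i j : Fin 24) :
    (2 : ℤ) ∣ y i - y j := by
  have := h.ip _ (h.dif i j) _ hy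
  have e : ∑ k, (Pi.single i 4 - Pi.single j 4 : Fin 24 → ℤ) k * y k = 4 * (y i - y j) := by
    simp only [Pi.sub_apply, sub_mul, Finset.sum_sub_distrib, Pi.single_apply, ite_mul, zero_mul,
      Finset.sum_ite_eq', Finset.mem_univ, if_true]
    ring
  rw [e] at this
  omega

lemma FrmL.d4 (h : FrmL L) (z : Fin 24 → ℤ) (hz : (2 : ℤ) ∣ ∑ i, z i) :
    (fun i => 4 * z i) ∈ L := by
  obtain ⟨k, hk⟩ := hz
  have e : (fun i => 4 * z i) = (∑ i, z i • (Pi.single i 4 - Pi.single 0 4 : Fin 24 → ℤ)) +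
      k • (Pi.single 0 8 : Fin 24 → ℤ) := by
    have e2 : (∑ i, z i • (Pi.single i 4 - Pi.single 0 4 : Fin 24 → ℤ)) =
        (fun i => 4 * z i) - (2 * k) • (Pi.single 0 4 : Fin 24 → ℤ) := by
      rw [← hk]
      simp only [smul_sub, Finset.sum_sub_distrib, Finset.sum_smul]
      congr 1
      funext j
      simp [Finset.sum_apply, Pi.single_apply]
      ring
    rw [e2]
    funext j
    simp only [Pi.add_apply, Pi.sub_apply, Pi.smul_apply, Pi.single_apply, smul_eq_mul]
    split_ifs <;> ring
  rw [e]
  exact L.add_mem (L.sum_mem fun i _ => L.zsmul_mem (h.dif i 0) _) (L.zsmul_mem (h.single8 0) _)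

lemma FrmL.exists_odd (h : FrmL L) : ∃ x ∈ L, ∀ i, x i % 2 = 1 := by
  by_contra hc
  push Not at hc
  have hev : ∀ y ∈ L, (2 : ℤ) ∣ y 0 := by
    intro y hy
    obtain ⟨i, hi⟩ := hc y hy
    have := h.four_sub hy i 0
    omega
  have h4 : (Pi.single 0 4 : Fin 24 → ℤ) ∈ L := by
    apply h.sd
    intro y hy
    have := hev y hy
    simp only [Pi.single_apply, ite_mul, zero_mul, Finset.sum_ite_eq', Finset.mem_univ, if_true]
    omega
  have := h.mn _ h4 (by
    intro h0
    have := congrFun h0 0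
    simp at this)
  simp [Pi.single_apply] at this

/-- the distinguished odd vector -/
def uvec : Fin 24 → ℤ := fun i => if i = 0 then -3 else 1

lemma FrmL.uvec_mem (h : FrmL L) {x : Fin 24 → ℤ} (hx : x ∈ L) (h1 : ∀ i, (4 : ℤ) ∣ x i - 1) :
    uvec ∈ L := by
  choose z hz using h1
  by_cases hs : (2 : ℤ) ∣ ∑ i, z i
  · exfalso
    have h1 : (fun _ => 1 : Fin 24 → ℤ) ∈ L := by
      have := L.sub_mem hx (h.d4 z hs)
      convert this using 1
      funext i
      have := hz i
      simp only [Pi.sub_apply]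
      omega
    have := h.mn _ h1 (by
      intro h0
      have := congrFun h0 0
      simp at this)
    simp at this
  · have h2 : (2 : ℤ) ∣ ∑ i, (z + Pi.single 0 1 : Fin 24 → ℤ) i := by
      simp only [Pi.add_apply, Finset.sum_add_distrib, Pi.single_apply, Finset.sum_ite_eq',
        Finset.mem_univ, if_true]
      omega
    have := L.sub_mem hx (h.d4 _ h2)
    convert this using 1
    funext i
    have := hz i
    simp only [Pi.sub_apply, Pi.add_apply, Pi.single_apply, uvec]
    split_ifs <;> omega

/-- binary words as integer vectors -/
def lft (c : Fin 24 → ZMod 2) : Fin 24 → ℤ := fun i => ((c i).val : ℤ)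

/-- reduction mod two -/
def rdc (w : Fin 24 → ℤ) : Fin 24 → ZMod 2 := fun i => (w i : ZMod 2)

lemma rdc_lft (c : Fin 24 → ZMod 2) : rdc (lft c) = c := by
  funext i; simp [rdc, lft]

lemma lft_rdc (w : Fin 24 → ℤ) (i : Fin 24) : lft (rdc w) i = w i % 2 := by
  change (((w i : ZMod 2).val : ℕ) : ℤ) = _
  rw [ZMod.val_intCast]; rfl

lemma lft_sq (c : Fin 24 → ZMod 2) (i : Fin 24) : lft c i * lft c i = lft c i := by
  have : ∀ a : ZMod 2, ((a.val : ℤ)) * a.val = a.val := by decide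
  exact this _

lemma lft_sum (c : Fin 24 → ZMod 2) : ∑ i, lft c i = (hammingNorm c : ℤ) := by
  have : ∀ a : ZMod 2, ((a.val : ℤ)) = if a ≠ 0 then 1 else 0 := by decide
  simp only [lft, this, hammingNorm]
  rw [Finset.sum_boole]

lemma sum_uvec (y : Fin 24 → ℤ) : ∑ i, y i * uvec i = ∑ i, y i - 4 * y 0 := by
  have : ∀ i, y i * uvec i = y i - (if i = 0 then 4 * y i else 0) := by
    intro i; unfold uvec; split_ifs <;> ring
  simp only [this, Finset.sum_sub_distrib, Finset.sum_ite_eq', Finset.mem_univ, if_true]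

lemma FrmL.rdc_mem (h : FrmL L) (hu : uvec ∈ L) {w : Fin 24 → ℤ} (hw : (fun i => 2 * w i) ∈ L) :
    (fun i => 2 * lft (rdc w) i) ∈ L := by
  have h1 := h.ip _ hw _ hu
  rw [sum_uvec, ← Finset.mul_sum] at h1
  have h2 := h.ev _ hw
  have e2 : ∑ i, 2 * w i * (2 * w i) = 4 * ∑ i, w i * w i := by
    rw [Finset.mul_sum]; refine Finset.sum_congr rfl fun i _ => ?_; ring
  rw [e2] at h2
  have h3 : (4 : ℤ) ∣ ∑ i, w i * w i - ∑ i, lft (rdc w) i := by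
    rw [← Finset.sum_sub_distrib]
    refine Finset.dvd_sum fun i _ => ?_
    rw [lft_rdc]
    obtain ⟨k, hk⟩ : ∃ k, w i = 2 * k + w i % 2 := ⟨w i / 2, by omega⟩
    rcases Int.emod_two_eq_zero_or_one (w i) with h0 | h0 <;> rw [h0] at hk ⊢ <;> rw [hk]
    · exact ⟨k * k, by ring⟩
    · exact ⟨k * k + k, by ring⟩
  have h4 : ∑ i, w i = ∑ i, lft (rdc w) i + 2 * ∑ i, w i / 2 := by
    rw [Finset.mul_sum, ← Finset.sum_add_distrib]
    refine Finset.sum_congr rfl fun i _ => ?_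
    rw [lft_rdc]; omega
  have h5 : (2 : ℤ) ∣ ∑ i, w i / 2 := by omega
  have := L.sub_mem hw (h.d4 _ h5)
  convert this using 1
  funext i
  simp only [Pi.sub_apply]
  rw [lft_rdc]; omega

/-- Extended binary Golay codes. -/
structure Golay {ι : Type*} [Fintype ι] (C : Submodule (ZMod 2) (ι → ZMod 2)) : Prop where
  de : ∀ c ∈ C, 4 ∣ hammingNorm c
  mn : ∀ c ∈ C, c ≠ 0 → 8 ≤ hammingNorm c
  one : (fun _ => 1) ∈ C
  sd : ∀ d, (∀ c ∈ C, ∑ i, d i * c i = 0) → d ∈ C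

/-- the code of a coordinate lattice -/
def codeOf (h : FrmL L) (hu : uvec ∈ L) : Submodule (ZMod 2) (Fin 24 → ZMod 2) :=
  AddSubgroup.toZModSubmodule 2
  { carrier := {c | (fun i => 2 * lft c i) ∈ L}
    zero_mem' := by
      have : (fun i => 2 * lft 0 i) = 0 := by funext i; simp [lft]
      change (fun i => 2 * lft 0 i) ∈ L
      rw [this]; exact L.zero_mem
    add_mem' := by
      intro c d hc hd
      have := h.rdc_mem hu (w := lft c + lft d) (by
        have := L.add_mem hc hd
        convert this using 1
        funext i; simp; ring)
      have e : rdc (lft c + lft d) = c + d := by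
        funext i; simp [rdc, lft]
      rw [e] at this
      exact this
    neg_mem' := by
      intro c hc
      have : -c = c := by funext i; exact ZMod.neg_eq_self_mod_two _
      rw [this]; exact hc }

lemma mem_codeOf (h : FrmL L) (hu : uvec ∈ L) (c : Fin 24 → ZMod 2) :
    c ∈ codeOf h hu ↔ (fun i => 2 * lft c i) ∈ L := Iff.rfl

lemma FrmL.golay (h : FrmL L) (hu : uvec ∈ L) : Golay (codeOf h hu) := by
  have hn : ∀ c, ∑ i, 2 * lft c i * (2 * lft c i) = 4 * (hammingNorm c : ℤ) := by
    intro c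
    rw [← lft_sum, Finset.mul_sum]
    refine Finset.sum_congr rfl fun i _ => ?_
    have := lft_sq c i
    linear_combination 4 * this
  refine ⟨?_, ?_, ?_, ?_⟩
  · intro c hc
    have := h.ev _ hc
    rw [hn] at this
    omega
  · intro c hc hc0
    have := h.mn _ hc (by
      intro h0
      apply hc0
      rw [← rdc_lft c]
      funext i
      have := congrFun h0 i
      simp at this
      simp [rdc, this])
    rw [hn] at this
    omega
  · rw [mem_codeOf]
    have := h.rdc_mem hu (w := uvec) (by
      convert L.add_mem hu hu using 1
      funext i; simp; ring)
    convert this using 4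
    funext i
    simp only [rdc, uvec]
    split_ifs <;> decide
  · intro d hd
    have hw : ∀ w : Fin 24 → ℤ, (fun i => 2 * w i) ∈ L → (2 : ℤ) ∣ ∑ i, lft d i * w i := by
      intro w hw
      have h1 := hd (rdc w) (h.rdc_mem hu hw)
      apply (ZMod.intCast_zmod_eq_zero_iff_dvd _ 2).mp
      rw [← h1]
      push_cast
      refine Finset.sum_congr rfl fun i _ => ?_
      simp [lft, rdc]
    obtain ⟨t, ht⟩ := hw (fun i => uvec i) (by
      convert L.add_mem hu hu using 1
      funext i; simp; ring)
    rw [sum_uvec] at ht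
    set t' := t + 2 * lft d 0 with ht'
    have hs : ∑ i, lft d i = 2 * t' := by rw [ht']; linarith
    have hmem : (fun i => 2 * (lft d + Pi.single 0 (2 * t') : Fin 24 → ℤ) i) ∈ L := by
      apply h.sd
      have hip : ∀ y : Fin 24 → ℤ,
          ∑ i, 2 * (lft d + Pi.single 0 (2 * t') : Fin 24 → ℤ) i * y i =
          2 * ∑ i, lft d i * y i + 4 * t' * y 0 := by
        intro y
        simp only [Pi.add_apply, mul_add, add_mul, Finset.sum_add_distrib]
        congr 1
        · rw [Finset.mul_sum]; refine Finset.sum_congr rfl fun i _ => ?_; ring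
        · rw [Finset.sum_eq_single 0]
          · rw [Pi.single_eq_same]; ring
          · intro j _ hj; simp [hj]
          · simp
      have heven : ∀ w : Fin 24 → ℤ, (fun i => 2 * w i) ∈ L →
          (8 : ℤ) ∣ ∑ i, 2 * (lft d + Pi.single 0 (2 * t') : Fin 24 → ℤ) i * (2 * w i) := by
        intro w hwL
        obtain ⟨k, hk⟩ := hw w hwL
        rw [hip]
        have : ∑ i, lft d i * (2 * w i) = 2 * ∑ i, lft d i * w i := by
          rw [Finset.mul_sum]; refine Finset.sum_congr rfl fun i _ => ?_; ring
        rw [this, hk]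
        exact ⟨k + t' * w 0, by ring⟩
      have hue : (8 : ℤ) ∣ ∑ i, 2 * (lft d + Pi.single 0 (2 * t') : Fin 24 → ℤ) i * uvec i := by
        rw [hip, sum_uvec, hs]
        have : uvec 0 = -3 := rfl
        rw [this]
        exact ⟨- t' - lft d 0, by ring⟩
      intro y hy
      rcases Int.emod_two_eq_zero_or_one (y 0) with h0 | h0
      · have : y = fun i => 2 * (y i / 2) := by
          funext i
          have := h.four_sub hy i 0
          omega
        rw [this]
        apply heven
        rw [← this]; exact hy
      · have : y = fun i => uvec i + 2 * ((y i - uvec i) / 2) := by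
          funext i
          have := h.four_sub hy i 0
          have h2 := h.four_sub hu i 0
          have : uvec 0 = -3 := rfl
          omega
        have h2 := heven (fun i => (y i - uvec i) / 2) (by
          convert L.sub_mem hy hu using 1
          funext i
          have := congrFun this i
          simp only [Pi.sub_apply]
          omega)
        rw [this]
        simp only [mul_add, Finset.sum_add_distrib] at h2 hue ⊢
        exact dvd_add hue h2
    have := h.rdc_mem hu hmem
    have e : rdc (lft d + Pi.single 0 (2 * t')) = d := by
      funext i
      have h20 : (2 : ZMod 2) = 0 := rfl
      by_cases hi : i = 0
      · subst hi; simp [rdc, lft, h20]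
      · simp [rdc, lft, hi]
    rw [e] at this
    exact this
end

section
variable [FiniteDimensional ℝ V]
  {Λ : AddSubgroup V} {f : Fin 24 → V}

lemma FrameL.exists_normal (hf : FrameL Λ f) (hΛ : LeechL Λ) (hdim : finrank ℝ V = 24) :
    ∃ g, FrameL Λ g ∧ uvec ∈ latt Λ g := by
  obtain ⟨x, hx, hodd⟩ := (hf.frm hΛ hdim).exists_odd
  obtain ⟨hg, hm⟩ := hf.resign (fun i => if x i % 4 = 1 then 1 else -1) (by
    intro i; split_ifs <;> simp)
  refine ⟨_, hg, (hg.frm hΛ hdim).uvec_mem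
    (x := fun i => (if x i % 4 = 1 then 1 else -1) * x i) ?_ ?_⟩
  · rw [hm]
    convert hx using 1
    funext i
    split_ifs <;> ring
  · intro i
    have := hodd i
    split_ifs <;> omega
end

end LeechPol

namespace LeechPol
open Module
set_option linter.unusedSectionVars false
set_option linter.unusedSimpArgs false

section
variable {C : Submodule (ZMod 2) (Fin 24 → ZMod 2)}

/-- weight on a subset -/
def wt (S : Finset (Fin 24)) (c : Fin 24 → ZMod 2) : ℕ := ∑ i ∈ S, (c i).val

/-- indicator word -/
def ind (S : Finset (Fin 24)) : Fin 24 → ZMod 2 := fun i => if i ∈ S then 1 else 0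

lemma wt_univ (c : Fin 24 → ZMod 2) : wt Finset.univ c = hammingNorm c := by
  have := lft_sum c
  simp only [lft] at this
  unfold wt
  exact_mod_cast this

lemma wt_add (S : Finset (Fin 24)) (c d : Fin 24 → ZMod 2) :
    wt S (c + d) + 2 * wt S (c * d) = wt S c + wt S d := by
  have : ∀ a b : ZMod 2, (a + b).val + 2 * (a * b).val = a.val + b.val := by decide
  simp only [wt, Finset.mul_sum, ← Finset.sum_add_distrib, Pi.add_apply, Pi.mul_apply, this]

lemma wt_mul_ge (S : Finset (Fin 24)) (c d : Fin 24 → ZMod 2) :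
    wt S c + wt S d ≤ wt S (c * d) + S.card := by
  have : ∀ a b : ZMod 2, a.val + b.val ≤ (a * b).val + 1 := by decide
  rw [Finset.card_eq_sum_ones]
  simp only [wt, ← Finset.sum_add_distrib]
  exact Finset.sum_le_sum fun i _ => this _ _

lemma wt_le (S : Finset (Fin 24)) (c : Fin 24 → ZMod 2) : wt S c ≤ S.card := by
  have : ∀ a : ZMod 2, a.val ≤ 1 := by decide
  rw [Finset.card_eq_sum_ones]
  exact Finset.sum_le_sum fun i _ => this _

lemma wt_congr {S : Finset (Fin 24)} {c d : Fin 24 → ZMod 2} (h : ∀ i ∈ S, c i = d i) :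
    wt S c = wt S d := Finset.sum_congr rfl fun i hi => by rw [h i hi]

lemma wt_zero (S : Finset (Fin 24)) : wt S 0 = 0 := by simp [wt]

lemma wt_one (S : Finset (Fin 24)) : wt S (fun _ => 1) = S.card := by
  simp [wt, ZMod.val_one]

lemma wt_eq_zero {S : Finset (Fin 24)} {c : Fin 24 → ZMod 2} (h : wt S c = 0) :
    ∀ i ∈ S, c i = 0 := by
  intro i hi
  have := (Finset.sum_eq_zero_iff.mp h) i hi
  simpa using this

lemma wt_add_one (S : Finset (Fin 24)) (c : Fin 24 → ZMod 2) :
    wt S (c + fun _ => 1) + wt S c = S.card := by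
  have : ∀ a : ZMod 2, (a + 1).val + a.val = 1 := by decide
  simp only [wt, ← Finset.sum_add_distrib, Pi.add_apply, this]
  simp

lemma wt_eq_card {S : Finset (Fin 24)} {c : Fin 24 → ZMod 2} (h : wt S c = S.card) :
    ∀ i ∈ S, c i = 1 := by
  intro i hi
  have h1 := wt_add_one S c
  have h2 : wt S (c + fun _ => 1) = 0 := by omega
  have := wt_eq_zero h2 i hi
  revert this
  have : ∀ a : ZMod 2, a + 1 = 0 → a = 1 := by decide
  exact this _

lemma wt_cast (S : Finset (Fin 24)) (c : Fin 24 → ZMod 2) :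
    ((wt S c : ℕ) : ZMod 2) = ∑ i ∈ S, c i := by
  simp [wt]

lemma wt_union {S T : Finset (Fin 24)} (h : Disjoint S T) (c : Fin 24 → ZMod 2) :
    wt (S ∪ T) c = wt S c + wt T c := Finset.sum_union h

lemma wt_compl (S : Finset (Fin 24)) (c : Fin 24 → ZMod 2) :
    wt S c + wt Sᶜ c = hammingNorm c := by
  rw [← wt_univ]; exact Finset.sum_add_sum_compl S _

lemma wt_two {S : Finset (Fin 24)} {c : Fin 24 → ZMod 2} (h : 2 ≤ wt S c) :
    ∃ p ∈ S, ∃ q ∈ S, p ≠ q ∧ c p = 1 ∧ c q = 1 := by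
  have e : wt S c = (S.filter (fun i => c i = 1)).card := by
    rw [Finset.card_filter]
    have : ∀ a : ZMod 2, a.val = if a = 1 then 1 else 0 := by decide
    exact Finset.sum_congr rfl fun i _ => this _
  rw [e] at h
  obtain ⟨p, hp, q, hq, hpq⟩ := Finset.one_lt_card.mp h
  simp only [Finset.mem_filter] at hp hq
  exact ⟨p, hp.1, q, hq.1, hpq, hp.2, hq.2⟩

lemma Golay.orth (h : Golay C) {c d : Fin 24 → ZMod 2} (hc : c ∈ C) (hd : d ∈ C) :
    ∑ i, c i * d i = 0 := by
  have h1 := h.de _ hc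
  have h2 := h.de _ hd
  have h3 := h.de _ (C.add_mem hc hd)
  have h4 := wt_add Finset.univ c d
  rw [wt_univ (c + d), wt_univ c, wt_univ d] at h4
  have h5 : 2 ∣ wt Finset.univ (c * d) := by omega
  have h6 := wt_cast Finset.univ (c * d)
  rw [(ZMod.natCast_eq_zero_iff _ 2).mpr h5] at h6
  exact h6.symm

lemma Golay.ext (h : Golay C) (S : Finset (Fin 24)) (u : Fin 24 → ZMod 2)
    (hu : ∀ c ∈ C, (∀ i, i ∉ S → c i = 0) → ∑ i, c i * u i = 0) :
    ∃ c ∈ C, ∀ i ∈ S, c i = u i := by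
  let Z : Submodule (ZMod 2) (Fin 24 → ZMod 2) :=
    { carrier := {x | ∀ i ∈ S, x i = 0}
      zero_mem' := fun i _ => rfl
      add_mem' := fun {a b} ha hb i hi => by simp [ha i hi, hb i hi]
      smul_mem' := fun r a ha i hi => by simp [ha i hi] }
  by_cases hm : u ∈ C ⊔ Z
  · obtain ⟨c, hc, z, hz, hcz⟩ := Submodule.mem_sup.mp hm
    refine ⟨c, hc, fun i hi => ?_⟩
    have := congrFun hcz i
    rw [← this, Pi.add_apply, hz i hi, add_zero]
  · exfalso
    obtain ⟨φ, hφu, hφ⟩ := Submodule.exists_dual_map_eq_bot_of_notMem hm inferInstance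
    have hφ0 : ∀ x ∈ C ⊔ Z, φ x = 0 := by
      intro x hx
      have : φ x ∈ (C ⊔ Z).map φ := Submodule.mem_map_of_mem hx
      rw [hφ] at this
      simpa using this
    have hrep : ∀ x : Fin 24 → ZMod 2, φ x = ∑ i, φ (Pi.single i 1) * x i := by
      intro x
      conv_lhs => rw [pi_eq_sum_univ' x]
      rw [map_sum]
      refine Finset.sum_congr rfl fun i _ => ?_
      rw [map_smul, smul_eq_mul, mul_comm]
    have hd : (fun i => φ (Pi.single i 1)) ∈ C := by
      apply h.sd
      intro c hc
      rw [← hrep]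
      exact hφ0 _ (Submodule.mem_sup_left hc)
    apply hφu
    rw [hrep]
    apply hu _ hd
    intro i hi
    apply hφ0
    apply Submodule.mem_sup_right
    intro j hj
    have : j ≠ i := by rintro rfl; exact hi hj
    simp [this]

lemma Golay.cases (h : Golay C) {c : Fin 24 → ZMod 2} (hc : c ∈ C) :
    4 ∣ hammingNorm c ∧ (hammingNorm c = 0 ∨ 8 ≤ hammingNorm c) := by
  refine ⟨h.de c hc, ?_⟩
  by_cases h0 : c = 0
  · left; simp [h0]
  · right; exact h.mn c hc h0

lemma wt_of_supp {S : Finset (Fin 24)} {c : Fin 24 → ZMod 2} (h : ∀ i, i ∉ S → c i = 0) :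
    wt S c = hammingNorm c := by
  rw [← wt_compl S]
  have : wt Sᶜ c = 0 := by
    rw [← wt_zero Sᶜ]
    exact wt_congr fun i hi => h i (by simpa using hi)
  omega

lemma wt_single {S : Finset (Fin 24)} {p : Fin 24} (hp : p ∈ S) : wt S (Pi.single p 1) = 1 := by
  unfold wt
  rw [Finset.sum_eq_single p]
  · simp [ZMod.val_one]
  · intro j _ hj; simp [hj]
  · intro h; exact absurd hp h

/-- octads exist -/
lemma Golay.octad (h : Golay C) : ∃ c ∈ C, hammingNorm c = 8 := by
  by_contra hcon
  push Not at hcon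
  let S : Finset (Fin 24) := Finset.univ.filter (fun i => i.val < 11)
  have hS : S.card = 11 := by decide
  have hSc : Sᶜ.card = 13 := by decide
  have hz : ∀ c ∈ C, (∀ i, i ∉ S → c i = 0) → c = 0 := by
    intro c hc hcS
    have h1 := wt_of_supp hcS
    have h2 := wt_le S c
    have h3 := hcon c hc
    have h4 := h.cases hc
    by_contra h0
    have := h.mn c hc h0
    omega
  have key : ∀ p ∈ S, ∃ c ∈ C, (∀ i ∈ S, c i = (Pi.single p 1 : Fin 24 → ZMod 2) i) ∧
      wt Sᶜ c = 11 := by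
    intro p hp
    obtain ⟨c, hc, hcS⟩ := h.ext S (Pi.single p 1) (by
      intro c hc hcS
      rw [hz c hc hcS]; simp)
    refine ⟨c, hc, hcS, ?_⟩
    have h1 : wt S c = 1 := by rw [wt_congr hcS, wt_single hp]
    have h2 := wt_compl S c
    have h3 := wt_le Sᶜ c
    have h4 := h.cases hc
    have h5 := hcon c hc
    omega
  obtain ⟨c, hc, hcS, hc1⟩ := key 0 (by decide)
  obtain ⟨d, hd, hdS, hd1⟩ := key 1 (by decide)
  have h1 : wt S (c + d) = 2 := by
    rw [wt_congr (d := Pi.single 0 1 + Pi.single 1 1) (fun i hi => by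
      simp only [Pi.add_apply, hcS i hi, hdS i hi])]
    decide
  have h2 := wt_add Sᶜ c d
  have h3 := wt_mul_ge Sᶜ c d
  have h4 := wt_compl S (c + d)
  have h5 := h.cases (C.add_mem hc hd)
  omega

/-- Trios of octads. -/
structure Trio (C : Submodule (ZMod 2) (Fin 24 → ZMod 2)) (O : Fin 3 → Finset (Fin 24)) :
    Prop where
  card : ∀ k, (O k).card = 8
  disj : ∀ k l, k ≠ l → Disjoint (O k) (O l)
  mem : ∀ k, ind (O k) ∈ C
  wts : ∀ c, hammingNorm c = wt (O 0) c + wt (O 1) c + wt (O 2) c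

lemma ind_supp (c : Fin 24 → ZMod 2) : ind (Finset.univ.filter (fun i => c i = 1)) = c := by
  funext i
  simp only [ind, Finset.mem_filter, Finset.mem_univ, true_and]
  have : ∀ a : ZMod 2, (if a = 1 then 1 else 0) = a := by decide
  exact this _

lemma card_supp (c : Fin 24 → ZMod 2) :
    (Finset.univ.filter (fun i => c i = 1)).card = hammingNorm c := by
  rw [← wt_univ, Finset.card_filter]
  have : ∀ a : ZMod 2, a.val = if a = 1 then 1 else 0 := by decide
  exact (Finset.sum_congr rfl fun i _ => this _).symm

lemma Golay.trio (h : Golay C) : ∃ O, Trio C O := by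
  obtain ⟨o, ho, ho8⟩ := h.octad
  set A := Finset.univ.filter (fun i => o i = 1) with hA
  have hAo : ind A = o := ind_supp o
  have hAc : A.card = 8 := by rw [hA, card_supp, ho8]
  have hAc' : Aᶜ.card = 16 := by rw [Finset.card_compl, hAc]; simp
  have z2 : ∀ a : ZMod 2, a ≠ 1 → a = 0 := by decide
  have hAi : ∀ i, i ∈ A ↔ o i = 1 := by intro i; simp [hA]
  have hoA : wt A o = 8 := by
    rw [← hAc, ← wt_one A]; exact wt_congr fun i hi => (hAi i).mp hi
  have hoA' : wt Aᶜ o = 0 := by have := wt_compl A o; omega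
  obtain ⟨c, hc, hcA, hc0, hc1⟩ : ∃ c ∈ C, (∀ i, i ∉ Aᶜ → c i = 0) ∧ c ≠ 0 ∧
      c + o + (fun _ => 1) ≠ 0 := by
    by_contra hcon
    push Not at hcon
    obtain ⟨p, hp, q, hq, hpq⟩ := Finset.one_lt_card.mp (show 1 < Aᶜ.card by omega)
    obtain ⟨d, hd, hdS⟩ := h.ext Aᶜ (Pi.single p 1 + Pi.single q 1) (by
      intro c hc hcS
      by_cases h0 : c = 0
      · simp [h0]
      · have h1 := hcon c hc hcS h0
        have hval : ∀ i ∈ Aᶜ, c i = 1 := by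
          intro i hi
          have h2 := congrFun h1 i
          have h3 : o i = 0 := z2 _ (fun h => (Finset.mem_compl.mp hi) ((hAi i).mpr h))
          simp only [Pi.add_apply, h3, add_zero, Pi.zero_apply] at h2
          revert h2
          have : ∀ a : ZMod 2, a + 1 = 0 → a = 1 := by decide
          exact this _
        simp only [Pi.add_apply, mul_add, Finset.sum_add_distrib, Pi.single_apply, mul_ite,
          mul_one, mul_zero, Finset.sum_ite_eq', Finset.mem_univ, if_true, hval p hp, hval q hq]
        decide)
    have h1 : wt Aᶜ d = 2 := by
      rw [wt_congr hdS]
      have h1 := wt_add Aᶜ (Pi.single p 1) (Pi.single q 1)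
      have h2 : (Pi.single p 1 * Pi.single q 1 : Fin 24 → ZMod 2) = 0 := by
        funext i
        simp only [Pi.mul_apply, Pi.single_apply]
        split_ifs with ha hb
        · exact absurd (ha.symm.trans hb) hpq
        all_goals simp
      rw [h2, wt_zero, wt_single hp, wt_single hq] at h1
      omega
    have h2 := wt_compl A d
    have h3 := h.cases hd
    have h4 := h.cases (C.add_mem hd ho)
    have h5 := wt_compl A (d + o)
    have h6 := wt_add A d o
    have h7 := wt_add Aᶜ d o
    have h8 : wt A (d * o) = wt A d := wt_congr fun i hi => by simp [(hAi i).mp hi]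
    have h9 := wt_le A d
    omega
  have hcA0 : wt A c = 0 := by
    rw [← wt_zero A]; exact wt_congr fun i hi => hcA i (by simpa using hi)
  have hAA := wt_compl A c
  have hm1 := h.mn c hc hc0
  have hd : c + o + (fun _ => 1) ∈ C := C.add_mem (C.add_mem hc ho) h.one
  have hm2 := h.mn _ hd hc1
  have hco : ∀ i, c i * o i = 0 := by
    intro i
    by_cases hi : i ∈ A
    · rw [hcA i (by simpa using hi), zero_mul]
    · rw [z2 (o i) (fun h => hi ((hAi i).mpr h)), mul_zero]
  have h1 := wt_add Finset.univ c o
  have hcoz : c * o = 0 := funext hco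
  rw [hcoz, wt_zero, wt_univ, wt_univ, wt_univ] at h1
  have h2 := wt_add_one Finset.univ (c + o)
  rw [wt_univ, wt_univ] at h2
  simp only [Finset.card_univ, Fintype.card_fin] at h2
  set d := c + o + (fun _ => 1) with hdd
  have hpt : ∀ a b : ZMod 2, a * b = 0 → (b = 1 ∧ a ≠ 1 ∧ a + b + 1 ≠ 1) ∨
     (b ≠ 1 ∧ a = 1 ∧ a + b + 1 ≠ 1) ∨ (b ≠ 1 ∧ a ≠ 1 ∧ a + b + 1 = 1) := by decide
  have hpd : ∀ i, d i = c i + o i + 1 := fun i => rfl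
  refine ⟨![A, Finset.univ.filter (fun i => c i = 1), Finset.univ.filter (fun i => d i = 1)],
    ?_, ?_, ?_, ?_⟩
  · intro k
    fin_cases k
    · exact hAc
    · change (Finset.univ.filter (fun i => c i = 1)).card = 8
      rw [card_supp]; omega
    · change (Finset.univ.filter (fun i => d i = 1)).card = 8
      rw [card_supp]; omega
  · have hdis : ∀ i, _ := fun i => hpt (c i) (o i) (hco i)
    intro k l hkl
    rw [Finset.disjoint_left]
    intro i
    have hi := hdis i
    rw [← hpd] at hi
    fin_cases k <;> fin_cases l <;> simp [hA] at hkl ⊢ <;> tauto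
  · intro k
    fin_cases k
    · change ind A ∈ C
      rw [hAo]; exact ho
    · change ind (Finset.univ.filter (fun i => c i = 1)) ∈ C
      rw [ind_supp]; exact hc
    · change ind (Finset.univ.filter (fun i => d i = 1)) ∈ C
      rw [ind_supp]; exact hd
  · intro x
    rw [← wt_univ]
    change _ = wt A x + wt (Finset.univ.filter (fun i => c i = 1)) x +
      wt (Finset.univ.filter (fun i => d i = 1)) x
    simp only [wt, hA, Finset.sum_filter, ← Finset.sum_add_distrib]
    refine Finset.sum_congr rfl fun i _ => ?_
    have hi := hpt (c i) (o i) (hco i)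
    rw [← hpd] at hi
    rcases hi with ⟨h1, h2, h3⟩ | ⟨h1, h2, h3⟩ | ⟨h1, h2, h3⟩ <;> simp [h1, h2, h3]
end

end LeechPol

namespace LeechPol
open Module
set_option linter.unusedSectionVars false
set_option linter.unusedSimpArgs false

/-- Unbundled trios. -/
structure Tri (C : Submodule (ZMod 2) (Fin 24 → ZMod 2)) (A B D : Finset (Fin 24)) : Prop where
  cA : A.card = 8
  cB : B.card = 8
  cD : D.card = 8
  dAB : Disjoint A B
  dAD : Disjoint A D
  dBD : Disjoint B D
  mA : ind A ∈ C
  mB : ind B ∈ C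
  mD : ind D ∈ C
  wts : ∀ c, hammingNorm c = wt A c + wt B c + wt D c

section
variable {C : Submodule (ZMod 2) (Fin 24 → ZMod 2)} {A B D : Finset (Fin 24)}

lemma Tri.swap12 (t : Tri C A B D) : Tri C B A D :=
  ⟨t.cB, t.cA, t.cD, t.dAB.symm, t.dBD, t.dAD, t.mB, t.mA, t.mD, fun c => by rw [t.wts]; ring⟩

lemma Tri.swap23 (t : Tri C A B D) : Tri C A D B :=
  ⟨t.cA, t.cD, t.cB, t.dAD, t.dAB, t.dBD.symm, t.mA, t.mD, t.mB, fun c => by rw [t.wts]; ring⟩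

lemma Golay.tri (h : Golay C) : ∃ A B D, Tri C A B D := by
  obtain ⟨O, t⟩ := h.trio
  exact ⟨O 0, O 1, O 2, t.card _, t.card _, t.card _, t.disj _ _ (by decide),
    t.disj _ _ (by decide), t.disj _ _ (by decide), t.mem _, t.mem _, t.mem _, t.wts⟩

lemma Tri.cov (t : Tri C A B D) (i : Fin 24) : i ∈ A ∨ i ∈ B ∨ i ∈ D := by
  by_contra hc
  push Not at hc
  have h0 : ∀ S : Finset (Fin 24), i ∉ S → wt S (Pi.single i 1) = 0 := by
    intro S hS
    rw [← wt_zero S]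
    refine wt_congr fun j hj => ?_
    have : j ≠ i := by rintro rfl; exact hS hj
    simp [this]
  have h1 := t.wts (Pi.single i 1)
  rw [h0 _ hc.1, h0 _ hc.2.1, h0 _ hc.2.2, ← wt_univ, wt_single (Finset.mem_univ i)] at h1
  omega

lemma wt_add_ind_self (S : Finset (Fin 24)) (c : Fin 24 → ZMod 2) :
    wt S (c + ind S) + wt S c = S.card := by
  rw [← wt_add_one S c]
  congr 1
  exact wt_congr fun i hi => by simp [ind, hi]

lemma wt_add_ind_disj {S T : Finset (Fin 24)} (h : Disjoint S T) (c : Fin 24 → ZMod 2) :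
    wt S (c + ind T) = wt S c :=
  wt_congr fun i hi => by simp [ind, Finset.disjoint_left.mp h hi]

lemma Tri.claim (t : Tri C A B D) (h : Golay C) {c : Fin 24 → ZMod 2} (hc : c ∈ C)
    (hz : ∀ i ∈ D, c i = 0) : 4 ∣ wt A c ∧ (wt A c = 4 ↔ wt B c = 4) := by
  have hD : ∀ d : Fin 24 → ZMod 2, (∀ i ∈ D, d i = 0) → wt D d = 0 := by
    intro d hd; rw [← wt_zero D]; exact wt_congr fun i hi => hd i hi
  have e0 := t.wts c
  rw [hD c hz] at e0
  have c0 := h.cases hc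
  have cA := h.cases (C.add_mem hc t.mA)
  have cB := h.cases (C.add_mem hc t.mB)
  have cAB := h.cases (C.add_mem (C.add_mem hc t.mA) t.mB)
  have hiA : ∀ i ∈ D, ind A i = 0 := fun i hi => by
    simp [ind, Finset.disjoint_right.mp t.dAD hi]
  have hiB : ∀ i ∈ D, ind B i = 0 := fun i hi => by
    simp [ind, Finset.disjoint_right.mp t.dBD hi]
  have eA := t.wts (c + ind A)
  have eB := t.wts (c + ind B)
  have eAB := t.wts (c + ind A + ind B)
  rw [hD _ (fun i hi => by simp [hz i hi, hiA i hi]), wt_add_ind_disj t.dAB.symm] at eA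
  rw [hD _ (fun i hi => by simp [hz i hi, hiB i hi]), wt_add_ind_disj t.dAB] at eB
  rw [hD _ (fun i hi => by simp [hz i hi, hiA i hi, hiB i hi]), wt_add_ind_disj t.dAB] at eAB
  have s1 := wt_add_ind_self A c
  have s2 := wt_add_ind_self B c
  have s3 := wt_add_ind_self B (c + ind A)
  rw [wt_add_ind_disj t.dAB.symm] at s3
  rw [t.cA] at s1
  rw [t.cB] at s2 s3
  omega

lemma Tri.four (t : Tri C A B D) (h : Golay C) {c : Fin 24 → ZMod 2} (hc : c ∈ C)
    (hz : ∀ i ∈ D, c i = 0) {p q : Fin 24} (hp : p ∈ A) (hq : q ∈ A) (h1 : c p ≠ c q) :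
    wt A c = 4 ∧ wt B c = 4 := by
  have h2 := t.claim h hc hz
  have h3 : wt A c ≠ 0 := by
    intro h0; exact h1 ((wt_eq_zero h0 p hp).trans (wt_eq_zero h0 q hq).symm)
  have h4 : wt A c ≠ 8 := by
    intro h0
    rw [← t.cA] at h0
    exact h1 ((wt_eq_card h0 p hp).trans (wt_eq_card h0 q hq).symm)
  have h5 := wt_le A c
  rw [t.cA] at h5
  omega

lemma Tri.sep (t : Tri C A B D) (h : Golay C) {p q : Fin 24} (hp : p ∈ A) (hq : q ∈ A)
    (hpq : p ≠ q) : ∃ c ∈ C, (∀ i ∈ D, c i = 0) ∧ c p = 1 ∧ c q = 0 := by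
  obtain ⟨c, hc, hcS⟩ := h.ext (D ∪ {p, q}) (Pi.single p 1) (by
    intro d hd hdS
    simp only [Pi.single_apply, mul_ite, mul_one, mul_zero, Finset.sum_ite_eq', Finset.mem_univ,
      if_true]
    by_contra hdp
    have hB : ∀ i ∈ B, d i = 0 := by
      intro i hi
      apply hdS
      have h1 := Finset.disjoint_left.mp t.dBD hi
      have h2 := Finset.disjoint_right.mp t.dAB hi
      simp only [Finset.mem_union, Finset.mem_insert, Finset.mem_singleton, not_or]
      refine ⟨h1, ?_, ?_⟩
      · rintro rfl; exact h2 hp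
      · rintro rfl; exact h2 hq
    have h1 := (t.swap23.claim h hd hB).1
    have h2 : wt A d ≠ 0 := fun h0 => hdp (wt_eq_zero h0 p hp)
    have h3 : wt A d = wt {p, q} d := by
      symm
      apply Finset.sum_subset
      · intro i hi
        simp only [Finset.mem_insert, Finset.mem_singleton] at hi
        rcases hi with rfl | rfl <;> assumption
      · intro i hi hi'
        rw [hdS i (by
          simp only [Finset.mem_union, not_or]
          exact ⟨Finset.disjoint_left.mp t.dAD hi, hi'⟩)]
        simp
    have h4 := wt_le {p, q} d
    have h5 : ({p, q} : Finset (Fin 24)).card = 2 := Finset.card_pair hpq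
    omega)
  refine ⟨c, hc, ?_, ?_, ?_⟩
  · intro i hi
    rw [hcS i (by simp [hi])]
    have : i ≠ p := by rintro rfl; exact Finset.disjoint_left.mp t.dAD hp hi
    simp [this]
  · rw [hcS p (by simp)]; simp
  · rw [hcS q (by simp)]; simp [hpq.symm]

/-- the words restrict to a labelling by `Fin 8` -/
def Lab (S : Finset (Fin 24)) (l₀ l₁ l₂ : Fin 24 → ZMod 2) : Prop :=
  wt S l₀ = 4 ∧ wt S l₁ = 4 ∧ wt S (l₀ + l₁) = 4 ∧ wt S l₂ = 4 ∧ wt S (l₀ + l₂) = 4 ∧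
    wt S (l₁ + l₂) = 4 ∧ wt S (l₀ + l₁ + l₂) = 4

lemma Lab.congr {S : Finset (Fin 24)} {l₀ l₁ l₂ m₀ m₁ m₂ : Fin 24 → ZMod 2}
    (h : Lab S l₀ l₁ l₂) (h₀ : ∀ i ∈ S, m₀ i = l₀ i) (h₁ : ∀ i ∈ S, m₁ i = l₁ i)
    (h₂ : ∀ i ∈ S, m₂ i = l₂ i) : Lab S m₀ m₁ m₂ := by
  obtain ⟨a, b, c, d, e, f, g⟩ := h
  refine ⟨?_, ?_, ?_, ?_, ?_, ?_, ?_⟩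
  · rw [← a]; exact wt_congr fun i hi => by simp [h₀ i hi]
  · rw [← b]; exact wt_congr fun i hi => by simp [h₁ i hi]
  · rw [← c]; exact wt_congr fun i hi => by simp [h₀ i hi, h₁ i hi]
  · rw [← d]; exact wt_congr fun i hi => by simp [h₂ i hi]
  · rw [← e]; exact wt_congr fun i hi => by simp [h₀ i hi, h₂ i hi]
  · rw [← f]; exact wt_congr fun i hi => by simp [h₂ i hi, h₁ i hi]
  · rw [← g]; exact wt_congr fun i hi => by simp [h₀ i hi, h₁ i hi, h₂ i hi]

/-- the label of a point -/
def labl (l₀ l₁ l₂ : Fin 24 → ZMod 2) (i : Fin 24) : Fin 8 :=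
  Fin.ofNat 8 ((l₀ i).val + 2 * (l₁ i).val + 4 * (l₂ i).val)

lemma Lab.inj {S : Finset (Fin 24)} {l₀ l₁ l₂ : Fin 24 → ZMod 2} (h : Lab S l₀ l₁ l₂)
    (hS : S.card = 8) {i j : Fin 24} (hi : i ∈ S) (hj : j ∈ S)
    (hij : labl l₀ l₁ l₂ i = labl l₀ l₁ l₂ j) : i = j := by
  set n : Fin 8 → ℕ := fun v => (S.filter (fun i => labl l₀ l₁ l₂ i = v)).card with hn
  have fib : ∀ (w : Fin 24 → ZMod 2) (g : Fin 8 → ℕ),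
      (∀ i, (w i).val = g (labl l₀ l₁ l₂ i)) → wt S w = ∑ v, n v * g v := by
    intro w g hg
    unfold wt
    simp only [hg]
    rw [← Finset.sum_fiberwise S (labl l₀ l₁ l₂)]
    refine Finset.sum_congr rfl fun v _ => ?_
    rw [hn, ← smul_eq_mul, ← Finset.sum_const]
    refine Finset.sum_congr rfl fun i hi => ?_
    rw [(Finset.mem_filter.mp hi).2]
  have tot : ∑ v, n v = 8 := by
    have := Finset.card_eq_sum_card_fiberwise (f := labl l₀ l₁ l₂) (s := S) (t := Finset.univ)
      (by simp)
    exact this.symm.trans hS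
  obtain ⟨a, b, c, d, e, f, g⟩ := h
  have key : ∀ x y z : ZMod 2,
      x.val = ![0,1,0,1,0,1,0,1] (Fin.ofNat 8 (x.val + 2 * y.val + 4 * z.val)) ∧
      y.val = ![0,0,1,1,0,0,1,1] (Fin.ofNat 8 (x.val + 2 * y.val + 4 * z.val)) ∧
      (x + y).val = ![0,1,1,0,0,1,1,0] (Fin.ofNat 8 (x.val + 2 * y.val + 4 * z.val)) ∧
      z.val = ![0,0,0,0,1,1,1,1] (Fin.ofNat 8 (x.val + 2 * y.val + 4 * z.val)) ∧
      (x + z).val = ![0,1,0,1,1,0,1,0] (Fin.ofNat 8 (x.val + 2 * y.val + 4 * z.val)) ∧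
      (y + z).val = ![0,0,1,1,1,1,0,0] (Fin.ofNat 8 (x.val + 2 * y.val + 4 * z.val)) ∧
      (x + y + z).val = ![0,1,1,0,1,0,0,1] (Fin.ofNat 8 (x.val + 2 * y.val + 4 * z.val)) := by
    decide
  rw [fib _ ![0,1,0,1,0,1,0,1] (fun i => (key (l₀ i) (l₁ i) (l₂ i)).1)] at a
  rw [fib _ ![0,0,1,1,0,0,1,1] (fun i => (key (l₀ i) (l₁ i) (l₂ i)).2.1)] at b
  rw [fib (l₀ + l₁) ![0,1,1,0,0,1,1,0] (fun i => (key (l₀ i) (l₁ i) (l₂ i)).2.2.1)] at c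
  rw [fib _ ![0,0,0,0,1,1,1,1] (fun i => (key (l₀ i) (l₁ i) (l₂ i)).2.2.2.1)] at d
  rw [fib (l₀ + l₂) ![0,1,0,1,1,0,1,0] (fun i => (key (l₀ i) (l₁ i) (l₂ i)).2.2.2.2.1)] at e
  rw [fib (l₁ + l₂) ![0,0,1,1,1,1,0,0] (fun i => (key (l₀ i) (l₁ i) (l₂ i)).2.2.2.2.2.1)] at f
  rw [fib (l₀ + l₁ + l₂) ![0,1,1,0,1,0,0,1] (fun i => (key (l₀ i) (l₁ i) (l₂ i)).2.2.2.2.2.2)] at g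
  rw [Fin.sum_univ_eight] at a b c d e f g tot
  have t8 : ∀ (x0 x1 x2 x3 x4 x5 x6 x7 : ℕ),
    (![x0,x1,x2,x3,x4,x5,x6,x7] : Fin 8 → ℕ) 0 = x0 ∧ (![x0,x1,x2,x3,x4,x5,x6,x7] : Fin 8 → ℕ) 1 = x1 ∧
    (![x0,x1,x2,x3,x4,x5,x6,x7] : Fin 8 → ℕ) 2 = x2 ∧ (![x0,x1,x2,x3,x4,x5,x6,x7] : Fin 8 → ℕ) 3 = x3 ∧
    (![x0,x1,x2,x3,x4,x5,x6,x7] : Fin 8 → ℕ) 4 = x4 ∧ (![x0,x1,x2,x3,x4,x5,x6,x7] : Fin 8 → ℕ) 5 = x5 ∧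
    (![x0,x1,x2,x3,x4,x5,x6,x7] : Fin 8 → ℕ) 6 = x6 ∧ (![x0,x1,x2,x3,x4,x5,x6,x7] : Fin 8 → ℕ) 7 = x7 :=
    fun _ _ _ _ _ _ _ _ => ⟨rfl, rfl, rfl, rfl, rfl, rfl, rfl, rfl⟩
  simp only [t8, mul_zero, mul_one, zero_add, add_zero] at a b c d e f g
  have hle : ∀ v, n v ≤ 1 := by
    intro v
    fin_cases v <;> simp only [Fin.mk_zero, Fin.mk_one, Fin.reduceFinMk, Fin.zero_eta, Fin.isValue] <;> omega
  have := hle (labl l₀ l₁ l₂ j)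
  rw [hn] at this
  exact Finset.card_le_one.mp this i (by simp [hi, hij]) j (by simp [hj])

lemma Tri.labels (t : Tri C A B D) (h : Golay C) : ∃ a : Fin 3 → Fin 24 → ZMod 2,
    (∀ k, a k ∈ C) ∧ (∀ k, ∀ i ∈ D, a k i = 0) ∧ Lab A (a 0) (a 1) (a 2) ∧
      Lab B (a 0) (a 1) (a 2) := by
  have n11 : (1 + 1 : ZMod 2) ≠ 1 + 0 := by decide
  have n111 : (1 + 1 + 1 : ZMod 2) ≠ 1 + 1 + 0 := by decide
  obtain ⟨p, hp, q, hq, hpq⟩ := Finset.one_lt_card.mp (show 1 < A.card by rw [t.cA]; decide)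
  obtain ⟨a, ha, haD, hap, haq⟩ := t.sep h hp hq hpq
  have wa := t.four h ha haD hp hq (by rw [hap, haq]; decide)
  obtain ⟨p₁, hp₁, q₁, hq₁, hpq₁, hap₁, haq₁⟩ := wt_two (S := A) (c := a) (by omega)
  obtain ⟨b, hb, hbD, hbp, hbq⟩ := t.sep h hp₁ hq₁ hpq₁
  have wb := t.four h hb hbD hp₁ hq₁ (by rw [hbp, hbq]; decide)
  have wab := t.four h (C.add_mem ha hb) (fun i hi => by simp [haD i hi, hbD i hi]) hp₁ hq₁
    (by simp only [Pi.add_apply]; rw [hbp, hbq, hap₁, haq₁]; exact n11)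
  have hmul := wt_add A a b
  obtain ⟨p₂, hp₂, q₂, hq₂, hpq₂, hp₂', hq₂'⟩ := wt_two (S := A) (c := a * b) (by omega)
  have z2 : ∀ x y : ZMod 2, x * y = 1 → x = 1 ∧ y = 1 := by decide
  obtain ⟨hap₂, hbp₂⟩ := z2 _ _ hp₂'
  obtain ⟨haq₂, hbq₂⟩ := z2 _ _ hq₂'
  obtain ⟨c, hc, hcD, hcp, hcq⟩ := t.sep h hp₂ hq₂ hpq₂
  have wc := t.four h hc hcD hp₂ hq₂ (by rw [hcp, hcq]; decide)
  have wac := t.four h (C.add_mem ha hc) (fun i hi => by simp [haD i hi, hcD i hi]) hp₂ hq₂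
    (by simp only [Pi.add_apply]; rw [hcp, hcq, hap₂, haq₂]; exact n11)
  have wbc := t.four h (C.add_mem hb hc) (fun i hi => by simp [hbD i hi, hcD i hi]) hp₂ hq₂
    (by simp only [Pi.add_apply]; rw [hcp, hcq, hbp₂, hbq₂]; exact n11)
  have wabc := t.four h (C.add_mem (C.add_mem ha hb) hc)
    (fun i hi => by simp [haD i hi, hbD i hi, hcD i hi]) hp₂ hq₂
    (by simp only [Pi.add_apply]; rw [hcp, hcq, hbp₂, hbq₂, hap₂, haq₂]; exact n111)
  refine ⟨![a, b, c], ?_, ?_, ?_, ?_⟩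
  · intro k; fin_cases k
    · exact ha
    · exact hb
    · exact hc
  · intro k; fin_cases k
    · exact haD
    · exact hbD
    · exact hcD
  · exact ⟨wa.1, wb.1, wab.1, wc.1, wac.1, wbc.1, wabc.1⟩
  · exact ⟨wa.2, wb.2, wab.2, wc.2, wac.2, wbc.2, wabc.2⟩

lemma Tri.transfer (t : Tri C A B D) (h : Golay C) {a : Fin 24 → ZMod 2} (ha : a ∈ C)
    (haD : ∀ i ∈ D, a i = 0) :
    ∃ c ∈ C, (∀ i ∈ A, c i = a i) ∧ (∀ i ∈ B, c i = 0) := by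
  obtain ⟨c, hc, hcS⟩ := h.ext (A ∪ B) (fun i => if i ∈ A then a i else 0) (by
    intro d hd hdS
    have hdD : ∀ i ∈ D, d i = 0 := fun i hi => hdS i (by
      simp only [Finset.mem_union, not_or]
      exact ⟨Finset.disjoint_right.mp t.dAD hi, Finset.disjoint_right.mp t.dBD hi⟩)
    have h1 := (t.claim h hd hdD).1
    have h2 := (t.claim h ha haD).1
    have h3 := (t.claim h (C.add_mem hd ha) (fun i hi => by simp [hdD i hi, haD i hi])).1
    have h4 := wt_add A d a
    have h5 : 2 ∣ wt A (d * a) := by omega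
    have h6 := wt_cast A (d * a)
    rw [(ZMod.natCast_eq_zero_iff _ 2).mpr h5] at h6
    refine Eq.trans ?_ h6.symm
    simp only [mul_ite, mul_zero, ← Finset.sum_filter]
    simp)
  refine ⟨c, hc, fun i hi => ?_, fun i hi => ?_⟩
  · rw [hcS i (by simp [hi])]; simp [hi]
  · rw [hcS i (by simp [hi])]; simp [Finset.disjoint_right.mp t.dAB hi]

lemma Tri.labels3 (t : Tri C A B D) (h : Golay C) : ∃ l : Fin 3 → Fin 24 → ZMod 2,
    (∀ k, (fun i => if i ∈ D then 0 else l k i) ∈ C) ∧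
    (∀ k, (fun i => if i ∈ B then 0 else l k i) ∈ C) ∧
    Lab A (l 0) (l 1) (l 2) ∧ Lab B (l 0) (l 1) (l 2) ∧ Lab D (l 0) (l 1) (l 2) := by
  obtain ⟨a, ha, haD, hA, hB⟩ := t.labels h
  choose c hc hcA hcB using fun k => t.transfer h (ha k) (haD k)
  have nAD : ∀ i ∈ A, i ∉ D := fun i hi => Finset.disjoint_left.mp t.dAD hi
  have nBD : ∀ i ∈ B, i ∉ D := fun i hi => Finset.disjoint_left.mp t.dBD hi
  have nAB : ∀ i ∈ A, i ∉ B := fun i hi => Finset.disjoint_left.mp t.dAB hi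
  have hcL : Lab A (c 0) (c 1) (c 2) := hA.congr (hcA 0) (hcA 1) (hcA 2)
  have hcl : ∀ x ∈ C, (∀ i ∈ B, x i = 0) → wt A x = 4 → wt D x = 4 := fun x hx hxB hw =>
    (t.swap23.claim h hx hxB).2.mp hw
  have hcD : Lab D (c 0) (c 1) (c 2) := by
    obtain ⟨e1, e2, e3, e4, e5, e6, e7⟩ := hcL
    refine ⟨hcl _ (hc 0) (hcB 0) e1, hcl _ (hc 1) (hcB 1) e2, hcl _ (C.add_mem (hc 0) (hc 1)) ?_ e3,
      hcl _ (hc 2) (hcB 2) e4, hcl _ (C.add_mem (hc 0) (hc 2)) ?_ e5,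
      hcl _ (C.add_mem (hc 1) (hc 2)) ?_ e6,
      hcl _ (C.add_mem (C.add_mem (hc 0) (hc 1)) (hc 2)) ?_ e7⟩
    all_goals
      intro i hi
      simp [hcB 0 i hi, hcB 1 i hi, hcB 2 i hi]
  refine ⟨fun k i => if i ∈ D then c k i else a k i, ?_, ?_, ?_, ?_, ?_⟩
  · intro k
    convert ha k using 1
    funext i
    split_ifs with hi
    · exact (haD k i hi).symm
    · simp [hi]
  · intro k
    convert hc k using 1
    funext i
    rcases t.cov i with hi | hi | hi
    · simp [nAB i hi, nAD i hi, hcA k i hi]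
    · simp [hi, hcB k i hi]
    · have : i ∉ B := fun h' => nBD i h' hi
      simp [hi, this]
  · exact hA.congr (fun i hi => by simp [nAD i hi]) (fun i hi => by simp [nAD i hi])
      (fun i hi => by simp [nAD i hi])
  · exact hB.congr (fun i hi => by simp [nBD i hi]) (fun i hi => by simp [nBD i hi])
      (fun i hi => by simp [nBD i hi])
  · exact hcD.congr (fun i hi => by simp [hi]) (fun i hi => by simp [hi])
      (fun i hi => by simp [hi])
end

end LeechPol

namespace LeechPol
open Module
set_option linter.unusedSectionVars false
set_option linter.unusedSimpArgs false

/-- words given by three bytes -/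
def W3 (x y z : ℕ) : Fin 24 → ZMod 2 := fun i =>
  if (if i.val < 8 then x.testBit i.val else if i.val < 16 then y.testBit (i.val - 8)
    else z.testBit (i.val - 16)) = true then 1 else 0

/-- number of ones in a byte -/
def pc (n : ℕ) : ℕ := ∑ i : Fin 8, (n.testBit i.val).toNat

lemma W3_add (x y z x' y' z' : ℕ) :
    W3 x y z + W3 x' y' z' = W3 (x ^^^ x') (y ^^^ y') (z ^^^ z') := by
  have : ∀ a b : Bool, ((if a = true then 1 else 0) + (if b = true then 1 else 0) : ZMod 2) =
    if (a ^^ b) = true then 1 else 0 := by decide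
  funext i
  simp only [W3, Pi.add_apply, Nat.testBit_xor, this]
  split_ifs <;> simp_all

lemma W3_mul (x y z x' y' z' : ℕ) :
    W3 x y z * W3 x' y' z' = W3 (x &&& x') (y &&& y') (z &&& z') := by
  have : ∀ a b : Bool, ((if a = true then 1 else 0) * (if b = true then 1 else 0) : ZMod 2) =
    if (a && b) = true then 1 else 0 := by decide
  funext i
  simp only [W3, Pi.mul_apply, Nat.testBit_and, this]
  split_ifs <;> simp_all

lemma sum24 (F : Fin 24 → ℕ) : ∑ i, F i = ∑ i : Fin 8, F ⟨i.val, by omega⟩ +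
    ∑ i : Fin 8, F ⟨i.val + 8, by omega⟩ + ∑ i : Fin 8, F ⟨i.val + 16, by omega⟩ := by
  have h1 := Fin.sum_univ_add (a := 16) (b := 8) F
  have h2 := Fin.sum_univ_add (a := 8) (b := 8) (fun i => F (Fin.castAdd 8 i))
  rw [h1, h2]
  congr 1

lemma wt_W3 (x y z : ℕ) : wt Finset.univ (W3 x y z) = pc x + pc y + pc z := by
  have hv : ∀ a : Bool, (if a = true then 1 else 0 : ZMod 2).val = a.toNat := by decide
  rw [wt, sum24]
  simp only [W3, hv, pc]
  congr 1

lemma byte (b : Fin 8 → ZMod 2) : ∃ x < 256, ∀ i : Fin 8,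
    b i = if x.testBit i.val = true then 1 else 0 := by
  have : ∀ b0 b1 b2 b3 b4 b5 b6 b7 : ZMod 2, ∀ i : Fin 8,
      (![b0,b1,b2,b3,b4,b5,b6,b7] i) = if ((b0.val + 2 * b1.val + 4 * b2.val + 8 * b3.val +
        16 * b4.val + 32 * b5.val + 64 * b6.val + 128 * b7.val).testBit i.val) = true
        then (1 : ZMod 2) else 0 := by
    decide +kernel
  have h1 : ∀ a : ZMod 2, a.val ≤ 1 := by decide
  refine ⟨(b 0).val + 2 * (b 1).val + 4 * (b 2).val + 8 * (b 3).val +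
        16 * (b 4).val + 32 * (b 5).val + 64 * (b 6).val + 128 * (b 7).val, ?_, ?_⟩
  · have := h1 (b 0)
    have := h1 (b 1)
    have := h1 (b 2)
    have := h1 (b 3)
    have := h1 (b 4)
    have := h1 (b 5)
    have := h1 (b 6)
    have := h1 (b 7)
    omega
  · intro i
    rw [← this]
    fin_cases i <;> rfl

lemma W3_surj (d : Fin 24 → ZMod 2) : ∃ x < 256, ∃ y < 256, ∃ z < 256, d = W3 x y z := by
  obtain ⟨x, hx, hx'⟩ := byte (fun i => d ⟨i.val, by omega⟩)
  obtain ⟨y, hy, hy'⟩ := byte (fun i => d ⟨i.val + 8, by omega⟩)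
  obtain ⟨z, hz, hz'⟩ := byte (fun i => d ⟨i.val + 16, by omega⟩)
  refine ⟨x, hx, y, hy, z, hz, ?_⟩
  funext i
  unfold W3
  split_ifs with h1 h2 h2 h3 h3
  · simpa [h2] using hx' ⟨i.val, h1⟩
  · simpa [h2] using hx' ⟨i.val, h1⟩
  · have := hy' ⟨i.val - 8, by omega⟩
    simp only [h3, if_true] at this
    rw [← this]; congr 1; ext; simp; omega
  · have := hy' ⟨i.val - 8, by omega⟩
    simp only [h3] at this
    rw [if_neg (by simp)] at this
    rw [← this]; congr 1; ext; simp; omega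
  · have := hz' ⟨i.val - 16, by omega⟩
    simp only [h3, if_true] at this
    rw [← this]; congr 1; ext; simp; omega
  · have := hz' ⟨i.val - 16, by omega⟩
    simp only [h3] at this
    rw [if_neg (by simp)] at this
    rw [← this]; congr 1; ext; simp; omega

/-- numbers representing linear functions -/
def lin (t : ℕ) : ℕ := (if t.testBit 0 = true then 170 else 0) ^^^
  (if t.testBit 1 = true then 204 else 0) ^^^ (if t.testBit 2 = true then 240 else 0)

/-- weights allowed in a Golay code -/
def okw (n : ℕ) : Bool := n % 4 == 0 && (n == 0 || 8 ≤ n)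

/-- The nine base words. -/
structure Base (D : Submodule (ZMod 2) (Fin 24 → ZMod 2)) : Prop where
  a0 : W3 170 170 0 ∈ D
  a1 : W3 204 204 0 ∈ D
  a2 : W3 240 240 0 ∈ D
  b0 : W3 170 0 170 ∈ D
  b1 : W3 204 0 204 ∈ D
  b2 : W3 240 0 240 ∈ D
  c0 : W3 255 0 0 ∈ D
  c1 : W3 0 255 0 ∈ D
  c2 : W3 0 0 255 ∈ D

section
variable {D : Submodule (ZMod 2) (Fin 24 → ZMod 2)}

lemma Golay.okw (h : Golay D) {x y z : ℕ} (hm : W3 x y z ∈ D) :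
    okw (pc x + pc y + pc z) = true := by
  have := h.cases hm
  rw [← wt_univ, wt_W3] at this
  simp only [LeechPol.okw, Bool.and_eq_true, beq_iff_eq, Bool.or_eq_true, decide_eq_true_eq]
  omega

lemma Golay.even (h : Golay D) {x y z x' y' z' : ℕ} (hm : W3 x y z ∈ D) (hm' : W3 x' y' z' ∈ D) :
    (pc (x &&& x') + pc (y &&& y') + pc (z &&& z')) % 2 = 0 := by
  have h1 := h.orth hm hm'
  have h2 := wt_cast Finset.univ (W3 x y z * W3 x' y' z')
  rw [W3_mul, wt_W3, ← W3_mul] at h2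
  have h3 : ((pc (x &&& x') + pc (y &&& y') + pc (z &&& z') : ℕ) : ZMod 2) = 0 := h2.trans h1
  rw [ZMod.natCast_eq_zero_iff] at h3
  omega

set_option synthInstance.maxHeartbeats 400000 in
set_option synthInstance.maxSize 1000 in
lemma byteH : ∀ x < 256, pc (x &&& 170) % 2 = 0 → pc (x &&& 204) % 2 = 0 →
    pc (x &&& 240) % 2 = 0 → pc (x &&& 255) % 2 = 0 →
    ∃ t < 8, x = lin t ∨ x = lin t ^^^ 255 := by
  decide +kernel

lemma Base.lin1 (hb : Base D) (t : ℕ) : W3 (lin t) (lin t) 0 ∈ D := by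
  unfold lin
  have z : W3 0 0 0 ∈ D := by
    have : W3 0 0 0 = 0 := by funext i; simp [W3]
    rw [this]; exact D.zero_mem
  rw [show (0 : ℕ) = 0 ^^^ 0 ^^^ 0 from rfl, ← W3_add, ← W3_add]
  refine D.add_mem (D.add_mem ?_ ?_) ?_
  · split_ifs
    · exact hb.a0
    · exact z
  · split_ifs
    · exact hb.a1
    · exact z
  · split_ifs
    · exact hb.a2
    · exact z

lemma Base.flip (hb : Base D) {x y z : ℕ} (h : W3 x y z ∈ D) : W3 x y (z ^^^ 255) ∈ D := by
  have := D.add_mem h hb.c2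
  rw [W3_add] at this
  simpa using this

lemma Base.two (hb : Base D) (h : Golay D) {x y : ℕ} (hx : x < 256) (hy : y < 256)
    (hm : W3 x y 0 ∈ D) : y = x ∨ y = x ^^^ 255 := by
  have pc0 : pc 0 = 0 := by decide
  have e0 := h.even hm hb.b0
  have e1 := h.even hm hb.b1
  have e2 := h.even hm hb.b2
  have e3 := h.even hm hb.c0
  simp only [Nat.and_zero, Nat.zero_and, pc0, add_zero] at e0 e1 e2 e3
  obtain ⟨t, ht, hxt⟩ := byteH x hx e0 e1 e2 e3
  have hxx : W3 x x 0 ∈ D := by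
    rcases hxt with rfl | rfl
    · exact hb.lin1 t
    · have := D.add_mem (D.add_mem (hb.lin1 t) hb.c0) hb.c1
      rw [W3_add, W3_add] at this
      simpa using this
  have hd := D.add_mem hm hxx
  rw [W3_add] at hd
  simp only [Nat.xor_self] at hd
  have h1 := h.okw hd
  simp only [pc0, zero_add, add_zero] at h1
  have h2 : y ^^^ x < 256 := Nat.xor_lt_two_pow (n := 8) hy hx
  have h3 : ∀ n < 256, okw (pc n) = true → n = 0 ∨ n = 255 := by decide +kernel
  rcases h3 _ h2 h1 with h4 | h4
  · left
    exact Nat.xor_eq_zero_iff.mp h4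
  · right
    rw [← h4, Nat.xor_comm y x, ← Nat.xor_assoc, Nat.xor_self, Nat.zero_xor]

lemma Base.third (hb : Base D) (h : Golay D) {X : ℕ} (hX : X = 3 ∨ X = 5 ∨ X = 17) :
    ∃ t < 8, W3 X X (X ^^^ lin t) ∈ D := by
  have pc0 : pc 0 = 0 := by decide
  obtain ⟨c, hc, hcS⟩ := h.ext (Finset.univ.filter (fun i => i.val < 16)) (W3 X X 0) (by
    intro d hd hdS
    obtain ⟨x, hx, y, hy, z, hz, rfl⟩ := W3_surj d
    have e : W3 x y z = W3 x y 0 := by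
      funext i
      by_cases hi : i.val < 16
      · simp only [W3]
        split_ifs <;> simp_all
      · rw [hdS i (by simpa using hi)]
        simp only [W3]
        rw [if_neg (by omega : ¬ i.val < 8), if_neg hi]
        simp
    rw [e] at hd ⊢
    have h1 := hb.two h hx hy hd
    change ∑ i, (W3 x y 0 * W3 X X 0) i = 0
    rw [← wt_cast, W3_mul, wt_W3, ZMod.natCast_eq_zero_iff]
    simp only [Nat.and_zero, pc0, add_zero]
    have h2 : ∀ x < 256, ∀ X ∈ [3, 5, 17], 2 ∣ pc (x &&& X) + pc (x &&& X) ∧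
      2 ∣ pc (x &&& X) + pc ((x ^^^ 255) &&& X) := by decide +kernel
    have h3 := h2 x hx X (by simpa using hX)
    rcases h1 with rfl | rfl
    · exact h3.1
    · exact h3.2)
  obtain ⟨x, hx, y, hy, z, hz, rfl⟩ := W3_surj c
  have e : W3 x y z = W3 X X z := by
    funext i
    by_cases hi : i.val < 16
    · rw [hcS i (by simpa using hi)]
      simp only [W3]
      split_ifs <;> simp_all
    · simp only [W3]
      have h8 : ¬ i.val < 8 := by omega
      simp only [h8, hi, if_false]
  rw [e] at hc
  have e0 := h.even hc hb.b0
  have e1 := h.even hc hb.b1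
  have e2 := h.even hc hb.b2
  have e3 := h.even hc hb.c2
  simp only [Nat.and_zero, pc0, add_zero, zero_add] at e0 e1 e2 e3
  have key : ∀ z < 256, ∀ X ∈ [3, 5, 17], (pc (X &&& 170) + pc (z &&& 170)) % 2 = 0 →
      (pc (X &&& 204) + pc (z &&& 204)) % 2 = 0 → (pc (X &&& 240) + pc (z &&& 240)) % 2 = 0 →
      pc (z &&& 255) % 2 = 0 → ∃ t < 8, X ^^^ lin t = z ∨ X ^^^ lin t = z ^^^ 255 := by
    decide +kernel
  obtain ⟨t, ht, hzt⟩ := key z hz X (by simpa using hX) e0 e1 e2 e3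
  refine ⟨t, ht, ?_⟩
  rcases hzt with h1 | h1
  · rw [h1]; exact hc
  · rw [h1]; exact hb.flip hc

/-- translation of the third block, as a function -/
def tauF (s : Fin 8) (i : Fin 24) : Fin 24 :=
  if i.val < 16 then i else Fin.ofNat 24 (16 + ((i.val - 16) ^^^ s.val))

lemma tauF_inv : ∀ s, Function.Involutive (tauF s) := by
  unfold Function.Involutive
  decide +kernel

/-- translation of the third block -/
def tau (s : Fin 8) : Fin 24 ≃ Fin 24 := (tauF_inv s).toPerm

/-- the byte `z` translated by `s` is `z'` -/
def isTr (s : Fin 8) (z z' : ℕ) : Bool :=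
  (List.range 8).all fun v => z.testBit (v ^^^ s.val) == z'.testBit v

lemma W3_tau {s : Fin 8} {z z' : ℕ} (h : isTr s z z' = true) (x y : ℕ) :
    (fun i => W3 x y z (tau s i)) = W3 x y z' := by
  have h1 : ∀ (s : Fin 8) (i : Fin 24), i.val < 16 → tauF s i = i := by decide +kernel
  have h2 : ∀ (s : Fin 8) (i : Fin 24), ¬ i.val < 16 → ¬ (tauF s i).val < 16 ∧
    (tauF s i).val - 16 = (i.val - 16) ^^^ s.val := by decide +kernel
  funext i
  change W3 x y z (tauF s i) = _
  by_cases hi : i.val < 16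
  · rw [h1 s i hi]
    simp only [W3]
    split_ifs <;> simp_all
  · obtain ⟨h3, h4⟩ := h2 s i hi
    simp only [W3]
    rw [if_neg (by omega : ¬ (tauF s i).val < 8), if_neg h3, if_neg (by omega : ¬ i.val < 8),
      if_neg hi, h4]
    simp only [isTr, List.all_eq_true, List.mem_range, beq_iff_eq] at h
    rw [h _ (by omega)]

/-- translation up to complement -/
def isTrC (s : Fin 8) (z z' : ℕ) : Bool := isTr s z z' || isTr s z (z' ^^^ 255)

lemma Base.tau (hb : Base D) {s : Fin 8} {x y z z' : ℕ} (h : isTrC s z z' = true)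
    (hm : W3 x y z' ∈ D) : (fun i => W3 x y z (tau s i)) ∈ D := by
  simp only [isTrC, Bool.or_eq_true] at h
  rcases h with h | h
  · rw [W3_tau h]; exact hm
  · rw [W3_tau h]; exact hb.flip hm

/-- The twelve standard generators of the Golay code. -/
def gens : List (ℕ × ℕ × ℕ) := [(170, 170, 0), (204, 204, 0), (240, 240, 0), (170, 0, 170),
  (204, 0, 204), (240, 0, 240), (255, 0, 0), (0, 255, 0), (0, 0, 255), (3, 3, 169), (5, 5, 99),
  (17, 17, 135)]

set_option synthInstance.maxHeartbeats 400000 in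
set_option synthInstance.maxSize 1000 in
lemma Base.standard (hb : Base D) (h : Golay D) : ∃ s : Fin 8, ∀ g ∈ gens,
    (fun i => W3 g.1 g.2.1 g.2.2 (LeechPol.tau s i)) ∈ D := by
  obtain ⟨t, ht, h1⟩ := hb.third h (X := 3) (by simp)
  obtain ⟨u, hu, h2⟩ := hb.third h (X := 5) (by simp)
  obtain ⟨v, hv, h3⟩ := hb.third h (X := 17) (by simp)
  have h12 := D.add_mem h1 h2
  have h13 := D.add_mem h1 h3
  have h23 := D.add_mem h2 h3
  rw [W3_add] at h12 h13 h23
  have key : ∀ t < 8, ∀ u < 8, ∀ v < 8,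
      (okw (pc 3 + pc 3 + pc (3 ^^^ lin t)) && okw (pc 5 + pc 5 + pc (5 ^^^ lin u)) &&
      okw (pc 17 + pc 17 + pc (17 ^^^ lin v)) &&
      okw (pc (3 ^^^ 5) + pc (3 ^^^ 5) + pc (3 ^^^ lin t ^^^ (5 ^^^ lin u))) &&
      okw (pc (3 ^^^ 17) + pc (3 ^^^ 17) + pc (3 ^^^ lin t ^^^ (17 ^^^ lin v))) &&
      okw (pc (5 ^^^ 17) + pc (5 ^^^ 17) + pc (5 ^^^ lin u ^^^ (17 ^^^ lin v)))) = true →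
      ∃ s : Fin 8, (isTrC s 169 (3 ^^^ lin t) && isTrC s 99 (5 ^^^ lin u) &&
        isTrC s 135 (17 ^^^ lin v)) = true := by
    decide +kernel
  obtain ⟨s, hs3⟩ := key t ht u hu v hv (by
    rw [h.okw h1, h.okw h2, h.okw h3, h.okw h12, h.okw h13, h.okw h23]; rfl)
  simp only [Bool.and_eq_true] at hs3
  obtain ⟨⟨s1, s2⟩, s3⟩ := hs3
  refine ⟨s, ?_⟩
  have hs : ∀ s : Fin 8, isTrC s 0 0 = true ∧ isTrC s 170 170 = true ∧ isTrC s 204 204 = true ∧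
    isTrC s 240 240 = true ∧ isTrC s 255 255 = true := by decide +kernel
  obtain ⟨q0, q1, q2, q3, q4⟩ := hs s
  intro g hg
  simp only [gens, List.mem_cons, List.not_mem_nil, or_false] at hg
  rcases hg with rfl | rfl | rfl | rfl | rfl | rfl | rfl | rfl | rfl | rfl | rfl | rfl
  · exact hb.tau q0 hb.a0
  · exact hb.tau q0 hb.a1
  · exact hb.tau q0 hb.a2
  · exact hb.tau q1 hb.b0
  · exact hb.tau q2 hb.b1
  · exact hb.tau q3 hb.b2
  · exact hb.tau q0 hb.c0
  · exact hb.tau q0 hb.c1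
  · exact hb.tau q4 hb.c2
  · exact hb.tau s1 h1
  · exact hb.tau s2 h2
  · exact hb.tau s3 h3
end

end LeechPol

namespace LeechPol
open Module

lemma W3_eval (x y z : ℕ) (v : Fin 8) (i : Fin 24) :
    (i.val = v.val → W3 x y z i = if x.testBit v.val = true then 1 else 0) ∧
    (i.val = 8 + v.val → W3 x y z i = if y.testBit v.val = true then 1 else 0) ∧
    (i.val = 16 + v.val → W3 x y z i = if z.testBit v.val = true then 1 else 0) := by
  have hv := v.isLt
  refine ⟨fun h => ?_, fun h => ?_, fun h => ?_⟩
  · have h8 : i.val < 8 := by omega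
    simp only [W3, h8, if_true]
    rw [h]
  · have h8 : ¬ i.val < 8 := by omega
    have h9 : i.val < 16 := by omega
    simp only [W3, h8, h9, if_true, if_false]
    rw [h, Nat.add_sub_cancel_left]
  · have h8 : ¬ i.val < 8 := by omega
    have h9 : ¬ i.val < 16 := by omega
    simp only [W3, h8, h9, if_false]
    rw [h, Nat.add_sub_cancel_left]

lemma labl_bits (l₀ l₁ l₂ : Fin 24 → ZMod 2) (i : Fin 24) :
    (if Nat.testBit 170 (labl l₀ l₁ l₂ i).val = true then (1 : ZMod 2) else 0) = l₀ i ∧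
    (if Nat.testBit 204 (labl l₀ l₁ l₂ i).val = true then (1 : ZMod 2) else 0) = l₁ i ∧
    (if Nat.testBit 240 (labl l₀ l₁ l₂ i).val = true then (1 : ZMod 2) else 0) = l₂ i ∧
    (if Nat.testBit 255 (labl l₀ l₁ l₂ i).val = true then (1 : ZMod 2) else 0) = 1 := by
  have : ∀ x y z : ZMod 2,
    (if Nat.testBit 170 (Fin.ofNat 8 (x.val + 2 * y.val + 4 * z.val)).val = true
      then (1 : ZMod 2) else 0) = x ∧
    (if Nat.testBit 204 (Fin.ofNat 8 (x.val + 2 * y.val + 4 * z.val)).val = true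
      then (1 : ZMod 2) else 0) = y ∧
    (if Nat.testBit 240 (Fin.ofNat 8 (x.val + 2 * y.val + 4 * z.val)).val = true
      then (1 : ZMod 2) else 0) = z ∧
    (if Nat.testBit 255 (Fin.ofNat 8 (x.val + 2 * y.val + 4 * z.val)).val = true
      then (1 : ZMod 2) else 0) = 1 := by decide +kernel
  exact this _ _ _

section
variable {C : Submodule (ZMod 2) (Fin 24 → ZMod 2)}

/-- the code `C` transported along `e` -/
def trans (e : Fin 24 ≃ Fin 24) (C : Submodule (ZMod 2) (Fin 24 → ZMod 2)) :
    Submodule (ZMod 2) (Fin 24 → ZMod 2) := C.comap (LinearMap.funLeft (ZMod 2) (ZMod 2) e)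

lemma mem_trans {e : Fin 24 ≃ Fin 24} {c : Fin 24 → ZMod 2} :
    c ∈ trans e C ↔ (fun i => c (e i)) ∈ C := Iff.rfl

lemma wt_perm (e : Fin 24 ≃ Fin 24) (c : Fin 24 → ZMod 2) :
    hammingNorm (fun i => c (e i)) = hammingNorm c := by
  rw [← wt_univ, ← wt_univ]
  exact Equiv.sum_comp e (fun i => (c i).val)

lemma Golay.trans (h : Golay C) (e : Fin 24 ≃ Fin 24) : Golay (trans e C) := by
  refine ⟨fun c hc => ?_, fun c hc h0 => ?_, ?_, fun d hd => ?_⟩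
  · rw [← wt_perm e]; exact h.de _ hc
  · rw [← wt_perm e]
    refine h.mn _ hc fun h1 => h0 ?_
    funext i
    have := congrFun h1 (e.symm i)
    simpa using this
  · exact h.one
  · refine h.sd _ fun c hc => ?_
    have := hd (fun i => c (e.symm i)) (by rw [mem_trans]; simpa using hc)
    rw [← Equiv.sum_comp e] at this
    simpa using this

lemma Golay.exists_base (h : Golay C) : ∃ e : Fin 24 ≃ Fin 24, Base (LeechPol.trans e C) := by
  obtain ⟨A, B, D, t⟩ := h.tri
  obtain ⟨l, hD, hB, lA, lB, lD⟩ := t.labels3 h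
  have nAD : ∀ i ∈ A, i ∉ D := fun i hi => Finset.disjoint_left.mp t.dAD hi
  have nBD : ∀ i ∈ B, i ∉ D := fun i hi => Finset.disjoint_left.mp t.dBD hi
  have nAB : ∀ i ∈ A, i ∉ B := fun i hi => Finset.disjoint_left.mp t.dAB hi
  set lab := labl (l 0) (l 1) (l 2) with hlab
  let blk : Fin 24 → ℕ := fun i => if i ∈ A then 0 else if i ∈ B then 8 else 16
  have hblk : ∀ i, blk i ≤ 16 := fun i => by simp only [blk]; split_ifs <;> omega
  let E : Fin 24 → Fin 24 := fun i => ⟨blk i + (lab i).val, by have := hblk i; omega⟩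
  have bA : ∀ i ∈ A, blk i = 0 := fun i hi => by simp [blk, hi]
  have bB : ∀ i ∈ B, blk i = 8 := fun i hi => by
    have : i ∉ A := fun h => nAB i h hi
    simp [blk, hi, this]
  have bD : ∀ i ∈ D, blk i = 16 := fun i hi => by
    have h1 : i ∉ A := fun h => nAD i h hi
    have h2 : i ∉ B := fun h => nBD i h hi
    simp [blk, h1, h2]
  have hE : Function.Injective E := by
    intro i j hij
    have h0 : blk i + (lab i).val = blk j + (lab j).val := congrArg Fin.val hij
    have hi := (lab i).isLt
    have hj := (lab j).isLt
    rcases t.cov i with h1 | h1 | h1 <;> rcases t.cov j with h2 | h2 | h2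
    · rw [bA i h1, bA j h2] at h0
      exact lA.inj t.cA h1 h2 (Fin.ext (Nat.add_left_cancel h0))
    · rw [bA i h1, bB j h2] at h0; omega
    · rw [bA i h1, bD j h2] at h0; omega
    · rw [bB i h1, bA j h2] at h0; omega
    · rw [bB i h1, bB j h2] at h0
      exact lB.inj t.cB h1 h2 (Fin.ext (Nat.add_left_cancel h0))
    · rw [bB i h1, bD j h2] at h0; omega
    · rw [bD i h1, bA j h2] at h0; omega
    · rw [bD i h1, bB j h2] at h0; omega
    · rw [bD i h1, bD j h2] at h0
      exact lD.inj t.cD h1 h2 (Fin.ext (Nat.add_left_cancel h0))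
  let e : Fin 24 ≃ Fin 24 := Equiv.ofBijective E (Finite.injective_iff_bijective.mp hE)
  have ev : ∀ x y z i, W3 x y z (e i) = if i ∈ A then (if x.testBit (lab i).val = true then 1 else 0)
      else if i ∈ B then (if y.testBit (lab i).val = true then 1 else 0)
      else (if z.testBit (lab i).val = true then 1 else 0) := by
    intro x y z i
    change W3 x y z (E i) = _
    obtain ⟨e1, e2, e3⟩ := W3_eval x y z (lab i) (E i)
    rcases t.cov i with h1 | h1 | h1
    · rw [if_pos h1]
      exact e1 (by simp [E, bA i h1])
    · rw [if_neg (fun h => nAB i h h1), if_pos h1]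
      exact e2 (by simp [E, bB i h1])
    · rw [if_neg (fun h => nAD i h h1), if_neg (fun h => nBD i h h1)]
      exact e3 (by simp [E, bD i h1])
  have z0 : ∀ n, (if Nat.testBit 0 n = true then (1 : ZMod 2) else 0) = 0 := by intro n; simp
  have kD : ∀ (n : ℕ) (k : Fin 3), (∀ i, (if n.testBit (lab i).val = true
      then (1 : ZMod 2) else 0) = l k i) →
      W3 n n 0 ∈ LeechPol.trans e C := by
    intro n k hk
    rw [mem_trans]
    convert hD k using 1
    funext i
    rw [ev, hk, z0]
    rcases t.cov i with h1 | h1 | h1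
    · rw [if_pos h1, if_neg (nAD i h1)]
    · rw [if_neg (fun h => nAB i h h1), if_pos h1, if_neg (nBD i h1)]
    · rw [if_neg (fun h => nAD i h h1), if_neg (fun h => nBD i h h1), if_pos h1]
  have kB : ∀ (n : ℕ) (k : Fin 3), (∀ i, (if n.testBit (lab i).val = true
      then (1 : ZMod 2) else 0) = l k i) →
      W3 n 0 n ∈ LeechPol.trans e C := by
    intro n k hk
    rw [mem_trans]
    convert hB k using 1
    funext i
    rw [ev, hk, z0]
    rcases t.cov i with h1 | h1 | h1
    · rw [if_pos h1, if_neg (nAB i h1)]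
    · rw [if_neg (fun h => nAB i h h1), if_pos h1]
    · rw [if_neg (fun h => nAD i h h1), if_neg (fun h => nBD i h h1)]
  have b0 := fun i => (labl_bits (l 0) (l 1) (l 2) i).1
  have b1 := fun i => (labl_bits (l 0) (l 1) (l 2) i).2.1
  have b2 := fun i => (labl_bits (l 0) (l 1) (l 2) i).2.2.1
  have b3 := fun i => (labl_bits (l 0) (l 1) (l 2) i).2.2.2
  rw [← hlab] at b0 b1 b2 b3
  refine ⟨e, kD _ 0 b0, kD _ 1 b1, kD _ 2 b2, kB _ 0 b0, kB _ 1 b1, kB _ 2 b2, ?_, ?_, ?_⟩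
  · rw [mem_trans]
    convert t.mA using 1
    funext i
    rw [ev, b3, z0, ind]
    split_ifs <;> rfl
  · rw [mem_trans]
    convert t.mB using 1
    funext i
    rw [ev, b3, z0, ind]
    by_cases h1 : i ∈ B
    · rw [if_neg (fun h => nAB i h h1)]
    · rw [if_neg h1]; split_ifs <;> rfl
  · rw [mem_trans]
    convert t.mD using 1
    funext i
    rw [ev, b3, z0, ind]
    rcases t.cov i with h1 | h1 | h1
    · rw [if_pos h1, if_neg (nAD i h1)]
    · rw [if_neg (fun h => nAB i h h1), if_pos h1, if_neg (nBD i h1)]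
    · rw [if_neg (fun h => nAD i h h1), if_neg (fun h => nBD i h h1), if_pos h1]

lemma Golay.exists_standard (h : Golay C) : ∃ e : Fin 24 ≃ Fin 24, ∀ g ∈ gens,
    (fun i => W3 g.1 g.2.1 g.2.2 (e i)) ∈ C := by
  obtain ⟨e, he⟩ := h.exists_base
  obtain ⟨s, hs⟩ := he.standard (h.trans e)
  exact ⟨e.trans (tau s), fun g hg => hs g hg⟩
end

end LeechPol

namespace LeechPol
open Module
open scoped Matrix
set_option linter.unusedSectionVars false

/-- the skew Hadamard matrix of order eight -/
def tabH : List (List ℤ) := [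
  [1, 1, 1, -1, 1, -1, -1, -1],
  [-1, 1, 1, 1, -1, -1, -1, 1],
  [-1, -1, 1, 1, 1, 1, -1, -1],
  [1, -1, -1, 1, 1, -1, -1, 1],
  [-1, 1, -1, -1, 1, 1, -1, 1],
  [1, 1, -1, 1, -1, 1, -1, -1],
  [1, 1, 1, 1, 1, 1, 1, 1],
  [1, -1, 1, -1, -1, 1, -1, 1]]

/-- the inverse Gram matrix of the basis -/
def tabG : List (List ℤ) := [
  [4, 2, 2, 0, 0, 0, -8, -6, 0, 0, 0, 0, 2, 3, 1, 3, 1, 2, 3, 1, 2, 2, 0, 12],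
  [2, 4, 2, 0, 0, 0, -8, -6, 0, 0, 0, 0, 3, 2, 1, 3, 2, 1, 3, 2, 1, 2, 0, 12],
  [2, 2, 4, 0, 0, 0, -8, -6, 0, 0, 0, 0, 3, 3, 2, 2, 1, 1, 3, 2, 2, 1, 0, 12],
  [0, 0, 0, 40, 76, 36, -122, 30, -82, 36, -44, -60, 97, 20, 18, 80, 38, 20, 45, 41, -18, 22, 60,
    212],
  [0, 0, 0, 76, 184, 84, -270, 74, -180, 98, -100, -148, 224, 31, 42, 180, 92, 38, 91, 90, -49,
    50, 128, 442],
  [0, 0, 0, 36, 84, 40, -126, 34, -84, 44, -46, -68, 104, 16, 20, 83, 42, 18, 43, 42, -22, 23,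
    60, 208],
  [-8, -8, -8, -122, -270, -126, 436, -90, 274, -138, 150, 216, -344, -64, -68, -280, -140, -66,
    -152, -142, 64, -80, -197, -726],
  [-6, -6, -6, 30, 74, 34, -90, 44, -72, 40, -40, -60, 84, 6, 14, 66, 34, 12, 29, 32, -24, 16,
    51, 148],
  [0, 0, 0, -82, -180, -84, 274, -72, 184, -92, 100, 144, -224, -37, -42, -181, -90, -41, -96,
    -92, 46, -50, -132, -460],
  [0, 0, 0, 36, 98, 44, -138, 40, -92, 56, -52, -80, 117, 12, 22, 93, 49, 18, 44, 46, -28, 26,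
    64, 218],
  [0, 0, 0, -44, -100, -46, 150, -40, 100, -52, 56, 80, -123, -19, -23, -100, -50, -22, -52, -50,
    26, -28, -72, -250],
  [0, 0, 0, -60, -148, -68, 216, -60, 144, -80, 80, 120, -180, -24, -34, -144, -74, -30, -72,
    -72, 40, -40, -102, -351],
  [2, 3, 3, 97, 224, 104, -344, 84, -224, 117, -123, -180, 280, 45, 54, 225, 114, 50, 118, 114,
    -57, 63, 160, 569],
  [3, 2, 3, 20, 31, 16, -64, 6, -37, 12, -19, -24, 45, 16, 10, 38, 17, 12, 25, 20, -4, 11, 28,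
    115],
  [1, 1, 2, 18, 42, 20, -68, 14, -42, 22, -23, -34, 54, 10, 12, 43, 22, 10, 23, 22, -10, 12, 30,
    112],
  [3, 3, 2, 80, 180, 83, -280, 66, -181, 93, -100, -144, 225, 38, 43, 184, 92, 42, 97, 92, -45,
    52, 130, 466],
  [1, 2, 1, 38, 92, 42, -140, 34, -90, 49, -50, -74, 114, 17, 22, 92, 48, 20, 47, 46, -24, 26,
    64, 229],
  [2, 1, 1, 20, 38, 18, -66, 12, -41, 18, -22, -30, 50, 12, 10, 42, 20, 12, 24, 21, -8, 12, 30,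
    114],
  [3, 3, 3, 45, 91, 43, -152, 29, -96, 44, -52, -72, 118, 25, 23, 97, 47, 24, 56, 50, -20, 28,
    70, 260],
  [1, 2, 2, 41, 90, 42, -142, 32, -92, 46, -50, -72, 114, 20, 22, 92, 46, 21, 50, 48, -22, 26,
    66, 238],
  [2, 1, 2, -18, -49, -22, 64, -24, 46, -28, 26, 40, -57, -4, -10, -45, -24, -8, -20, -22, 16,
    -12, -32, -101],
  [2, 2, 1, 22, 50, 23, -80, 16, -50, 26, -28, -40, 63, 11, 12, 52, 26, 12, 28, 26, -12, 16, 36,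
    133],
  [0, 0, 0, 60, 128, 60, -197, 51, -132, 64, -72, -102, 160, 28, 30, 130, 64, 30, 70, 66, -32,
    36, 96, 334],
  [12, 12, 12, 212, 442, 208, -726, 148, -460, 218, -250, -351, 569, 115, 112, 466, 229, 114,
    260, 238, -101, 133, 334, 1232]]

/-- eight times the dual basis -/
def tabQ : List (List ℤ) := [
  [0, 0, 0, 0, 0, 0, 0, 0, 0, 0, 0, 0, 0, 0, -4, 4, 0, 0, 0, 0, 0, 0, 0, 0],
  [0, 0, 0, 0, 0, 0, 0, 0, 0, 0, 0, 0, 0, -4, 0, 4, 0, 0, 0, 0, 0, 0, 0, 0],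
  [0, 0, 0, 0, 0, 0, 0, 0, 0, 0, 0, -4, 0, 0, 0, 4, 0, 0, 0, 0, 0, 0, 0, 0],
  [0, 0, 0, 0, 0, 0, 0, 0, 0, 0, 0, 0, 0, 0, 0, 0, 0, 4, 4, 8, 12, 0, -4, -8],
  [0, 0, 0, 0, 0, 0, 0, 0, 0, 0, 0, 0, 0, 0, 0, 0, 0, 0, 20, 12, 20, 8, -8, -20],
  [0, 0, 0, 0, 0, 0, 0, 0, 0, 0, 0, 0, 0, 0, 0, 0, 0, 0, 8, 4, 12, 4, -4, -8],
  [0, 0, 0, 0, 0, 0, 0, 4, 0, 0, 0, 4, 0, 4, 4, -12, 0, -4, -24, -20, -36, -8, 12, 28],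
  [0, 0, 0, 0, 0, 0, 0, 0, 0, 0, 0, 4, 0, 4, 4, -8, 0, 0, 8, 4, 8, 4, -4, -8],
  [0, 0, 0, 0, 0, 0, 0, 0, 0, 0, 0, 0, 0, 0, 0, 0, 0, -4, -16, -12, -24, -4, 8, 20],
  [0, 0, 0, 0, 0, 0, 0, 0, 0, 0, 0, 0, 0, 0, 0, 0, 0, 0, 12, 4, 8, 8, -4, -12],
  [0, 0, 0, 0, 0, 0, 0, 0, 0, 0, 0, 0, 0, 0, 0, 0, 0, 0, -8, -8, -12, -4, 4, 12],
  [0, 0, 0, 0, 0, 0, 0, 0, 0, 0, 0, 0, 0, 0, 0, 0, 0, 0, -16, -8, -16, -8, 8, 16],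
  [0, 2, 0, 0, 0, 0, 0, -2, 0, 0, 0, -2, 0, -2, 0, 4, 0, 2, 22, 14, 28, 8, -10, -24],
  [0, 0, 2, 0, 0, 0, 0, -2, 0, 0, 0, -2, 0, 0, -2, 4, 0, 2, 0, 4, 8, -2, -2, -2],
  [0, 0, 0, 2, 0, 0, 0, -2, 0, 0, 0, -2, 0, 0, 0, 2, 0, 0, 4, 2, 6, 2, -2, -4],
  [0, 0, 0, 0, 2, 0, 0, -2, 0, 0, 0, 0, 0, -2, -2, 4, 0, 2, 16, 14, 22, 6, -8, -20],
  [0, 0, 0, 0, 0, 2, 0, -2, 0, 0, 0, 0, 0, -2, 0, 2, 0, 0, 10, 6, 10, 4, -4, -10],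
  [0, 0, 0, 0, 0, 0, 2, -2, 0, 0, 0, 0, 0, 0, -2, 2, 0, 2, 2, 4, 6, 0, -2, -4],
  [0, 0, 0, 0, 0, 0, 0, 0, 2, 0, 0, -2, 0, -2, -2, 4, 0, 2, 6, 8, 14, 0, -4, -10],
  [0, 0, 0, 0, 0, 0, 0, 0, 0, 2, 0, -2, 0, -2, 0, 2, 0, 2, 8, 6, 12, 2, -4, -10],
  [0, 0, 0, 0, 0, 0, 0, 0, 0, 0, 2, -2, 0, 0, -2, 2, 0, 0, -6, -2, -4, -4, 2, 6],
  [0, 0, 0, 0, 0, 0, 0, 0, 0, 0, 0, 0, 2, -2, -2, 2, 0, 0, 4, 4, 6, 2, -2, -6],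
  [0, 0, 0, 0, 0, 0, 0, 0, 0, 0, 0, 0, 0, 0, 0, 0, 2, 2, 10, 10, 18, 2, -6, -14],
  [1, 1, 1, 1, 1, 1, 1, -7, 1, 1, 1, -7, 1, -7, -7, 17, 1, 9, 33, 37, 65, 5, -19, -47]]

/-- the images of the basis vectors -/
def tabP : List (List ℤ) := [
  [-2, 2, 0, 0, 2, 2, 4, 0, -2, 2, 0, 0, 2, 2, 4, 0, 0, 0, 0, 0, 0, 0, 0, 0],
  [-2, 2, 0, 0, -2, -2, 4, 0, -2, 2, 0, 0, -2, -2, 4, 0, 0, 0, 0, 0, 0, 0, 0, 0],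
  [-2, -2, 0, 0, 2, -2, 4, 0, -2, -2, 0, 0, 2, -2, 4, 0, 0, 0, 0, 0, 0, 0, 0, 0],
  [-2, 2, 0, 0, 2, 2, 4, 0, 0, 0, 0, 0, 0, 0, 0, 0, -2, 2, 0, 0, 2, 2, 4, 0],
  [-2, 2, 0, 0, -2, -2, 4, 0, 0, 0, 0, 0, 0, 0, 0, 0, -2, 2, 0, 0, -2, -2, 4, 0],
  [-2, -2, 0, 0, 2, -2, 4, 0, 0, 0, 0, 0, 0, 0, 0, 0, -2, -2, 0, 0, 2, -2, 4, 0],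
  [0, 0, 0, 0, 0, 0, 8, 0, 0, 0, 0, 0, 0, 0, 0, 0, 0, 0, 0, 0, 0, 0, 0, 0],
  [0, 0, 0, 0, 0, 0, 0, 0, 0, 0, 0, 0, 0, 0, 8, 0, 0, 0, 0, 0, 0, 0, 0, 0],
  [2, 0, -2, 0, 0, 2, 2, 0, 2, 0, -2, 0, 0, 2, 2, 0, -2, 0, 0, 2, 0, 2, 4, 2],
  [2, 0, 0, 0, -2, 0, 2, 2, 2, 0, 0, 0, -2, 0, 2, 2, 0, -2, -2, -2, 0, 2, 4, 0],
  [2, -2, 0, 2, 0, 0, 2, 0, 2, -2, 0, 2, 0, 0, 2, 0, 2, 2, -2, 0, 0, 0, 4, 2],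
  [-4, 4, 4, -4, 4, -4, 0, -4, 0, 0, 0, 0, 0, 0, 4, 0, -2, -2, -2, -2, -2, -2, 6, -2],
  [0, 4, 0, -4, 4, 0, 0, -4, 0, 0, 0, 0, 0, 0, 0, 0, 0, 0, 0, 0, 0, 0, 0, 0],
  [0, 4, 4, -4, 0, -4, 0, 0, 0, 0, 0, 0, 0, 0, 0, 0, 0, 0, 0, 0, 0, 0, 0, 0],
  [-4, 4, 4, 0, 0, 0, 0, -4, 0, 0, 0, 0, 0, 0, 0, 0, 0, 0, 0, 0, 0, 0, 0, 0],
  [0, 0, 4, 0, 4, -4, 0, -4, 0, 0, 0, 0, 0, 0, 0, 0, 0, 0, 0, 0, 0, 0, 0, 0],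
  [-4, 0, 4, -4, 4, 0, 0, 0, 0, 0, 0, 0, 0, 0, 0, 0, 0, 0, 0, 0, 0, 0, 0, 0],
  [-4, 0, 0, -4, 0, -4, 0, -4, 0, 0, 0, 0, 0, 0, 0, 0, 0, 0, 0, 0, 0, 0, 0, 0],
  [-2, 2, 2, -2, 2, -2, -2, -2, 2, -2, -2, 2, -2, 2, 2, 2, 0, 0, 0, 0, 0, 0, 0, 0],
  [-2, 2, 2, -2, 2, -2, -2, -2, 2, 2, -2, -2, 2, 2, 2, -2, 0, 0, 0, 0, 0, 0, 0, 0],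
  [-2, 2, 2, -2, 2, -2, -2, -2, 2, 2, 2, -2, -2, -2, 2, 2, 0, 0, 0, 0, 0, 0, 0, 0],
  [-2, 2, 2, -2, 2, -2, -2, -2, 2, -2, 2, 2, 2, -2, 2, -2, 0, 0, 0, 0, 0, 0, 0, 0],
  [-2, 2, 2, -2, 2, -2, -2, -2, 0, 0, 0, 0, 0, 0, 0, 0, 2, -2, -2, 2, -2, 2, 2, 2],
  [4, -4, -4, 4, -4, 4, 4, 4, 0, 0, 0, 0, 0, 0, 0, 0, 0, 0, 0, 0, 0, 0, 0, 0]]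

/-- entries of a table -/
def ent (t : List (List ℤ)) (i j : ℕ) : ℤ := (t.getD i []).getD j 0

/-- the block diagonal matrix `2 φ` -/
def Hm : Matrix (Fin 24) (Fin 24) ℤ := Matrix.of fun i j =>
  if i.val / 8 = j.val / 8 then ent tabH (i.val % 8) (j.val % 8) else 0

/-- the generators of the Golay code used for the basis -/
def gens11 : List (ℕ × ℕ × ℕ) := [(170, 170, 0), (204, 204, 0), (240, 240, 0), (170, 0, 170),
  (204, 0, 204), (240, 0, 240), (255, 0, 0), (0, 255, 0), (3, 3, 169), (5, 5, 99),
  (17, 17, 135)]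

/-- a bit of a word -/
def bitW (g : ℕ × ℕ × ℕ) (i : ℕ) : Bool :=
  if i < 8 then g.1.testBit i else if i < 16 then g.2.1.testBit (i - 8)
    else g.2.2.testBit (i - 16)

/-- basis vectors of the coordinate Leech lattice -/
def Bm : Matrix (Fin 24) (Fin 24) ℤ := Matrix.of fun k i =>
  if k.val < 11 then (if bitW (gens11.getD k.val (0, 0, 0)) i.val = true then 2 else 0)
  else if k.val = 11 then uvec i + 4 * ((if i = 22 then 1 else 0) - (if i = 0 then 1 else 0))
  else if k.val = 23 then (if i = 0 then 8 else 0)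
  else 4 * ((if i.val = [1, 2, 3, 4, 5, 6, 8, 9, 10, 12, 16].getD (k.val - 12) 0 then 1 else 0) -
    (if i = 0 then 1 else 0))

/-- table as matrix -/
def Gm : Matrix (Fin 24) (Fin 24) ℤ := Matrix.of fun i j => ent tabG i.val j.val

/-- table as matrix -/
def Qm : Matrix (Fin 24) (Fin 24) ℤ := Matrix.of fun i j => ent tabQ i.val j.val

/-- table as matrix -/
def Pm : Matrix (Fin 24) (Fin 24) ℤ := Matrix.of fun i j => ent tabP i.val j.val

lemma Hm_sq : Hm * Hm = 2 • Hm - 8 • (1 : Matrix (Fin 24) (Fin 24) ℤ) := by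
  have : ∀ i j : Fin 24, ∑ k, Hm i k * Hm k j = 2 * Hm i j - (if i = j then 8 else 0) := by
    decide +kernel
  ext i j
  rw [Matrix.mul_apply, this, Matrix.sub_apply, Matrix.smul_apply, Matrix.smul_apply,
    Matrix.one_apply]
  split_ifs <;> simp

lemma Hm_orth : Hmᵀ * Hm = 8 • (1 : Matrix (Fin 24) (Fin 24) ℤ) := by
  have : ∀ i j : Fin 24, ∑ k, Hm k i * Hm k j = (if i = j then 8 else 0) := by
    decide +kernel
  ext i j
  rw [Matrix.mul_apply]
  simp only [Matrix.transpose_apply]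
  rw [this]
  simp [Matrix.one_apply]

lemma Bm_Qm : Bmᵀ * Qm = 8 • (1 : Matrix (Fin 24) (Fin 24) ℤ) := by
  have : ∀ i j : Fin 24, ∑ k, Bm k i * Qm k j = (if i = j then 8 else 0) := by
    decide +kernel
  ext i j
  rw [Matrix.mul_apply]
  simp only [Matrix.transpose_apply]
  rw [this]
  simp [Matrix.one_apply]

lemma Gm_Bm : Gm * Bm = Qm := by
  have : ∀ i j : Fin 24, ∑ k, Gm i k * Bm k j = ent tabQ i.val j.val := by
    decide +kernel
  ext i j
  rw [Matrix.mul_apply, this]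
  rfl

lemma Hm_Bm : ∀ i k : Fin 24, ∑ j, Hm i j * Bm k j = 2 * Pm k i := by
  decide +kernel

lemma Pm_Bm : ∀ k l : Fin 24, (∑ i, Pm k i * Bm l i) % 8 = 0 := by
  decide +kernel

section
variable {L : AddSubgroup (Fin 24 → ℤ)}

lemma span_of_mem (h : FrmL L) (hB : ∀ k, Bm k ∈ L) {x : Fin 24 → ℤ} (hx : x ∈ L) :
    ∃ m : Fin 24 → ℤ, x = ∑ k, m k • Bm k := by
  choose n hn using fun k => h.ip _ (hB k) _ hx
  have h1 : Bm *ᵥ x = (8 : ℤ) • n := by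
    funext k
    rw [Matrix.mulVec, dotProduct, hn k]; rfl
  have h2 : (8 : ℤ) • x = (8 : ℤ) • (Bmᵀ *ᵥ (Gm *ᵥ n)) := by
    rw [← Matrix.mulVec_smul, ← Matrix.mulVec_smul, ← h1, Matrix.mulVec_mulVec,
      Matrix.mulVec_mulVec, Matrix.mul_assoc, Gm_Bm, Bm_Qm, Matrix.smul_mulVec, Matrix.one_mulVec]
    funext i; simp
  refine ⟨Gm *ᵥ n, ?_⟩
  funext i
  have h3 := congrFun h2 i
  simp only [Pi.smul_apply, smul_eq_mul] at h3
  have h4 : x i = (Bmᵀ *ᵥ (Gm *ᵥ n)) i := by omega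
  rw [h4, Matrix.mulVec, dotProduct, Finset.sum_apply]
  refine Finset.sum_congr rfl fun k _ => ?_
  rw [Matrix.transpose_apply, Pi.smul_apply, smul_eq_mul, mul_comm]

lemma Pm_mem (h : FrmL L) (hB : ∀ k, Bm k ∈ L) (k : Fin 24) : Pm k ∈ L := by
  apply h.sd
  intro y hy
  obtain ⟨m, rfl⟩ := span_of_mem h hB hy
  have : ∑ i, Pm k i * (∑ l, m l • Bm l) i = ∑ l, m l * ∑ i, Pm k i * Bm l i := by
    simp only [Finset.sum_apply, Pi.smul_apply, smul_eq_mul, Finset.mul_sum]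
    rw [Finset.sum_comm]
    refine Finset.sum_congr rfl fun l _ => Finset.sum_congr rfl fun i _ => ?_
    ring
  rw [this]
  exact Finset.dvd_sum fun l _ => Dvd.dvd.mul_left (Int.dvd_of_emod_eq_zero (Pm_Bm k l)) _

lemma phi_mem (h : FrmL L) (hB : ∀ k, Bm k ∈ L) {x : Fin 24 → ℤ} (hx : x ∈ L) :
    ∃ y ∈ L, ∀ i, ∑ j, Hm i j * x j = 2 * y i := by
  obtain ⟨m, rfl⟩ := span_of_mem h hB hx
  refine ⟨∑ k, m k • Pm k, L.sum_mem fun k _ => L.zsmul_mem (Pm_mem h hB k) _, fun i => ?_⟩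
  simp only [Finset.sum_apply, Pi.smul_apply, smul_eq_mul, Finset.mul_sum]
  rw [Finset.sum_comm]
  refine Finset.sum_congr rfl fun k _ => ?_
  have := Hm_Bm i k
  calc ∑ j, Hm i j * (m k * Bm k j) = m k * ∑ j, Hm i j * Bm k j := by
        rw [Finset.mul_sum]
        exact Finset.sum_congr rfl fun j _ => by ring
    _ = _ := by rw [this]; ring

lemma Bm_mem (h : FrmL L) (hu : uvec ∈ L)
    (hg : ∀ g ∈ gens, (fun i => 2 * lft (W3 g.1 g.2.1 g.2.2) i) ∈ L) (k : Fin 24) : Bm k ∈ L := by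
  have hd : ∀ j : Fin 24, (fun i => 4 * ((if i = j then 1 else 0) - (if i = 0 then 1 else 0)) :
      Fin 24 → ℤ) ∈ L := by
    intro j
    refine h.d4 (fun i => (if i = j then 1 else 0) - (if i = 0 then 1 else 0)) ?_
    simp
  by_cases h1 : k.val < 11
  · have hg1 : ∀ g ∈ gens11, g ∈ gens := by decide
    have hk : gens11.getD k.val (0, 0, 0) ∈ gens11 := by
      rw [List.getD_eq_getElem (hn := by simpa [gens11] using h1)]
      exact List.getElem_mem _
    convert hg _ (hg1 _ hk) using 1
    funext i
    have hv : ∀ a : Bool, (if a = true then 2 else 0 : ℤ) =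
      2 * (((if a = true then 1 else 0 : ZMod 2)).val : ℤ) := by decide
    change (if k.val < 11 then _ else _) = _
    rw [if_pos h1, hv]
    rfl
  by_cases h2 : k.val = 11
  · convert L.add_mem hu (hd 22) using 1
    funext i
    change (if k.val < 11 then _ else _) = _
    rw [if_neg h1, if_pos h2]
    rfl
  by_cases h3 : k.val = 23
  · convert h.single8 0 using 1
    funext i
    change (if k.val < 11 then _ else _) = _
    rw [if_neg h1, if_neg h2, if_pos h3, Pi.single_apply]
  have hjj : ∀ m : ℕ, [1, 2, 3, 4, 5, 6, 8, 9, 10, 12, 16].getD m 0 < 24 := by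
    intro m
    by_cases hm : m < 11
    · revert m; decide
    · rw [List.getD_eq_default _ _ (by simpa using hm)]; norm_num
  convert hd ⟨_, hjj (k.val - 12)⟩ using 1
  funext i
  change (if k.val < 11 then _ else _) = _
  rw [if_neg h1, if_neg h2, if_neg h3]
  simp only [Fin.ext_iff]
end

end LeechPol

namespace LeechPol
open Module
open scoped RealInnerProductSpace Matrix
set_option linter.unusedSectionVars false

section
variable [FiniteDimensional ℝ V]

/-- Every Leech lattice with a frame has a frame in standard position. -/
lemma FrameL.exists_std {Λ : AddSubgroup V} {f : Fin 24 → V} (hf : FrameL Λ f) (hΛ : LeechL Λ)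
    (hdim : finrank ℝ V = 24) : ∃ g, FrameL Λ g ∧ ∀ k, Bm k ∈ latt Λ g := by
  obtain ⟨f', hf', hu⟩ := hf.exists_normal hΛ hdim
  obtain ⟨e, he⟩ := ((hf'.frm hΛ hdim).golay hu).exists_standard
  obtain ⟨hg, hiff⟩ := hf'.relabel e.symm
  refine ⟨_, hg, Bm_mem (hg.frm hΛ hdim) ?_ ?_⟩
  · refine (hg.frm hΛ hdim).uvec_mem ((hiff _).mpr hu) fun i => ?_
    simp only [uvec]
    split_ifs <;> norm_num
  · intro g hgm
    have := (hiff _).mpr ((mem_codeOf _ hu _).mp (he g hgm))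
    simpa [lft] using this

/-- the endomorphism `φ` -/
def phi (g : Fin 24 → V) : V →ₗ[ℝ] V where
  toFun v := fvec g (fun i => (1 / 2 : ℝ) * ∑ j, (Hm i j : ℝ) * ⟪v, g j⟫)
  map_add' v w := by
    rw [← fvec_add]
    congr 1
    funext i
    simp only [inner_add_left, mul_add, Finset.sum_add_distrib, Pi.add_apply]
  map_smul' c v := by
    rw [RingHom.id_apply, ← fvec_smul]
    congr 1
    funext i
    simp only [inner_smul_left, Pi.smul_apply, smul_eq_mul, Finset.mul_sum, conj_trivial]
    exact Finset.sum_congr rfl fun j _ => by ring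

variable {Λ : AddSubgroup V} {g : Fin 24 → V}

/-- the real version of the matrix -/
def Hr : Matrix (Fin 24) (Fin 24) ℝ := Hm.map (Int.castRingHom ℝ)

lemma Hr_sq : Hr * Hr = (2 : ℝ) • Hr - (8 : ℝ) • (1 : Matrix (Fin 24) (Fin 24) ℝ) := by
  have h := congrArg (fun M => M.map (Int.castRingHom ℝ)) Hm_sq
  simp only [Matrix.map_mul] at h
  refine h.trans ?_
  ext i j
  simp only [Hr, Matrix.map_apply, Matrix.sub_apply, Matrix.smul_apply, Matrix.one_apply]
  split_ifs <;> simp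

lemma Hr_orth : Hrᵀ * Hr = (8 : ℝ) • (1 : Matrix (Fin 24) (Fin 24) ℝ) := by
  have h := congrArg (fun M => M.map (Int.castRingHom ℝ)) Hm_orth
  simp only [Matrix.map_mul] at h
  refine h.trans ?_
  ext i j
  simp only [Matrix.map_apply, Matrix.smul_apply, Matrix.one_apply]
  split_ifs <;> simp

/-- coordinates -/
def crd (g : Fin 24 → V) (v : V) : Fin 24 → ℝ := fun j => ⟪v, g j⟫

lemma phi_eq (v : V) : phi g v = fvec g ((1 / 2 : ℝ) • (Hr *ᵥ crd g v)) := rfl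

lemma crd_fvec (hf : FrameL Λ g) (x : Fin 24 → ℝ) : crd g (fvec g x) = x := by
  funext i; exact hf.inner_fvec_f x i

lemma phi_sq (hf : FrameL Λ g) (hdim : finrank ℝ V = 24) (v : V) :
    phi g (phi g v) = phi g v - (2 : ℝ) • v := by
  have hv : v = fvec g (crd g v) := hf.expand hdim v
  have h1 : phi g v - (2 : ℝ) • v = phi g v + (-2 : ℝ) • v := by rw [neg_smul, sub_eq_add_neg]
  rw [h1]
  conv_rhs => rw [phi_eq, hv, ← fvec_smul, ← fvec_add, ← hv]
  rw [phi_eq (phi g v), phi_eq v, crd_fvec hf, Matrix.mulVec_smul, Matrix.mulVec_mulVec, Hr_sq,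
    Matrix.sub_mulVec, Matrix.smul_mulVec, Matrix.smul_mulVec, Matrix.one_mulVec]
  congr 1
  funext i
  simp only [Pi.smul_apply, Pi.sub_apply, Pi.add_apply, smul_eq_mul]
  ring

lemma phi_inner (hf : FrameL Λ g) (hdim : finrank ℝ V = 24) (v w : V) :
    ⟪phi g v, phi g w⟫ = 2 * ⟪v, w⟫ := by
  have hv : v = fvec g (crd g v) := hf.expand hdim v
  have hw : w = fvec g (crd g w) := hf.expand hdim w
  have e1 : ⟪v, w⟫ = (crd g v ⬝ᵥ crd g w) / 8 := by
    conv_lhs => rw [hv, hw]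
    exact hf.inner_fvec _ _
  have e2 : ⟪phi g v, phi g w⟫ =
      (((1 / 2 : ℝ) • (Hr *ᵥ crd g v)) ⬝ᵥ ((1 / 2 : ℝ) • (Hr *ᵥ crd g w))) / 8 := by
    rw [phi_eq, phi_eq]
    exact hf.inner_fvec _ _
  have e3 : (Hr *ᵥ crd g v) ⬝ᵥ (Hr *ᵥ crd g w) = 8 * (crd g v ⬝ᵥ crd g w) := by
    rw [Matrix.dotProduct_mulVec, ← Matrix.mulVec_transpose, Matrix.mulVec_mulVec, Hr_orth,
      Matrix.smul_mulVec, Matrix.one_mulVec, smul_dotProduct, smul_eq_mul]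
  rw [e2, e1, smul_dotProduct, dotProduct_smul, e3, smul_eq_mul, smul_eq_mul]
  ring

lemma phi_memL (hf : FrameL Λ g) (hΛ : LeechL Λ) (hdim : finrank ℝ V = 24)
    (hB : ∀ k, Bm k ∈ latt Λ g) {v : V} (hv : v ∈ Λ) : phi g v ∈ Λ := by
  choose x hx using fun i => hΛ.int _ hv _ (hf.mem i)
  have h1 : x ∈ latt Λ g := by
    rw [mem_latt]
    have := hf.expand hdim v
    simp only [hx] at this
    rwa [← this]
  obtain ⟨y, hy, hxy⟩ := phi_mem (hf.frm hΛ hdim) hB h1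
  rw [mem_latt] at hy
  convert hy using 1
  rw [phi_eq]
  congr 1
  funext i
  have h2 : ((∑ j, Hm i j * x j : ℤ) : ℝ) = ((2 * y i : ℤ) : ℝ) := by rw [hxy i]
  have h3 : (Hr *ᵥ crd g v) i = ((∑ j, Hm i j * x j : ℤ) : ℝ) := by
    rw [Matrix.mulVec, dotProduct]
    push_cast
    refine Finset.sum_congr rfl fun j _ => ?_
    simp only [crd, hx]
    rfl
  rw [Pi.smul_apply, h3, h2, smul_eq_mul]
  push_cast
  ring

/-- the lattice generated by a basis -/
def latB (b : Basis (Fin 24) ℝ V) : AddSubgroup V where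
  carrier := Set.range (lv b)
  zero_mem' := ⟨0, by simp [lv]⟩
  add_mem' := by
    rintro _ _ ⟨m, rfl⟩ ⟨m', rfl⟩
    exact ⟨m + m', lv_add b m m'⟩
  neg_mem' := by
    rintro _ ⟨m, rfl⟩
    exact ⟨-m, lv_neg b m⟩

lemma mem_latB {b : Basis (Fin 24) ℝ V} {v : V} : v ∈ latB b ↔ ∃ m, lv b m = v := Iff.rfl

lemma lv_single (b : Basis (Fin 24) ℝ V) (j : Fin 24) : lv b (Pi.single j 1) = b j := by
  rw [lv, Finset.sum_eq_single j]
  · simp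
  · intro i _ hi; simp [hi]
  · simp

lemma inner_lv (b : Basis (Fin 24) ℝ V) (G : Matrix (Fin 24) (Fin 24) ℤ)
    (hG : ∀ i j, ⟪b i, b j⟫ = (G i j : ℝ)) (m : Fin 24 → ℤ) (j : Fin 24) :
    ⟪lv b m, b j⟫ = ((m ᵥ* G) j : ℤ) := by
  rw [lv, sum_inner, Matrix.vecMul, dotProduct]
  push_cast
  refine Finset.sum_congr rfl fun i _ => ?_
  rw [inner_smul_left, hG]
  simp

lemma leechL_latB (b : Basis (Fin 24) ℝ V) (q : (Fin 24 → ℤ) → ℕ)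
    (hq : ∀ m, ‖lv b m‖ ^ 2 = 2 * (q m : ℝ)) (hmin : ∀ m, m ≠ 0 → 2 ≤ q m)
    (G : Matrix (Fin 24) (Fin 24) ℤ)
    (hG : ∀ i j, ⟪b i, b j⟫ = (G i j : ℝ)) (hdet : G.det = 1) : LeechL (latB b) := by
  refine ⟨?_, ?_, ?_, ?_⟩
  · rintro _ ⟨m, rfl⟩ _ ⟨m', rfl⟩
    refine ⟨∑ j, m' j * (m ᵥ* G) j, ?_⟩
    conv_lhs => rw [lv.eq_1 b m', inner_sum]
    push_cast
    refine Finset.sum_congr rfl fun j _ => ?_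
    rw [inner_smul_right, inner_lv b G hG]
  · rintro _ ⟨m, rfl⟩
    refine ⟨q m, ?_⟩
    rw [real_inner_self_eq_norm_sq, hq]; simp
  · rintro _ ⟨m, rfl⟩ h0
    rw [real_inner_self_eq_norm_sq, hq]
    have h1 : m ≠ 0 := by rintro rfl; exact h0 (by simp [lv])
    have := hmin m h1
    have : (2 : ℝ) ≤ q m := by exact_mod_cast this
    linarith
  · intro x hx
    choose n hn using fun j => hx (b j) ⟨_, lv_single b j⟩
    refine ⟨n ᵥ* G.adjugate, ?_⟩
    apply InnerProductSpace.ext_inner_right_basis b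
    intro j
    change ⟪lv b _, b j⟫ = ⟪x, b j⟫
    rw [inner_lv b G hG, Matrix.vecMul_vecMul, Matrix.adjugate_mul, hdet, one_smul,
      Matrix.vecMul_one, hn]

theorem exists_phi (hdim : finrank ℝ V = 24) (b : Basis (Fin 24) ℝ V) (q : (Fin 24 → ℤ) → ℕ)
    (hq : ∀ m, ‖lv b m‖ ^ 2 = 2 * (q m : ℝ)) (hmin : ∀ m, m ≠ 0 → 2 ≤ q m)
    (G : Matrix (Fin 24) (Fin 24) ℤ)
    (hG : ∀ i j, ⟪b i, b j⟫ = (G i j : ℝ)) (hdet : G.det = 1) :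
    ∃ φ : V →ₗ[ℝ] V, (∀ v, φ (φ v) = φ v - (2 : ℝ) • v) ∧ (∀ v w, ⟪φ v, φ w⟫ = 2 * ⟪v, w⟫) ∧
      (∀ m, ∃ m', φ (lv b m) = lv b m') ∧ ∃ m, ⟪lv b m, lv b m⟫ = 4 := by
  have hΛ := leechL_latB b q hq hmin G hG hdet
  obtain ⟨f, hf1, hf2⟩ := exists_frame b q hq hmin G hG hdet
  have hf : FrameL (latB b) (fun i => lv b (f i)) := by
    refine ⟨fun i => ⟨_, rfl⟩, hf1, fun i j => ?_⟩
    obtain ⟨k, hk⟩ := hf2 i j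
    refine ⟨k, ?_⟩
    simp only [hk]
    rw [lv_add, lv_smul, add_sub_cancel_left, smul_smul]
    norm_num
  obtain ⟨g, hg, hB⟩ := hf.exists_std hΛ hdim
  refine ⟨phi g, phi_sq hg hdim, phi_inner hg hdim, fun m => ?_, ?_⟩
  · obtain ⟨m', hm'⟩ := phi_memL hg hΛ hdim hB (v := lv b m) ⟨m, rfl⟩
    exact ⟨m', hm'.symm⟩
  · obtain ⟨m, hm⟩ := hg.dif 0 1
    refine ⟨m, ?_⟩
    rw [hm]
    have o := hg.orth
    simp only [inner_smul_left, inner_smul_right, inner_sub_left, inner_sub_right, o]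
    norm_num

end
end LeechPol

namespace LeechPol
section

lemma isLat_half [FiniteDimensional ℝ V] {Υ : Submodule ℤ V} (hlat : IsLat Υ) (ψ : V →ₗ[ℝ] V)
    (hinj : Function.Injective ψ) : IsLat (Υ.map (ψ.restrictScalars ℤ)) := by
  refine ⟨hlat.1.map _, ?_⟩
  have e : ((Υ.map (ψ.restrictScalars ℤ) : Submodule ℤ V) : Set V) = ψ '' (Υ : Set V) := by
    rw [Submodule.map_coe]; rfl
  rw [e, ← Submodule.map_span, hlat.2, Submodule.map_top, LinearMap.range_eq_top]
  exact LinearMap.injective_iff_surjective.mp hinj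

lemma isEven_half {Υ : Submodule ℤ V} (hΥ : SqrtTwoEvenUnimod Υ) (ψ : V →ₗ[ℝ] V)
    (hψ : ∀ v w, ⟪ψ v, ψ w⟫ = 2 * ⟪v, w⟫) : IsEvenLat (Υ.map (ψ.restrictScalars ℤ)) := by
  refine ⟨?_, ?_⟩
  · rintro _ ⟨x, hx, rfl⟩ _ ⟨y, hy, rfl⟩
    obtain ⟨n, hn⟩ := hΥ.2.1 x hx y hy
    exact ⟨n, (hψ x y).trans hn⟩
  · rintro _ ⟨x, hx, rfl⟩
    obtain ⟨n, hn⟩ := hΥ.1 x hx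
    exact ⟨n, (hψ x x).trans (by rw [hn])⟩

lemma isUnimod_half {Υ : Submodule ℤ V} (hΥ : SqrtTwoEvenUnimod Υ) (ψ : V →ₗ[ℝ] V)
    (hψ : ∀ v w, ⟪ψ v, ψ w⟫ = 2 * ⟪v, w⟫) (hinj : Function.Injective ψ) :
    IsUnimodularLat (Υ.map (ψ.restrictScalars ℤ)) := by
  obtain ⟨n, b, hb⟩ := hΥ.2.2
  refine ⟨n, b.map (Submodule.equivMapOfInjective (ψ.restrictScalars ℤ) hinj Υ), ?_⟩
  rw [← hb]
  congr 1
  ext i j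
  simp only [Matrix.of_apply, Basis.map_apply]
  exact hψ _ _

lemma minNorm_half {Υ : Submodule ℤ V} (ψ : V →ₗ[ℝ] V)
    (hψ : ∀ v w, ⟪ψ v, ψ w⟫ = 2 * ⟪v, w⟫)
    (hΥ4 : ∀ v ∈ Υ, v ≠ 0 → 4 ≤ 2 * ⟪v, v⟫) {x : V} (hx : x ∈ Υ) (hx2 : ⟪x, x⟫ = 2) :
    minNorm (Υ.map (ψ.restrictScalars ℤ)) = 4 := by
  refine IsLeast.csInf_eq ⟨⟨ψ x, ⟨x, hx, rfl⟩, ?_, ?_⟩, ?_⟩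
  · intro h0
    have := hψ x x
    rw [h0, hx2] at this
    simp at this
  · rw [hψ, hx2]; norm_num
  · rintro r ⟨_, ⟨y, hy, rfl⟩, hy0, rfl⟩
    have h1 : y ≠ 0 := by rintro rfl; exact hy0 (by simp)
    exact (hΥ4 y hy h1).trans_eq (hψ y y).symm

lemma inj_half {ψ : V →ₗ[ℝ] V} (hψ : ∀ v w, ⟪ψ v, ψ w⟫ = 2 * ⟪v, w⟫) :
    Function.Injective ψ := by
  rw [injective_iff_map_eq_zero]
  intro v hv
  have := hψ v v
  rw [hv, inner_zero_left] at this
  have h2 : ⟪v, v⟫ = 0 := by linarith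
  exact inner_self_eq_zero.mp h2

lemma polarization_of_phi [FiniteDimensional ℝ V] {Υ : Submodule ℤ V} (hlat : IsLat Υ)
    (hΥ : SqrtTwoEvenUnimod Υ) (hΥ4 : ∀ v ∈ Υ, v ≠ 0 → 4 ≤ 2 * ⟪v, v⟫)
    (φ : V →ₗ[ℝ] V) (hsq : ∀ v, φ (φ v) = φ v - (2 : ℝ) • v)
    (hφ : ∀ v w, ⟪φ v, φ w⟫ = 2 * ⟪v, w⟫) (hm : ∀ x ∈ Υ, φ x ∈ Υ)
    {x : V} (hx : x ∈ Υ) (hx2 : ⟪x, x⟫ = 2) :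
    ∃ M N : Submodule ℤ V, IsPolarization Υ M N ∧
      IsLat M ∧ IsEvenLat M ∧ IsUnimodularLat M ∧ minNorm M = 4 ∧
      IsLat N ∧ IsEvenLat N ∧ IsUnimodularLat N ∧ minNorm N = 4 := by
  set ψ : V →ₗ[ℝ] V := LinearMap.id - φ with hψd
  have hψa : ∀ v, ψ v = v - φ v := fun v => rfl
  have hψ : ∀ v w, ⟪ψ v, ψ w⟫ = 2 * ⟪v, w⟫ := by
    intro v w
    have h1 := hφ (φ v) w
    rw [hsq, inner_sub_left, inner_smul_left, hφ] at h1
    have h2 := hφ v w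
    simp only [conj_trivial] at h1
    rw [hψa, hψa, inner_sub_left, inner_sub_right, inner_sub_right, h2]
    linarith
  have two : ∀ v : V, (2 : ℤ) • v = (2 : ℝ) • v := by
    intro v; rw [two_smul, two_smul]
  have h1 := isEven_half hΥ φ hφ
  have h2 := isEven_half hΥ ψ hψ
  refine ⟨Υ.map (φ.restrictScalars ℤ), Υ.map (ψ.restrictScalars ℤ), ⟨?_, ?_, h1.1, h2.1, ?_, ?_⟩,
    isLat_half hlat φ (inj_half hφ), h1, isUnimod_half hΥ φ hφ (inj_half hφ),
    minNorm_half φ hφ hΥ4 hx hx2, isLat_half hlat ψ (inj_half hψ), h2,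
    isUnimod_half hΥ ψ hψ (inj_half hψ), minNorm_half ψ hψ hΥ4 hx hx2⟩
  · rintro _ ⟨y, hy, rfl⟩
    exact hm y hy
  · rintro _ ⟨y, hy, rfl⟩
    exact Υ.sub_mem hy (hm y hy)
  · apply le_antisymm
    · refine sup_le ?_ ?_
      · rintro _ ⟨y, hy, rfl⟩
        exact hm y hy
      · rintro _ ⟨y, hy, rfl⟩
        exact Υ.sub_mem hy (hm y hy)
    · intro y hy
      have e : y = φ y + ψ y := by rw [hψa]; abel
      rw [e]
      exact Submodule.add_mem_sup ⟨y, hy, rfl⟩ ⟨y, hy, rfl⟩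
  · ext y
    rw [Submodule.mem_inf, Submodule.mem_smul_pointwise_iff_exists]
    constructor
    · rintro ⟨⟨a, ha, hay⟩, ⟨c, hc, hcy⟩⟩
      have hay' : φ a = y := hay
      have hcy' : c - φ c = y := hcy
      refine ⟨a + c, Υ.add_mem ha hc, ?_⟩
      have e1 := hsq a
      have e2 := hsq c
      have e3 : φ y = φ c - φ (φ c) := by rw [← hcy', map_sub]
      rw [hay'] at e1
      rw [two, smul_add]
      rw [e2] at e3
      have e4 : (2 : ℝ) • a = y - φ y := by rw [e1]; abel
      have e5 : (2 : ℝ) • c = φ y := by rw [e3]; abel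
      rw [e4, e5]; abel
    · rintro ⟨a, ha, rfl⟩
      refine ⟨⟨a - φ a, Υ.sub_mem ha (hm a ha), ?_⟩, ⟨φ a, hm a ha, ?_⟩⟩
      · change φ (a - φ a) = _
        rw [map_sub, hsq, two]; abel
      · change φ a - φ (φ a) = _
        rw [hsq, two]; abel

lemma linIndep_of_gram {n : ℕ} (c : Fin n → V)
    (h : (Matrix.of fun i j : Fin n => ⟪c i, c j⟫).det = 1) : LinearIndependent ℝ c := by
  rw [Fintype.linearIndependent_iff]
  intro a ha
  have h1 : (Matrix.of fun i j : Fin n => ⟪c i, c j⟫).mulVec a = 0 := by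
    funext i
    have : ⟪c i, ∑ j, a j • c j⟫ = 0 := by rw [ha, inner_zero_right]
    rw [inner_sum] at this
    rw [Matrix.mulVec, dotProduct, Pi.zero_apply, ← this]
    refine Finset.sum_congr rfl fun j _ => ?_
    rw [inner_smul_right, Matrix.of_apply, mul_comm]
  have h2 := Matrix.eq_zero_of_mulVec_eq_zero (by rw [h]; exact one_ne_zero) h1
  intro i
  rw [h2]; rfl

end
end LeechPol

/-- a Leech-rescaled lattice `Υ` admits a polarization by two copies of the
Leech lattice. -/
theorem statement17 [FiniteDimensional ℝ V] (hdim : finrank ℝ V = 24)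
    (Υ : Submodule ℤ V) (hΥlat : IsLat Υ) (hΥ : SqrtTwoEvenUnimod Υ)
    (hΥ4 : ∀ v ∈ Υ, v ≠ 0 → 4 ≤ 2 * ⟪v, v⟫) :
    ∃ M N : Submodule ℤ V, IsPolarization Υ M N ∧
      IsLat M ∧ IsEvenLat M ∧ IsUnimodularLat M ∧ minNorm M = 4 ∧
      IsLat N ∧ IsEvenLat N ∧ IsUnimodularLat N ∧ minNorm N = 4 := by
  obtain ⟨n, b0, hdet0⟩ := hΥ.2.2
  have hs : (√2 : ℝ) * √2 = 2 := Real.mul_self_sqrt (by norm_num)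
  have hs0 : (√2 : ℝ) ≠ 0 := by positivity
  let c : Fin n → V := fun i => (√2 : ℝ) • (b0 i : V)
  have hin : ∀ v w : V, ⟪(√2 : ℝ) • v, (√2 : ℝ) • w⟫ = 2 * ⟪v, w⟫ := by
    intro v w
    rw [inner_smul_left, inner_smul_right, conj_trivial, ← mul_assoc, hs]
  have hgram : (Matrix.of fun i j : Fin n => ⟪c i, c j⟫).det = 1 := by
    rw [← hdet0]
    congr 1
    ext i j
    exact hin _ _
  have hli := LeechPol.linIndep_of_gram c hgram
  have hrepr : ∀ x ∈ Υ, ∃ m : Fin n → ℤ, x = ∑ i, m i • (b0 i : V) := by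
    intro x hx
    refine ⟨b0.repr ⟨x, hx⟩, ?_⟩
    have := congrArg (Subtype.val) (b0.sum_repr ⟨x, hx⟩)
    refine this.symm.trans ?_
    rw [Submodule.coe_sum]
    rfl
  have hcoe : ∀ m : Fin n → ℤ, ∑ i, m i • (b0 i : V) ∈ Υ := fun m =>
    Υ.sum_mem fun i _ => Υ.smul_mem _ (b0 i).2
  have hcm : ∀ m : Fin n → ℤ, ∑ i, (m i : ℝ) • c i = (√2 : ℝ) • ∑ i, m i • (b0 i : V) := by
    intro m
    rw [Finset.smul_sum]
    refine Finset.sum_congr rfl fun i _ => ?_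
    simp only [c]
    rw [smul_comm, Int.cast_smul_eq_zsmul]
  have hspan : ⊤ ≤ Submodule.span ℝ (Set.range c) := by
    rw [← hΥlat.2, Submodule.span_le]
    intro x hx
    obtain ⟨m, rfl⟩ := hrepr x hx
    have h1 : (√2 : ℝ) • ∑ i, m i • (b0 i : V) ∈ Submodule.span ℝ (Set.range c) := by
      rw [← hcm]
      exact Submodule.sum_mem _ fun i _ => Submodule.smul_mem _ _ (Submodule.subset_span ⟨i, rfl⟩)
    have h2 := Submodule.smul_mem _ (√2 : ℝ)⁻¹ h1
    rwa [smul_smul, inv_mul_cancel₀ hs0, one_smul] at h2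
  have hn : n = 24 := by
    have := Module.finrank_eq_card_basis (Basis.mk hli hspan)
    rw [hdim, Fintype.card_fin] at this
    exact this.symm
  subst hn
  set b : Basis (Fin 24) ℝ V := Basis.mk hli hspan with hbd
  have hbc : ∀ i, b i = c i := fun i => by rw [hbd, Basis.mk_apply]
  have hlv : ∀ m : Fin 24 → ℤ, LeechPol.lv b m = (√2 : ℝ) • ∑ i, m i • (b0 i : V) := by
    intro m
    rw [← hcm, LeechPol.lv]
    simp only [hbc]
  choose q0 hq0 using fun m : Fin 24 → ℤ => hΥ.1 _ (hcoe m)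
  have hq1 : ∀ m, 0 ≤ q0 m := by
    intro m
    have h1 : (0 : ℝ) ≤ q0 m := by rw [← hq0]; exact real_inner_self_nonneg
    exact_mod_cast h1
  have hq2 : ∀ m, (((q0 m).toNat : ℕ) : ℝ) = (q0 m : ℝ) := by
    intro m
    exact_mod_cast Int.toNat_of_nonneg (hq1 m)
  choose G hG using fun i j : Fin 24 => hΥ.2.1 _ (b0 i).2 _ (b0 j).2
  have hGb : ∀ i j, ⟪b i, b j⟫ = ((Matrix.of G) i j : ℝ) := by
    intro i j
    rw [hbc, hbc, Matrix.of_apply, ← hG]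
    exact hin _ _
  have hGdet : (Matrix.of G).det = 1 := by
    have h1 : ((Int.castRingHom ℝ).mapMatrix (Matrix.of G)).det = 1 := by
      rw [← hgram]
      congr 1
      ext i j
      rw [Matrix.of_apply, ← hbc, ← hbc, hGb]
      rfl
    rw [← RingHom.map_det] at h1
    rw [eq_intCast] at h1
    exact_mod_cast h1
  obtain ⟨φ, hsq, hφ, hm, m0, hm0⟩ := LeechPol.exists_phi hdim b (fun m => (q0 m).toNat)
    (fun m => by
      rw [← real_inner_self_eq_norm_sq, hlv, hin, hq0, hq2])
    (fun m hm => by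
      have h0 : ∑ i, m i • (b0 i : V) ≠ 0 := by
        intro h0
        apply hm
        apply LeechPol.lv_injective b
        rw [hlv, h0]
        simp [LeechPol.lv]
      have h1 := hΥ4 _ (hcoe m) h0
      rw [hq0] at h1
      have h2 : (4 : ℤ) ≤ 2 * q0 m := by exact_mod_cast h1
      omega)
    (Matrix.of G) hGb hGdet
  refine LeechPol.polarization_of_phi hΥlat hΥ hΥ4 φ hsq hφ ?_ (hcoe m0) ?_
  · intro x hx
    obtain ⟨m, rfl⟩ := hrepr x hx
    obtain ⟨m', hm'⟩ := hm m
    rw [hlv, hlv, map_smul] at hm'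
    have := smul_right_injective V hs0 hm'
    rw [this]
    exact hcoe m'
  · rw [hlv, hin] at hm0
    linarith
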